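/- arXiv:1404.1153 — 3 statements merged into one kernel-verified Lean document; each statement's English description precedes it below -/
import Mathlib

section
/- A random labeled tree is balanced: if t_n denotes the number of labeled trees on the vertex set {1, ..., n}, and b'_n denotes the number of balanced labeled trees on the vertex set {1, ..., n}, then lim_{n→∞} b'_n / t_n = 1. -/
/-!
The number of edges inside color `i` can be read off from degrees: the sum of the degrees of the
vertices of color `i` is twice the number of these edges plus the number of bichromatic edges. Hence
being balanced depends only on the degree sequence, and means that the vertices can be split into two
classes of almost equal size and almost equal degree sum (`sum_sign_mul_dg`, `isBalanced_of_dg`). A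
pairing argument splits any sequence with an error of at most its maximum (`exists_split`), and an
error of size `K` is repaired with `K` leaves and `K` vertices of degree two. A tree always has as
many leaves as its maximal degree, so it is balanced as soon as it has as many vertices of
degree two as the maximal degree minus one (`exists_balanced_split`).

Degree sequences of trees on `n` vertices are those of Prüfer codes: trees correspond to words
of length `m = n - 2` over `n` letters, the degree of `v` being one plus the number of
occurrences of `v` (`exists_equiv`). This follows from the common recursion for the number of
trees, or words, with a prescribed degree sequence, obtained by deleting a leaf, or a first letter
(`card_trees_dg`).

In a random word, the number of letters occurring exactly once divided by `m` has mean tending to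
`e⁻¹` and second moment tending to at most `e⁻²`, so it concentrates near `e⁻¹`; and the expected sum of
the squares of the letter counts is `O(m)`, so that with high probability no letter occurs
more than `(e⁻¹ / 2) m` times. Both facts together (`card_bad_le`, `tendsto_bound`) show that
the criterion above holds for almost all words.
-/

open SimpleGraph

/-- A finite simple graph is *balanced* if there is a 2-coloring of the vertices such that
the numbers of vertices of the two colors differ by at most 1 and the numbers of
monochromatic edges of the two colors differ by at most 1. -/
def IsBalanced {V : Type*} (G : SimpleGraph V) : Prop :=
  ∃ c : V → Fin 2,
    |(({v | c v = 0} : Set V).ncard : ℤ) - (({v | c v = 1} : Set V).ncard : ℤ)| ≤ 1 ∧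
    |(({e ∈ G.edgeSet | ∀ v ∈ e, c v = 0} : Set (Sym2 V)).ncard : ℤ) -
      (({e ∈ G.edgeSet | ∀ v ∈ e, c v = 1} : Set (Sym2 V)).ncard : ℤ)| ≤ 1

/-! ### Degrees and attaching a leaf -/

/-- The degree of a vertex, as a cardinality of a set, so that no decidability or finiteness
instance is involved. -/
noncomputable def dg {V : Type} (G : SimpleGraph V) (v : V) : ℕ := (G.neighborSet v).ncard

lemma dg_eq_degree {V : Type} [Fintype V] (G : SimpleGraph V) (v : V) [Fintype (G.neighborSet v)] :
    dg G v = G.degree v := by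
  rw [dg, Set.ncard_eq_toFinset_card', ← SimpleGraph.card_neighborFinset_eq_degree]
  rfl

lemma sum_dg {V : Type} [Fintype V] (G : SimpleGraph V) :
    ∑ v, dg G v = 2 * Nat.card G.edgeSet := by
  classical
  simp_rw [dg_eq_degree]
  rw [SimpleGraph.sum_degrees_eq_twice_card_edges]
  simp [SimpleGraph.edgeFinset]

lemma isTree_iff_sum_dg {V : Type} [Fintype V] (G : SimpleGraph V) :
    G.IsTree ↔ G.Connected ∧ ∑ v, dg G v + 2 = 2 * Fintype.card V := by
  rw [isTree_iff_connected_and_card, sum_dg, Nat.card_eq_fintype_card (α := V)]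
  constructor <;> rintro ⟨h, h'⟩ <;> exact ⟨h, by omega⟩

/-- The graph obtained from a graph on `V \ {v}` by attaching `v` as a leaf to `u`. -/
def attach {V : Type} (v : V) (u : {w : V // w ≠ v}) (G : SimpleGraph {w : V // w ≠ v}) :
    SimpleGraph V where
  Adj a b := (∃ (ha : a ≠ v) (hb : b ≠ v), G.Adj ⟨a, ha⟩ ⟨b, hb⟩) ∨ (a = v ∧ b = u) ∨
    (a = u ∧ b = v)
  symm := ⟨by
    rintro a b (⟨ha, hb, h⟩ | h | h)
    · exact .inl ⟨hb, ha, h.symm⟩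
    · exact .inr (.inr h.symm)
    · exact .inr (.inl h.symm)⟩
  loopless := ⟨by
    rintro a (⟨ha, hb, h⟩ | h | h)
    · exact G.loopless.irrefl _ h
    · exact u.2 (h.2.symm.trans h.1)
    · exact u.2 (h.1.symm.trans h.2)⟩

section
variable {V : Type} {v : V} {u : {w : V // w ≠ v}} {G : SimpleGraph {w : V // w ≠ v}}

lemma attach_adj_coe (a b : {w : V // w ≠ v}) : (attach v u G).Adj a b ↔ G.Adj a b := by
  simp [attach, a.2, b.2]

lemma attach_neighborSet_self : (attach v u G).neighborSet v = {(u : V)} := by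
  ext b
  have := u.2
  simp [attach, this.symm]

lemma dg_attach_self : dg (attach v u G) v = 1 := by
  rw [dg, attach_neighborSet_self, Set.ncard_singleton]

lemma dg_attach_coe [Finite V] [DecidableEq V] (w : {w : V // w ≠ v}) :
    dg (attach v u G) w = dg G w + if w = u then 1 else 0 := by
  split_ifs with h
  · subst h
    have : (attach v w G).neighborSet w = insert v (Subtype.val '' G.neighborSet w) := by
      ext b
      by_cases hb : b = v
      · subst hb; simp [attach]
      · simp [attach, hb, w.2]
    rw [dg, this, Set.ncard_insert_of_notMem, Set.ncard_image_of_injective _ Subtype.val_injective]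
    · rfl
    · simp
  · have : (attach v u G).neighborSet w = (Subtype.val '' G.neighborSet w) := by
      ext b
      by_cases hb : b = v
      · have h' := Subtype.ext_iff.not.1 h
        have h'' := w.2
        subst hb; simp [attach, h', h'']
      · simp [attach, hb, w.2]
    rw [dg, this, Set.ncard_image_of_injective _ Subtype.val_injective]
    rfl

lemma sum_split [Fintype V] [DecidableEq V] (v : V) (f : V → ℕ) :
    ∑ w, f w = f v + ∑ w : {w : V // w ≠ v}, f w := by
  rw [← Finset.add_sum_erase _ _ (Finset.mem_univ v)]
  congr 1
  exact (Finset.sum_subtype _ (by simp) _)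

lemma attach_isTree [Fintype V] [DecidableEq V] (h : G.IsTree) : (attach v u G).IsTree := by
  have h1 := (isTree_iff_sum_dg G).1 h
  rw [isTree_iff_sum_dg]
  constructor
  · rw [connected_iff_exists_forall_reachable]
    refine ⟨u, fun w => ?_⟩
    by_cases hw : w = v
    · subst hw
      exact Adj.reachable (by simp [attach])
    · let f : G →g attach v u G := ⟨Subtype.val, fun {a b} h => (attach_adj_coe a b).2 h⟩
      exact (h1.1.preconnected u ⟨w, hw⟩).map f
  · rw [sum_split v, dg_attach_self]
    simp_rw [dg_attach_coe]
    rw [Finset.sum_add_distrib]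
    have : Fintype.card {w : V // w ≠ v} + 1 = Fintype.card V := by
      have := sum_split v (fun _ => 1)
      simp only [Finset.sum_const, Finset.card_univ, smul_eq_mul, mul_one] at this
      omega
    have h2 := h1.2
    have h3 : ∑ w : {w : V // w ≠ v}, (if w = u then 1 else 0) = 1 := by simp
    omega

lemma attach_comap (u : {w : V // w ≠ v}) (H : SimpleGraph V) (hu : H.neighborSet v = {(u : V)}) :
    attach v u (H.comap Subtype.val) = H := by
  have hb (b) : H.Adj v b ↔ b = u := by
    rw [← mem_neighborSet, hu]; rfl
  ext a b
  have := u.2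
  by_cases ha : a = v
  · subst ha
    simp [attach, hb, this.symm]
  · by_cases hb' : b = v
    · subst hb'
      simp [attach, ha, H.adj_comm a b, hb]
    · simp [attach, ha, hb']

lemma comap_attach : (attach v u G).comap Subtype.val = G := by
  ext a b
  exact attach_adj_coe a b

end

/-- If the prescribed degree of `v` is one, then a tree with degrees `d` is a vertex `u ≠ v`, the
neighbor of the leaf `v`, together with a tree on the other vertices in which the degree of `u` is
lowered by one. The condition on degrees is written without subtraction. -/
noncomputable def leafEquiv {V : Type} [Fintype V] [DecidableEq V] (v : V) (d : V → ℕ) (hv : d v = 1) :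
    {G : SimpleGraph V // G.IsTree ∧ ∀ w, dg G w = d w} ≃
    Σ u : {w : V // w ≠ v}, {G : SimpleGraph {w : V // w ≠ v} // G.IsTree ∧
      ∀ w, dg G w + (if w = u then 1 else 0) = d w} := by
  have key (x : Σ u : {w : V // w ≠ v}, {G : SimpleGraph {w : V // w ≠ v} // G.IsTree ∧
      ∀ w, dg G w + (if w = u then 1 else 0) = d w}) (w : V) :
      dg (attach v x.1 x.2.1) w = d w := by
    by_cases hw : w = v
    · subst hw; rw [dg_attach_self, hv]
    · rw [← x.2.2.2 ⟨w, hw⟩, ← dg_attach_coe]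
  refine (Equiv.ofBijective (fun x => ⟨attach v x.1 x.2.1, attach_isTree x.2.2.1, key x⟩)
    ⟨?_, ?_⟩).symm
  · rintro ⟨u, G, hG⟩ ⟨u', G', hG'⟩ h
    simp only [Subtype.mk.injEq] at h
    have hu : u = u' := by
      have := attach_neighborSet_self (v := v) (u := u) (G := G)
      rw [h, attach_neighborSet_self] at this
      exact (Subtype.ext (Set.singleton_injective this)).symm
    subst hu
    have : G = G' := by rw [← comap_attach (u := u) (G := G), h, comap_attach]
    subst this
    rfl
  · rintro ⟨H, hH, hd⟩
    have h1 : dg H v = 1 := by rw [hd, hv]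
    obtain ⟨u, hu⟩ := Set.ncard_eq_one.1 h1
    have huv : u ≠ v := by
      rintro rfl
      have : u ∈ H.neighborSet u := by rw [hu]; rfl
      exact H.loopless.irrefl _ this
    have h2 := attach_comap ⟨u, huv⟩ H hu
    refine ⟨⟨⟨u, huv⟩, H.comap Subtype.val, ?_, fun w => ?_⟩, ?_⟩
    · classical
      rw [dg_eq_degree] at h1
      have := hH.1.induce_compl_singleton_of_degree_eq_one h1
      exact ⟨this, hH.2.comap ⟨Subtype.val, id⟩ Subtype.val_injective⟩
    · rw [← dg_attach_coe, h2, hd]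
    · simp only [h2]

/-! ### Words and the correspondence with trees -/

/-- The number of occurrences of the letter `w` in the word `f`. -/
def cnt {V : Type} [DecidableEq V] {m : ℕ} (f : Fin m → V) (w : V) : ℕ :=
  Finset.card {a | f a = w}

lemma sum_cnt {V : Type} [Fintype V] [DecidableEq V] {m : ℕ} (f : Fin m → V) :
    ∑ w, cnt f w = m := by
  have := Finset.card_eq_sum_card_fiberwise (f := f) (s := Finset.univ) (t := Finset.univ) (by simp)
  simpa [cnt] using this.symm

lemma cnt_cons {V : Type} [DecidableEq V] {m : ℕ} (x : V) (f : Fin m → V) (w : V) :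
    cnt (Fin.cons x f : Fin (m + 1) → V) w = cnt f w + if w = x then 1 else 0 := by
  rw [cnt, Fin.card_filter_univ_succ']
  simp [cnt, add_comm, eq_comm]

lemma cnt_eq_zero {V : Type} [DecidableEq V] {m : ℕ} {f : Fin m → V} {w : V} (h : cnt f w = 0)
    (a : Fin m) : f a ≠ w := by
  have := Finset.card_eq_zero.1 h
  exact Finset.filter_eq_empty_iff.1 this (Finset.mem_univ a)

lemma cnt_coe {V : Type} [DecidableEq V] {m : ℕ} {v : V} (f : Fin m → {w : V // w ≠ v})
    (w : {w : V // w ≠ v}) : cnt (fun a => (f a : V)) w = cnt f w := by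
  simp [cnt, Subtype.ext_iff]

lemma cnt_coe_self {V : Type} [DecidableEq V] {m : ℕ} {v : V} (f : Fin m → {w : V // w ≠ v}) :
    cnt (fun a => (f a : V)) v = 0 := by
  simp [cnt, (f _).2]

lemma cons_coe {V : Type} {m : ℕ} {v : V} (u : {w : V // w ≠ v}) (f : Fin m → {w : V // w ≠ v}) :
    (fun a => ((Fin.cons u f : Fin (m + 1) → {w : V // w ≠ v}) a : V)) =
      (Fin.cons (u : V) (fun a => (f a : V)) : Fin (m + 1) → V) := by
  ext a
  refine Fin.cases ?_ (fun i => ?_) a <;> simp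

/-- The word counterpart of `leafEquiv`: here `d v = 1` says that the letter `v` does not occur, and
such a word is given by its first letter `u ≠ v` and by its tail, a word without `v`. -/
noncomputable def wordEquiv {V : Type} [Fintype V] [DecidableEq V] (m : ℕ) (v : V) (d : V → ℕ)
    (hv : d v = 1) :
    {f : Fin (m + 1) → V // ∀ w, cnt f w + 1 = d w} ≃
    Σ u : {w : V // w ≠ v}, {f : Fin m → {w : V // w ≠ v} //
      ∀ w, cnt f w + 1 + (if w = u then 1 else 0) = d w} := by
  have key (x : Σ u : {w : V // w ≠ v}, {f : Fin m → {w : V // w ≠ v} //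
      ∀ w, cnt f w + 1 + (if w = u then 1 else 0) = d w}) (w : V) :
      cnt (fun a => ((Fin.cons x.1 x.2.1 : Fin (m + 1) → {w : V // w ≠ v}) a : V)) w + 1 = d w := by
    by_cases hw : w = v
    · subst hw; rw [cnt_coe_self, hv]
    · have := x.2.2 ⟨w, hw⟩
      have h2 := cnt_coe (Fin.cons x.1 x.2.1 : Fin (m + 1) → {w : V // w ≠ v}) ⟨w, hw⟩
      rw [cnt_cons] at h2
      simp only at h2 this
      omega
  refine (Equiv.ofBijective (fun x => ⟨_, key x⟩) ⟨?_, ?_⟩).symm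
  · rintro ⟨u, f, hf⟩ ⟨u', f', hf'⟩ h
    simp only [Subtype.mk.injEq] at h
    have h' : (Fin.cons u f : Fin (m + 1) → {w : V // w ≠ v}) = Fin.cons u' f' := by
      ext a
      exact congrFun h a
    obtain ⟨rfl, rfl⟩ := Fin.cons_inj.1 h'
    rfl
  · rintro ⟨g, hg⟩
    have h0 : cnt g v = 0 := by have := hg v; omega
    have hne := cnt_eq_zero h0
    have hgg : (fun a => ((Fin.cons ⟨g 0, hne 0⟩ (fun i => ⟨g i.succ, hne _⟩) :
        Fin (m + 1) → {w : V // w ≠ v}) a : V)) = g := by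
      ext a
      refine Fin.cases ?_ (fun i => ?_) a <;> simp
    refine ⟨⟨⟨g 0, hne 0⟩, (fun i => ⟨g i.succ, hne _⟩), fun w => ?_⟩, ?_⟩
    · have h1 := hg w
      rw [← hgg, cnt_coe, cnt_cons] at h1
      omega
    · simp only [hgg]

lemma dg_pos {V : Type} [Finite V] [Nontrivial V] {G : SimpleGraph V} (h : G.Connected) (v : V) :
    0 < dg G v := by
  have := Fintype.ofFinite V
  classical
  rw [dg_eq_degree]
  exact h.preconnected.degree_pos_of_nontrivial v

lemma isTree_iff_of_card_two {V : Type} [Fintype V] (hV : Fintype.card V = 2)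
    (G : SimpleGraph V) : G.IsTree ↔ G = ⊤ := by
  classical
  have : Nontrivial V := Fintype.one_lt_card_iff_nontrivial.1 (by omega)
  constructor
  · intro h
    rw [eq_top_iff]
    intro a b hab
    have h1 := dg_pos h.1 a
    obtain ⟨c, hc⟩ := (Set.ncard_pos).1 h1
    have hac : a ≠ c := G.ne_of_adj hc
    have hbc : b = c := by
      by_contra hbc
      have := Finset.card_le_univ {a, b, c}
      rw [Finset.card_eq_three.2 ⟨a, b, c, hab, hac, hbc, rfl⟩] at this
      omega
    rw [hbc]
    exact hc
  · rintro rfl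
    rw [isTree_iff_sum_dg]
    refine ⟨connected_top, ?_⟩
    simp_rw [dg_eq_degree, complete_graph_degree]
    simp [hV]

/-- Trees with prescribed degrees are as many as words with prescribed letter counts: removing a
vertex `v` with `d v = 1` shows that both numbers satisfy the same recursion. If no such
`v` exists, both are zero. -/
theorem card_trees_dg (m : ℕ) : ∀ (V : Type) [Fintype V] [DecidableEq V] (d : V → ℕ),
    Fintype.card V = m + 2 →
    Nat.card {G : SimpleGraph V // G.IsTree ∧ ∀ w, dg G w = d w} =
      Nat.card {f : Fin m → V // ∀ w, cnt f w + 1 = d w} := by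
  induction m with
  | zero =>
    intro V _ _ d hV
    have hdg (w : V) : dg (⊤ : SimpleGraph V) w = 1 := by
      rw [dg_eq_degree, complete_graph_degree]
      omega
    refine Nat.card_congr ⟨fun G => ⟨Fin.elim0, fun w => ?_⟩, fun f => ⟨⊤, ?_, fun w => ?_⟩,
      fun G => ?_, fun f => ?_⟩
    · rw [← G.2.2 w, (isTree_iff_of_card_two hV _).1 G.2.1, hdg]
      simp [cnt]
    · exact (isTree_iff_of_card_two hV _).2 rfl
    · rw [← f.2 w, hdg]
      simp [cnt]
    · exact Subtype.ext ((isTree_iff_of_card_two hV _).1 G.2.1).symm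
    · exact Subtype.ext (Subsingleton.elim _ _)
  | succ m ih =>
    intro V _ _ d hV
    have hnt : Nontrivial V := Fintype.one_lt_card_iff_nontrivial.1 (by omega)
    by_cases hd : ∃ v, d v = 1
    · obtain ⟨v, hv⟩ := hd
      have hV' : Fintype.card {w : V // w ≠ v} = m + 2 := by
        have := sum_split v (fun _ => 1)
        simp only [Finset.sum_const, Finset.card_univ, smul_eq_mul, mul_one] at this
        omega
      have hnt : Nontrivial {w : V // w ≠ v} := Fintype.one_lt_card_iff_nontrivial.1 (by omega)
      rw [Nat.card_congr (leafEquiv v d hv), Nat.card_congr (wordEquiv m v d hv),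
        Nat.card_sigma, Nat.card_sigma]
      refine Finset.sum_congr rfl fun u _ => ?_
      have := ih _ (fun w : {w : V // w ≠ v} => d w - if w = u then 1 else 0) hV'
      have e1 : {G : SimpleGraph {w : V // w ≠ v} // G.IsTree ∧
          ∀ w, dg G w + (if w = u then 1 else 0) = d w} ≃ _ :=
        Equiv.subtypeEquivRight fun G => and_congr_right fun hG => forall_congr' fun w => by
          show _ ↔ dg G w = d w - if w = u then 1 else 0
          have := dg_pos hG.1 w
          split_ifs <;> omega
      have e2 : {f : Fin m → {w : V // w ≠ v} //
          ∀ w, cnt f w + 1 + (if w = u then 1 else 0) = d w} ≃ _ :=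
        Equiv.subtypeEquivRight fun f => forall_congr' fun w => by
          show _ ↔ cnt f w + 1 = d w - if w = u then 1 else 0
          split_ifs <;> omega
      rw [Nat.card_congr e1, Nat.card_congr e2, this]
    · push Not at hd
      have h1 : IsEmpty {G : SimpleGraph V // G.IsTree ∧ ∀ w, dg G w = d w} := by
        refine ⟨fun ⟨G, hG, h⟩ => ?_⟩
        classical
        obtain ⟨v, hv⟩ := hG.exists_vert_degree_one_of_nontrivial
        rw [← dg_eq_degree, h] at hv
        exact hd v hv
      have h2 : IsEmpty {f : Fin (m + 1) → V // ∀ w, cnt f w + 1 = d w} := by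
        refine ⟨fun ⟨f, hf⟩ => ?_⟩
        have h3 := sum_cnt f
        have h4 : ∑ w : V, 1 ≤ ∑ w, cnt f w := Finset.sum_le_sum fun w _ => by
          have := hf w
          have := hd w
          omega
        simp at h4
        omega
      rw [Nat.card_of_isEmpty, Nat.card_of_isEmpty]

/-- A Prüfer-type correspondence: labeled trees correspond to words in such a way that the degree of
a vertex is one more than its number of occurrences. It is assembled from the equalities of
cardinalities in `card_trees_dg`, one degree sequence at a time. -/
theorem exists_equiv (m : ℕ) (V : Type) [Fintype V] [DecidableEq V]
    (hV : Fintype.card V = m + 2) :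
    ∃ e : {G : SimpleGraph V // G.IsTree} ≃ (Fin m → V), ∀ G w, dg G.1 w = cnt (e G) w + 1 := by
  have h (d : V → ℕ) : Nonempty ({G : {G : SimpleGraph V // G.IsTree} // dg G.1 = d} ≃
      {f : Fin m → V // (fun w => cnt f w + 1) = d}) := by
    have h1 := card_trees_dg m V d hV
    have e1 : {G : {G : SimpleGraph V // G.IsTree} // dg G.1 = d} ≃
        {G : SimpleGraph V // G.IsTree ∧ ∀ w, dg G w = d w} :=
      (Equiv.subtypeSubtypeEquivSubtypeInter _ (fun G => dg G = d)).trans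
        (Equiv.subtypeEquivRight fun G => by rw [funext_iff])
    have e2 : {f : Fin m → V // (fun w => cnt f w + 1) = d} ≃
        {f : Fin m → V // ∀ w, cnt f w + 1 = d w} :=
      Equiv.subtypeEquivRight fun G => by rw [funext_iff]
    exact ⟨e1.trans ((Finite.card_eq.1 h1).some.trans e2.symm)⟩
  let e := ((Equiv.sigmaFiberEquiv fun G : {G : SimpleGraph V // G.IsTree} => dg G.1).symm.trans
    (Equiv.sigmaCongrRight fun d => (h d).some)).trans
      (Equiv.sigmaFiberEquiv fun f : Fin m → V => fun w => cnt f w + 1)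
  refine ⟨e, fun G w => ?_⟩
  have : (fun w => cnt (e G) w + 1) = dg G.1 := ((h (dg G.1)).some ⟨G, rfl⟩).2
  exact (congrFun this w).symm

/-! ### Degree sequences of balanced graphs -/

/-- Pairing argument: numbers in `[0, K]` can be split into two classes of almost equal size whose
sums differ by at most `K`. -/
lemma exists_split {V : Type} [DecidableEq V] (c : V → ℕ) (K : ℕ) (k : ℕ) : ∀ R : Finset V,
    R.card = k → (∀ i ∈ R, c i ≤ K) → ∃ P ⊆ R, |2 * (P.card : ℤ) - R.card| ≤ 1 ∧
      |2 * ∑ i ∈ P, (c i : ℤ) - ∑ i ∈ R, (c i : ℤ)| ≤ K := by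
  induction k using Nat.strong_induction_on with
  | _ k ih =>
  intro R hR hc
  by_cases h2 : R.card ≤ 1
  · refine ⟨∅, by simp, ?_, ?_⟩
    · rw [Finset.card_empty, abs_le]; omega
    · by_cases hne : R.Nonempty
      · obtain ⟨x, hx⟩ := hne
        have : R = {x} := (Finset.eq_singleton_iff_unique_mem).2
          ⟨hx, fun y hy => Finset.card_le_one.1 h2 y hy x hx⟩
        have := hc x hx
        simp [*]
      · simp [Finset.not_nonempty_iff_eq_empty.1 hne]
  · obtain ⟨x', hx', y', hy', hxy'⟩ := Finset.one_lt_card.1 (not_le.1 h2)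
    obtain ⟨x, hx, y, hy, hxy, hle⟩ : ∃ x ∈ R, ∃ y ∈ R, x ≠ y ∧ c y ≤ c x := by
      rcases le_total (c x') (c y') with h | h
      · exact ⟨y', hy', x', hx', hxy'.symm, h⟩
      · exact ⟨x', hx', y', hy', hxy', h⟩
    have hyx : y ∈ R.erase x := Finset.mem_erase.2 ⟨hxy.symm, hy⟩
    obtain ⟨P, hP, hP1, hP2⟩ := ih (k - 2) (by omega) ((R.erase x).erase y)
      (by rw [Finset.card_erase_of_mem hyx, Finset.card_erase_of_mem hx]; omega)
      (fun i hi => hc i (Finset.mem_of_mem_erase (Finset.mem_of_mem_erase hi)))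
    have hcard : (((R.erase x).erase y).card : ℤ) + 2 = R.card := by
      rw [Finset.card_erase_of_mem hyx, Finset.card_erase_of_mem hx]; omega
    have hsum : ∑ i ∈ R, (c i : ℤ) = c x + (c y + ∑ i ∈ (R.erase x).erase y, (c i : ℤ)) := by
      rw [Finset.add_sum_erase _ (fun i => (c i : ℤ)) hyx,
        Finset.add_sum_erase _ (fun i => (c i : ℤ)) hx]
    have hxP : x ∉ P := fun h => by simpa using hP h
    have hyP : y ∉ P := fun h => by simpa using hP h
    have hPR : P ⊆ R := fun i hi => Finset.mem_of_mem_erase (Finset.mem_of_mem_erase (hP hi))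
    have hcx := hc x hx
    rw [abs_le] at hP1 hP2
    -- The larger of the two numbers joins the class with the smaller sum.
    rcases le_total (2 * ∑ i ∈ P, (c i : ℤ) - ∑ i ∈ (R.erase x).erase y, (c i : ℤ)) 0 with h | h
    · refine ⟨insert x P, Finset.insert_subset hx hPR, ?_, ?_⟩
      · rw [Finset.card_insert_of_notMem hxP, abs_le]; push_cast; omega
      · rw [Finset.sum_insert hxP, hsum, abs_le]; omega
    · refine ⟨insert y P, Finset.insert_subset hy hPR, ?_, ?_⟩
      · rw [Finset.card_insert_of_notMem hyP, abs_le]; push_cast; omega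
      · rw [Finset.sum_insert hyP, hsum, abs_le]; omega

/-- Here `c` plays the role of the degree minus one in a tree, which is why its sum is two less than
the number of vertices. With `K` the largest value, `K` ones and `K` zeros are set aside, the rest is
split by `exists_split`, and the reserve then repairs a discrepancy of at most `K` without
changing the sizes of the classes. -/
lemma exists_balanced_split {V : Type} [Fintype V] [DecidableEq V] (c : V → ℕ)
    (hc : ∑ i, c i + 2 = Fintype.card V)
    (h1 : ∀ i, c i ≤ (Finset.univ.filter fun j => c j = 1).card) :
    ∃ P : Finset V, |2 * (P.card : ℤ) - Fintype.card V| ≤ 1 ∧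
      |2 * ∑ i ∈ P, (c i : ℤ) - ∑ i, (c i : ℤ)| ≤ 1 := by
  have hne : Nonempty V := Fintype.card_pos_iff.1 (by omega)
  obtain ⟨i₀, hi₀⟩ := Finite.exists_max c
  set K := c i₀
  -- The zeros are numerous enough because the sum is `card V - 2`.
  have h0 : K ≤ (Finset.univ.filter fun j => c j = 0).card := by
    have e1 : ∑ i, c i = K + ∑ i ∈ Finset.univ.erase i₀, c i :=
      (Finset.add_sum_erase _ _ (Finset.mem_univ i₀)).symm
    have e2 : ((Finset.univ.erase i₀).filter fun j => ¬ c j = 0).card ≤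
        ∑ i ∈ Finset.univ.erase i₀, c i := by
      rw [Finset.card_filter]
      refine Finset.sum_le_sum fun i _ => ?_
      split_ifs <;> omega
    have e3 := Finset.card_filter_add_card_filter_not (s := Finset.univ.erase i₀) (fun j => c j = 0)
    have e4 : ((Finset.univ.erase i₀).filter fun j => c j = 0).card ≤
        (Finset.univ.filter fun j => c j = 0).card :=
      Finset.card_le_card (Finset.filter_subset_filter _ (Finset.subset_univ _))
    rw [Finset.card_erase_of_mem (Finset.mem_univ _), Finset.card_univ] at e3
    omega
  obtain ⟨Z, hZ, hZc⟩ := Finset.exists_subset_card_eq h0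
  obtain ⟨O, hO, hOc⟩ := Finset.exists_subset_card_eq (h1 i₀)
  have hZ0 (i) (hi : i ∈ Z) : c i = 0 := (Finset.mem_filter.1 (hZ hi)).2
  have hO1 (i) (hi : i ∈ O) : c i = 1 := (Finset.mem_filter.1 (hO hi)).2
  have hZO : Disjoint Z O := Finset.disjoint_left.2 fun i hi hi' => by
    have := hZ0 i hi
    have := hO1 i hi'
    omega
  obtain ⟨P, hP, hP1, hP2⟩ := exists_split c K _ (Z ∪ O)ᶜ rfl (fun i _ => hi₀ i)
  have hPZ : Disjoint P (Z ∪ O) := by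
    rw [← Finset.subset_compl_iff_disjoint_right]; exact hP
  have hcard : ((Z ∪ O)ᶜ.card : ℤ) + 2 * K = Fintype.card V := by
    rw [Finset.card_compl]
    have := Finset.card_le_univ (Z ∪ O)
    rw [Finset.card_union_of_disjoint hZO, hZc, hOc] at *
    omega
  have hsum : ∑ i, (c i : ℤ) = ∑ i ∈ (Z ∪ O)ᶜ, (c i : ℤ) + K := by
    rw [← Finset.sum_compl_add_sum (Z ∪ O), Finset.sum_union hZO,
      Finset.sum_eq_zero (s := Z) (fun i hi => by simp [hZ0 i hi]),
      Finset.sum_congr (s₁ := O) rfl (fun i hi => by rw [hO1 i hi])]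
    simp [hOc, K]
  rw [abs_le] at hP1 hP2
  set S := 2 * ∑ i ∈ P, (c i : ℤ) - ∑ i ∈ (Z ∪ O)ᶜ, (c i : ℤ) with hS
  -- `j` ones and `K - j` zeros change the discrepancy `S` to `S + 2 * j - K`.
  obtain ⟨j, hj⟩ : ∃ j : ℕ, (j : ℤ) = (K - S) / 2 := ⟨((K - S) / 2).toNat, by omega⟩
  obtain ⟨Z', hZ', hZc'⟩ := Finset.exists_subset_card_eq (s := Z) (n := K - j) (by omega)
  obtain ⟨O', hO', hOc'⟩ := Finset.exists_subset_card_eq (s := O) (n := j) (by omega)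
  have d1 : Disjoint Z' O' := hZO.mono hZ' hO'
  have d2 : Disjoint P (Z' ∪ O') := hPZ.mono_right (Finset.union_subset_union hZ' hO')
  refine ⟨P ∪ (Z' ∪ O'), ?_, ?_⟩
  · rw [Finset.card_union_of_disjoint d2, Finset.card_union_of_disjoint d1, abs_le]
    omega
  · rw [Finset.sum_union d2, Finset.sum_union d1,
      Finset.sum_eq_zero (s := Z') (fun i hi => by simp [hZ0 i (hZ' hi)]),
      Finset.sum_congr (s₁ := O') rfl (fun i hi => by rw [hO1 i (hO' hi)]), abs_le]
    simp only [Finset.sum_const, hOc', hsum, nsmul_eq_mul, Nat.cast_one, mul_one]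
    omega

/-- Summing signed degrees counts every monochromatic edge twice, with the sign of its color. -/
lemma sum_sign_mul_dg {V : Type} [Fintype V] [DecidableEq V] (G : SimpleGraph V) (c : V → Fin 2) :
    ∑ v, (if c v = 0 then (1 : ℤ) else -1) * dg G v =
    2 * (({e ∈ G.edgeSet | ∀ v ∈ e, c v = 0} : Set (Sym2 V)).ncard : ℤ) -
      2 * (({e ∈ G.edgeSet | ∀ v ∈ e, c v = 1} : Set (Sym2 V)).ncard : ℤ) := by
  classical
  have h1 (k : Fin 2) : (({e ∈ G.edgeSet | ∀ v ∈ e, c v = k} : Set (Sym2 V)).ncard : ℤ) =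
      ∑ e ∈ G.edgeFinset, if ∀ v ∈ e, c v = k then 1 else 0 := by
    rw [Finset.sum_boole, Set.ncard_eq_toFinset_card']
    congr 2
    ext e
    simp
  have h2 (v : V) : (dg G v : ℤ) = ∑ e ∈ G.edgeFinset, if v ∈ e then 1 else 0 := by
    rw [Finset.sum_boole, dg_eq_degree, ← SimpleGraph.card_incidenceFinset_eq_degree]
    congr 2
    ext e
    simp [SimpleGraph.incidenceSet]
  rw [h1, h1, Finset.mul_sum, Finset.mul_sum, ← Finset.sum_sub_distrib]
  simp_rw [h2, Finset.mul_sum]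
  rw [Finset.sum_comm]
  refine Finset.sum_congr rfl fun e he => ?_
  induction e with
  | _ a b =>
  have hab : a ≠ b := G.ne_of_adj (by simpa using he)
  have : ∑ v, (if c v = 0 then (1 : ℤ) else -1) * (if v ∈ s(a, b) then 1 else 0) =
      ∑ v ∈ {a, b}, (if c v = 0 then (1 : ℤ) else -1) := by
    simp only [mul_ite, mul_one, mul_zero]
    rw [← Finset.sum_filter]
    congr 1
    ext v
    simp
  rw [this, Finset.sum_pair hab]
  simp only [Sym2.mem_iff, forall_eq_or_imp, forall_eq]
  generalize c a = x
  generalize c b = y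
  fin_cases x <;> fin_cases y <;> simp

lemma isBalanced_of_dg {V : Type} [Fintype V] [DecidableEq V] (G : SimpleGraph V) (c : V → ℕ)
    (hd : ∀ v, dg G v = c v + 1) (hc : ∑ i, c i + 2 = Fintype.card V)
    (h1 : ∀ i, c i ≤ (Finset.univ.filter fun j => c j = 1).card) : IsBalanced G := by
  obtain ⟨P, hP1, hP2⟩ := exists_balanced_split c hc h1
  refine ⟨fun v => if v ∈ P then 0 else 1, ?_, ?_⟩
  · have e0 : {v | (if v ∈ P then (0 : Fin 2) else 1) = 0} = (P : Set V) := by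
      ext v; by_cases h : v ∈ P <;> simp [h]
    have e1 : {v | (if v ∈ P then (0 : Fin 2) else 1) = 1} = ((Pᶜ : Finset V) : Set V) := by
      ext v; by_cases h : v ∈ P <;> simp [h]
    have := Finset.card_le_univ P
    rw [e0, e1, Set.ncard_coe_finset, Set.ncard_coe_finset, Finset.card_compl, abs_le] at *
    omega
  · have h := sum_sign_mul_dg G (fun v => if v ∈ P then 0 else 1)
    have h' : ∑ v, (if (if v ∈ P then (0 : Fin 2) else 1) = 0 then (1 : ℤ) else -1) * dg G v =
        (2 * ∑ i ∈ P, (c i : ℤ) - ∑ i, (c i : ℤ)) + (2 * P.card - Fintype.card V) := by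
      have e (v : V) : (if (if v ∈ P then (0 : Fin 2) else 1) = 0 then (1 : ℤ) else -1) * dg G v =
          2 * (if v ∈ P then (c v : ℤ) else 0) - c v + (2 * (if v ∈ P then 1 else 0) - 1) := by
        rw [hd]
        by_cases h : v ∈ P <;> simp [h] <;> ring
      simp_rw [e, Finset.sum_add_distrib, Finset.sum_sub_distrib, ← Finset.mul_sum]
      simp
    rw [h'] at h
    beta_reduce at h ⊢
    rw [abs_le] at *
    omega

/-! ### Counting words -/

/-- The words with prescribed letters on `D` and with all other letters in `S`. -/
lemma card_words {V : Type} [DecidableEq V] {m : ℕ} (D : Finset (Fin m)) (g : Fin m → V)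
    (S : Finset V) :
    (Fintype.piFinset fun a => if a ∈ D then {g a} else S).card = S.card ^ (m - D.card) := by
  rw [Fintype.card_piFinset]
  simp_rw [apply_ite Finset.card]
  rw [Finset.prod_ite]
  simp only [Finset.card_singleton, Finset.prod_const_one, one_mul, Finset.prod_const]
  congr 1
  have : (Finset.univ.filter fun a => a ∉ D) = Dᶜ := by ext; simp
  rw [this, Finset.card_compl, Fintype.card_fin]

lemma mem_words {V : Type} [DecidableEq V] {m : ℕ} {D : Finset (Fin m)} {g : Fin m → V}
    {S : Finset V} {f : Fin m → V} :
    f ∈ (Fintype.piFinset fun a => if a ∈ D then {g a} else S) ↔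
      ∀ a, (a ∈ D → f a = g a) ∧ (a ∉ D → f a ∈ S) := by
  rw [Fintype.mem_piFinset]
  refine forall_congr' fun a => ?_
  by_cases h : a ∈ D <;> simp [h]

lemma cnt_eq_one_iff {V : Type} [DecidableEq V] {m : ℕ} {f : Fin m → V} {i : V} :
    cnt f i = 1 ↔ ∃ a, ∀ b, f b = i ↔ b = a := by
  simp [cnt, Finset.card_eq_one, Finset.ext_iff]

section
variable {V : Type} [Fintype V] [DecidableEq V]

lemma card_cnt_eq_one (m : ℕ) (i : V) :
    (Finset.univ.filter fun f : Fin m → V => cnt f i = 1).card =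
      m * (Fintype.card V - 1) ^ (m - 1) := by
  have h : (Finset.univ.filter fun f : Fin m → V => cnt f i = 1) =
      Finset.univ.biUnion fun a : Fin m =>
        Fintype.piFinset fun b => if b ∈ ({a} : Finset (Fin m)) then {i} else {i}ᶜ := by
    ext f
    simp only [Finset.mem_filter, Finset.mem_univ, true_and, Finset.mem_biUnion,
      mem_words (g := fun _ => i), cnt_eq_one_iff]
    refine exists_congr fun a => forall_congr' fun b => ?_
    simp
    tauto
  rw [h, Finset.card_biUnion]
  · simp_rw [card_words _ (fun _ => i)]
    simp [Finset.card_compl]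
  · intro a _ a' _ haa'
    refine Finset.disjoint_left.2 fun f hf hf' => ?_
    rw [mem_words (g := fun _ => i)] at hf hf'
    have h1 := (hf a).1 (by simp)
    have h2 := (hf' a).2 (by simpa using haa')
    simp [h1] at h2

lemma card_cnt_eq_one_two (m : ℕ) {i j : V} (hij : i ≠ j) :
    (Finset.univ.filter fun f : Fin m → V => cnt f i = 1 ∧ cnt f j = 1).card ≤
      m ^ 2 * (Fintype.card V - 2) ^ (m - 2) := by
  have h : (Finset.univ.filter fun f : Fin m → V => cnt f i = 1 ∧ cnt f j = 1) ⊆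
      (Finset.univ : Finset (Fin m)).offDiag.biUnion fun x =>
        Fintype.piFinset fun b => if b ∈ ({x.1, x.2} : Finset (Fin m)) then
          {if b = x.1 then i else j} else {i, j}ᶜ := by
    intro f
    simp only [Finset.mem_filter, Finset.mem_univ, true_and, Finset.mem_biUnion,
      mem_words (g := fun b => if b = _ then i else j), cnt_eq_one_iff, Finset.mem_offDiag]
    rintro ⟨⟨a, ha⟩, ⟨b, hb⟩⟩
    have hab : a ≠ b := by
      rintro rfl
      exact hij (((ha a).2 rfl).symm.trans ((hb a).2 rfl))
    refine ⟨(a, b), hab, fun x => ⟨fun hx => ?_, fun hx => ?_⟩⟩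
    · simp only [Finset.mem_insert, Finset.mem_singleton] at hx
      rcases hx with rfl | rfl
      · simp [ha]
      · simp [hab.symm, hb]
    · simp only [Finset.mem_insert, Finset.mem_singleton, not_or] at hx
      simp [ha, hb, hx]
  refine (Finset.card_le_card h).trans ((Finset.card_biUnion_le_card_mul _ _
    ((Fintype.card V - 2) ^ (m - 2)) ?_).trans ?_)
  · intro x hx
    rw [Finset.mem_offDiag] at hx
    rw [card_words _ (fun b => if b = x.1 then i else j), Finset.card_compl,
      Finset.card_pair hij, Finset.card_pair hx.2.2]
  · refine Nat.mul_le_mul_right _ ?_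
    rw [Finset.offDiag_card, Finset.card_univ, Fintype.card_fin, sq]
    exact Nat.sub_le _ _

lemma card_collision (m : ℕ) {a b : Fin m} (hab : a ≠ b) :
    (Finset.univ.filter fun f : Fin m → V => f a = f b).card ≤
      Fintype.card V * Fintype.card V ^ (m - 2) := by
  have h : (Finset.univ.filter fun f : Fin m → V => f a = f b) ⊆
      (Finset.univ : Finset V).biUnion fun x =>
        Fintype.piFinset fun c => if c ∈ ({a, b} : Finset (Fin m)) then {x} else Finset.univ := by
    intro f hf
    simp only [Finset.mem_filter, Finset.mem_univ, true_and] at hf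
    simp only [Finset.mem_univ, true_and, Finset.mem_biUnion, mem_words (g := fun _ => _)]
    refine ⟨f a, fun c => ⟨fun hc => ?_, fun _ => trivial⟩⟩
    simp only [Finset.mem_insert, Finset.mem_singleton] at hc
    rcases hc with rfl | rfl
    · rfl
    · exact hf.symm
  refine (Finset.card_le_card h).trans (Finset.card_biUnion_le_card_mul _ _ _ ?_)
  intro x _
  rw [card_words _ (fun _ => x), Finset.card_univ, Finset.card_pair hab]

/-- The number of letters occurring exactly once in a word. -/
def ones {m : ℕ} (f : Fin m → V) : ℕ := (Finset.univ.filter fun i => cnt f i = 1).card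

lemma sum_ones (m : ℕ) :
    ∑ f : Fin m → V, ones f = Fintype.card V * (m * (Fintype.card V - 1) ^ (m - 1)) := by
  simp_rw [ones, Finset.card_filter]
  rw [Finset.sum_comm]
  simp_rw [← Finset.card_filter, card_cnt_eq_one]
  simp

lemma sum_ones_sq (m : ℕ) :
    ∑ f : Fin m → V, ones f ^ 2 ≤ Fintype.card V * (m * (Fintype.card V - 1) ^ (m - 1)) +
      Fintype.card V ^ 2 * (m ^ 2 * (Fintype.card V - 2) ^ (m - 2)) := by
  have h (f : Fin m → V) : ones f ^ 2 =
      ∑ i, ∑ j, if cnt f i = 1 ∧ cnt f j = 1 then 1 else 0 := by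
    rw [ones, Finset.card_filter, sq, Finset.sum_mul_sum]
    simp_rw [ite_and, ite_mul, one_mul, zero_mul]
  simp_rw [h]
  rw [Finset.sum_comm]
  simp_rw [Finset.sum_comm (s := (Finset.univ : Finset (Fin m → V))), ← Finset.card_filter]
  have h2 (i j : V) : (Finset.univ.filter fun f : Fin m → V => cnt f i = 1 ∧ cnt f j = 1).card ≤
      (if i = j then m * (Fintype.card V - 1) ^ (m - 1) else 0) +
        m ^ 2 * (Fintype.card V - 2) ^ (m - 2) := by
    split_ifs with h
    · subst h
      simp [card_cnt_eq_one]
    · simpa using card_cnt_eq_one_two m h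
  refine (Finset.sum_le_sum fun i _ => Finset.sum_le_sum fun j _ => h2 i j).trans ?_
  simp [Finset.sum_add_distrib, sq, mul_add, mul_assoc]

lemma sum_cnt_sq (m : ℕ) :
    ∑ f : Fin m → V, ∑ i, cnt f i ^ 2 ≤ m * Fintype.card V ^ m +
      m ^ 2 * (Fintype.card V * Fintype.card V ^ (m - 2)) := by
  have h (f : Fin m → V) : ∑ i, cnt f i ^ 2 = ∑ a, ∑ b, if f a = f b then 1 else 0 := by
    have (i : V) : cnt f i ^ 2 = ∑ a, if f a = i then cnt f i else 0 := by
      rw [← Finset.sum_filter, Finset.sum_const, sq]; rfl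
    simp_rw [this]
    rw [Finset.sum_comm]
    refine Finset.sum_congr rfl fun a _ => ?_
    rw [Finset.sum_ite_eq, if_pos (Finset.mem_univ _), cnt, Finset.card_filter]
    simp_rw [eq_comm]
  simp_rw [h]
  rw [Finset.sum_comm]
  simp_rw [Finset.sum_comm (s := (Finset.univ : Finset (Fin m → V))), ← Finset.card_filter]
  have h2 (a b : Fin m) : (Finset.univ.filter fun f : Fin m → V => f a = f b).card ≤
      (if a = b then Fintype.card V ^ m else 0) + Fintype.card V * Fintype.card V ^ (m - 2) := by
    split_ifs with h
    · subst h
      simp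
    · simpa using card_collision m h
  refine (Finset.sum_le_sum fun i _ => Finset.sum_le_sum fun j _ => h2 i j).trans ?_
  simp [Finset.sum_add_distrib, sq, mul_add, mul_assoc]

end

/-! ### Asymptotics -/

open Filter Topology in
lemma tendsto_pow_exp (a : ℝ) (k : ℕ) :
    Tendsto (fun m : ℕ => (1 + a / ((m : ℝ) + 2)) ^ (m - k)) atTop (𝓝 (Real.exp a)) := by
  have h1 : Tendsto (fun m : ℕ => (1 + a / ((m : ℝ) + 2)) ^ (m + 2)) atTop (𝓝 (Real.exp a)) := by
    have := (Real.tendsto_one_add_div_pow_exp a).comp (tendsto_add_atTop_nat 2)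
    refine this.congr fun m => ?_
    simp
  have h2 : Tendsto (fun m : ℕ => 1 + a / ((m : ℝ) + 2)) atTop (𝓝 1) := by
    have : Tendsto (fun m : ℕ => (m : ℝ) + 2) atTop atTop :=
      tendsto_atTop_add_const_right _ _ tendsto_natCast_atTop_atTop
    simpa using (this.const_div_atTop a).const_add 1
  have h3 := h1.div (h2.pow (k + 2)) (by simp)
  rw [one_pow, div_one] at h3
  refine h3.congr' ?_
  filter_upwards [eventually_ge_atTop k, h2.eventually_ne one_ne_zero] with m hm hne
  simp only [Pi.div_apply]
  rw [div_eq_iff (pow_ne_zero _ hne), ← pow_add]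
  congr 1
  omega

/-- The upper bound obtained from the second moment method for the proportion of words of
length `m` over `m + 2` letters in which some letter occurs more often than there are letters
occurring exactly once. -/
noncomputable def bound (m : ℕ) : ℝ :=
  4 / Real.exp (-1) ^ 2 * ((1 + -1 / ((m : ℝ) + 2)) ^ (m - 1) / m +
    (1 + -2 / ((m : ℝ) + 2)) ^ (m - 2) -
    2 * Real.exp (-1) * (1 + -1 / ((m : ℝ) + 2)) ^ (m - 1) + Real.exp (-1) ^ 2 +
    (1 / (m : ℝ) + 1 / ((m : ℝ) + 2)))

open Filter Topology in
lemma tendsto_bound : Tendsto bound atTop (𝓝 0) := by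
  have hm : Tendsto (fun m : ℕ => (m : ℝ)) atTop atTop := tendsto_natCast_atTop_atTop
  have hm2 : Tendsto (fun m : ℕ => (m : ℝ) + 2) atTop atTop :=
    tendsto_atTop_add_const_right _ _ hm
  have h := (((((tendsto_pow_exp (-1) 1).div_atTop hm).add (tendsto_pow_exp (-2) 2)).sub
    ((tendsto_pow_exp (-1) 1).const_mul (2 * Real.exp (-1)))).add_const (Real.exp (-1) ^ 2)).add
    ((hm.const_div_atTop 1).add (hm2.const_div_atTop 1)) |>.const_mul (4 / Real.exp (-1) ^ 2)
  refine h.trans (le_of_eq ?_)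
  have : Real.exp (-2) = Real.exp (-1) ^ 2 := by
    rw [← Real.exp_nat_mul]; norm_num
  rw [this]
  congr 1
  ring

/-- Second moment method, applied to the penalty `(ones f / m - e⁻¹) ^ 2 + ∑ i, cnt f i ^ 2 / m ^ 2`.
Its mean is at most `e⁻² / 4 * bound m`, and it is at least `e⁻² / 4` on a bad word: either
`ones f / m` is at most `e⁻¹ / 2`, or some letter occurs at least `(e⁻¹ / 2) m` times. -/
lemma card_bad_le {m : ℕ} (hm : 2 ≤ m) :
    ((Finset.univ.filter fun f : Fin m → Fin (m + 2) => ¬ ∀ i, cnt f i ≤ ones f).card : ℝ) ≤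
      bound m * ((m : ℝ) + 2) ^ m := by
  set c := Real.exp (-1) with hc
  have hc0 : 0 < c := Real.exp_pos _
  have hm0 : (0 : ℝ) < m := by exact_mod_cast (by omega : 0 < m)
  set T : ℝ := ((m : ℝ) + 2) ^ m with hT
  set p : ℝ := (1 + -1 / ((m : ℝ) + 2)) ^ (m - 1) with hp
  set q : ℝ := (1 + -2 / ((m : ℝ) + 2)) ^ (m - 2) with hq
  have hT1 : T = ((m : ℝ) + 2) * ((m : ℝ) + 2) ^ (m - 1) := by
    rw [← pow_succ', hT]; congr 1; omega
  have hT2 : T = ((m : ℝ) + 2) ^ 2 * ((m : ℝ) + 2) ^ (m - 2) := by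
    rw [← pow_add, hT]; congr 1; omega
  have hp' : ((m : ℝ) + 2) * ((m : ℝ) + 1) ^ (m - 1) = T * p := by
    rw [hT1, hp, mul_assoc, ← mul_pow]
    congr 2
    field_simp
    ring
  have hq' : ((m : ℝ) + 2) ^ 2 * (m : ℝ) ^ (m - 2) = T * q := by
    rw [hT2, hq, mul_assoc, ← mul_pow]
    congr 2
    field_simp
    ring
  have s1 : ∑ f : Fin m → Fin (m + 2), (ones f : ℝ) = m * (T * p) := by
    have := sum_ones (V := Fin (m + 2)) m
    rw [Fintype.card_fin, show m + 2 - 1 = m + 1 by omega] at this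
    have h : ((∑ f : Fin m → Fin (m + 2), ones f : ℕ) : ℝ) = _ := congrArg Nat.cast this
    push_cast at h
    rw [h, ← hp']
    ring
  have s2 : ∑ f : Fin m → Fin (m + 2), (ones f : ℝ) ^ 2 ≤ m * (T * p) + m ^ 2 * (T * q) := by
    have := sum_ones_sq (V := Fin (m + 2)) m
    rw [Fintype.card_fin, show m + 2 - 1 = m + 1 by omega, show m + 2 - 2 = m by omega] at this
    have h := (Nat.cast_le (α := ℝ)).2 this
    push_cast at h
    rw [← hp', ← hq']
    linarith
  have s3 : ∑ f : Fin m → Fin (m + 2), ∑ i, (cnt f i : ℝ) ^ 2 ≤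
      m * T + m ^ 2 * (T / ((m : ℝ) + 2)) := by
    have := sum_cnt_sq (V := Fin (m + 2)) m
    rw [Fintype.card_fin] at this
    have h := (Nat.cast_le (α := ℝ)).2 this
    push_cast at h
    refine h.trans (le_of_eq ?_)
    congr 2
    rw [hT2]
    field_simp
  -- The penalty is at least `c ^ 2 / 4` on every bad word.
  set Φ : (Fin m → Fin (m + 2)) → ℝ := fun f =>
    (ones f / m - c) ^ 2 + (∑ i, (cnt f i : ℝ) ^ 2) / m ^ 2 with hΦ
  have hΦ0 (f) : 0 ≤ Φ f := by positivity
  have hbad (f) (hf : f ∈ Finset.univ.filter fun f : Fin m → Fin (m + 2) =>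
      ¬ ∀ i, cnt f i ≤ ones f) : c ^ 2 / 4 ≤ Φ f := by
    simp only [Finset.mem_filter, Finset.mem_univ, true_and, not_forall, not_le] at hf
    obtain ⟨i, hi⟩ := hf
    have hi' : (ones f : ℝ) ≤ cnt f i := by exact_mod_cast hi.le
    have hs : (cnt f i : ℝ) ^ 2 ≤ ∑ i, (cnt f i : ℝ) ^ 2 :=
      Finset.single_le_sum (f := fun i => (cnt f i : ℝ) ^ 2) (fun i _ => by positivity)
        (Finset.mem_univ i)
    by_cases h : (ones f : ℝ) / m ≤ c / 2
    · have h1 : 0 ≤ (∑ i, (cnt f i : ℝ) ^ 2) / (m : ℝ) ^ 2 := by positivity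
      have h2 : c ^ 2 / 4 ≤ (ones f / m - c) ^ 2 := by nlinarith
      simp only [hΦ]
      linarith
    · have h1 : c / 2 ≤ (cnt f i : ℝ) / m := (not_le.1 h).le.trans (by gcongr)
      have h2 : ((cnt f i : ℝ) / m) ^ 2 ≤ (∑ i, (cnt f i : ℝ) ^ 2) / (m : ℝ) ^ 2 := by
        rw [div_pow]; gcongr
      have h3 : c ^ 2 / 4 ≤ ((cnt f i : ℝ) / m) ^ 2 := by nlinarith
      have h4 := sq_nonneg (ones f / m - c)
      simp only [hΦ]
      linarith
  have hsum : ∑ f, Φ f ≤ T * (p / m + q - 2 * c * p + c ^ 2 + (1 / m + 1 / ((m : ℝ) + 2))) := by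
    have e : ∑ f, Φ f = (∑ f : Fin m → Fin (m + 2), (ones f : ℝ) ^ 2) / m ^ 2 -
        2 * c / m * (∑ f : Fin m → Fin (m + 2), (ones f : ℝ)) + T * c ^ 2 +
        (∑ f : Fin m → Fin (m + 2), ∑ i, (cnt f i : ℝ) ^ 2) / m ^ 2 := by
      have : T * c ^ 2 = ∑ f : Fin m → Fin (m + 2), c ^ 2 := by simp [hT]
      rw [this, Finset.sum_div, Finset.sum_div, Finset.mul_sum, ← Finset.sum_sub_distrib,
        ← Finset.sum_add_distrib, ← Finset.sum_add_distrib]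
      refine Finset.sum_congr rfl fun f _ => ?_
      simp only [hΦ]
      ring
    rw [e, s1]
    calc _ ≤ (m * (T * p) + m ^ 2 * (T * q)) / (m : ℝ) ^ 2 -
        2 * c / m * (m * (T * p)) + T * c ^ 2 +
        (m * T + m ^ 2 * (T / ((m : ℝ) + 2))) / (m : ℝ) ^ 2 := by gcongr
      _ = _ := by
        field_simp
  have h5 := (Finset.card_nsmul_le_sum _ Φ _ hbad).trans
    ((Finset.sum_le_sum_of_subset_of_nonneg (Finset.filter_subset _ _)
      (fun f _ _ => hΦ0 f)).trans hsum)
  rw [nsmul_eq_mul] at h5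
  have e : bound m * T = (T * (p / m + q - 2 * c * p + c ^ 2 + (1 / m + 1 / ((m : ℝ) + 2)))) /
      (c ^ 2 / 4) := by
    rw [bound, div_div_eq_mul_div]
    ring
  rw [e, le_div_iff₀ (by positivity)]
  exact h5

/-! ### The proportion of balanced trees -/

/-- A random labeled tree is balanced: the proportion of balanced labeled trees on `n`
vertices among all labeled trees on `n` vertices tends to `1` as `n → ∞`. -/
theorem random_labeled_tree_is_balanced :
    Filter.Tendsto
      (fun n : ℕ =>
        (Nat.card {G : SimpleGraph (Fin n) // G.IsTree ∧ IsBalanced G} : ℝ) /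
        (Nat.card {G : SimpleGraph (Fin n) // G.IsTree} : ℝ))
      Filter.atTop (nhds 1) := by
  rw [← Filter.tendsto_add_atTop_iff_nat 2]
  have hlow : Filter.Tendsto (fun m => 1 - bound m) Filter.atTop (nhds 1) := by
    simpa using tendsto_bound.const_sub 1
  refine tendsto_of_tendsto_of_tendsto_of_le_of_le' hlow tendsto_const_nhds ?_ ?_
  · filter_upwards [Filter.eventually_ge_atTop 2] with m hm
    obtain ⟨e, he⟩ := exists_equiv m (Fin (m + 2)) (by simp)
    have hcard : (Nat.card {G : SimpleGraph (Fin (m + 2)) // G.IsTree} : ℝ) =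
        ((m : ℝ) + 2) ^ m := by
      rw [Nat.card_congr e]
      simp
    have hgood : (Finset.univ.filter fun f : Fin m → Fin (m + 2) => ∀ i, cnt f i ≤ ones f).card ≤
        Nat.card {G : SimpleGraph (Fin (m + 2)) // G.IsTree ∧ IsBalanced G} := by
      rw [← Fintype.card_subtype, ← Nat.card_eq_fintype_card]
      refine Nat.card_le_card_of_injective (fun f => ⟨(e.symm f.1).1, (e.symm f.1).2, ?_⟩) ?_
      · refine isBalanced_of_dg _ (cnt f.1) (fun v => ?_) ?_ f.2
        · rw [he, Equiv.apply_symm_apply]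
        · rw [sum_cnt, Fintype.card_fin]
      · intro f f' h
        simp only [Subtype.mk.injEq] at h
        exact Subtype.ext (e.symm.injective (Subtype.ext h))
    have hsplit := Finset.card_filter_add_card_filter_not
      (s := (Finset.univ : Finset (Fin m → Fin (m + 2)))) (fun f => ∀ i, cnt f i ≤ ones f)
    have hsplit' := congrArg (Nat.cast (R := ℝ)) hsplit
    have hgood' := (Nat.cast_le (α := ℝ)).2 hgood
    have hb := card_bad_le hm
    rw [Finset.card_univ, Fintype.card_pi_const, Fintype.card_fin] at hsplit'
    push_cast at hsplit'
    rw [hcard, le_div_iff₀ (by positivity)]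
    linarith
  · filter_upwards with m
    refine div_le_one_of_le₀ (Nat.cast_le.2 ?_) (Nat.cast_nonneg _)
    exact Nat.card_le_card_of_injective (fun G => ⟨G.1, G.2.1⟩)
      (fun G G' h => Subtype.ext (by simpa using h))
end

section
/- A random unlabeled tree is balanced: if τ_n denotes the number of isomorphism classes of trees on n vertices, and b''_n denotes the number of isomorphism classes of balanced trees on n vertices, then lim_{n→∞} b''_n / τ_n = 1. -/
/-!
The argument compares unlabeled trees with unlabeled *rooted* trees. Let `r n` be the number of
rooted trees on `n` vertices. Since a tree has `n` possible roots, `r n ≤ n * τ n`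
(`r_le_mul_card`), so it is enough that the rooted trees whose underlying tree is not balanced number
`o(r n / n)`.

*Balance.* For a vertex 2-coloring, the difference of the numbers of monochromatic edges is half the
difference of the degree sums of the two color classes (`isBalanced_of_splits`). Splitting the
vertices into pairs with opposite colors, and keeping pairs of degrees `(1, 2)` for the end in order to
correct the imbalance one unit at a time, shows that a graph with maximal degree at most `D`, at least
`D` leaves and at least `D` vertices of degree two is balanced (`isBalanced_of_degrees`). A tree has at
least as many leaves as its maximal degree, so only vertices of degree two are needed.

*Exceptional rooted trees.* Take `m` and `L` of order `log n`.
* Trees with many repeated branches at one vertex (`Bad`) lose a factor `r L ≥ n ^ 10`, as the repeated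
  copies carry no information (`card_bad_le`).
* Trees with a vertex having `m` distinct branches (`Wide`) lose a factor `2 ^ m ≥ n ^ 10`, as any
  subset of the branches may be moved below a new vertex (`card_wide_le`).
* Outside these families all degrees are at most `m * L + 1`. Trees having at most `q = m * L + 1`
  one-child vertices (`Few`) are treated by switching (`few_le`): such a tree has linearly many leaves,
  and pulling a leaf into the edge above its parent creates a one-child vertex. There are about `n`
  moves forward and at most `q + 2` back, and automorphisms cost only powers of `L` when the tree is
  sparse. Hence the proportion of `Few q` is at most polylogarithmic over `n` times that of
  `Few (q + 2)`, and applying this twice gives `polylog(n) / n ^ 2`.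

All remaining rooted trees have a balanced underlying tree (`Model.isBalanced`), and `exceptional_bound`
collects the estimates. Rooted trees are encoded as hereditarily finite multisets (`RT`), and are
related to `SimpleGraph`s through `Model`.
-/

open SimpleGraph

/-- The setoid identifying isomorphic graphs (restricted to graphs satisfying `P`)
on the vertex set `Fin n`. -/
def isoSetoid (n : ℕ) (P : SimpleGraph (Fin n) → Prop) :
    Setoid {G : SimpleGraph (Fin n) // P G} :=
  ⟨fun G G' => Nonempty (G.1 ≃g G'.1),
   ⟨fun G => ⟨RelIso.refl G.1.Adj⟩,
    fun h => ⟨h.some.symm⟩,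
    fun h h' => ⟨h.some.trans h'.some⟩⟩⟩

namespace UT

/-! ### Unlabeled rooted trees -/

/-- Unlabeled rooted trees. Such a tree is determined by the finite multiset of the rooted trees
hanging from its root, so it is encoded by a natural number through the bijection
`ℕ ≃ Multiset ℕ`; the code of a multiset exceeds all its elements, which makes the
encoding well founded. -/
def RT : Type := ℕ

instance : DecidableEq RT := inferInstanceAs (DecidableEq ℕ)

/-- The bijection identifying a rooted tree with the multiset of its root branches. -/
def mkEquiv : Multiset RT ≃ RT := Denumerable.eqv (Multiset ℕ)

/-- The rooted tree whose root branches are the members of `F`. -/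
def mk (F : Multiset RT) : RT := mkEquiv F
/-- The multiset of root branches of `t`. -/
def ch (t : RT) : Multiset RT := mkEquiv.symm t

@[simp] theorem ch_mk (F : Multiset RT) : ch (mk F) = F := mkEquiv.symm_apply_apply F
@[simp] theorem mk_ch (t : RT) : mk (ch t) = t := mkEquiv.apply_symm_apply t

theorem mk_inj {F F' : Multiset RT} : mk F = mk F' ↔ F = F' := mkEquiv.injective.eq_iff

theorem lt_of_mem_raise (l : List ℕ) (n x : ℕ) (h : x ∈ Denumerable.raise l n) :
    x < n + Encodable.encode l := by
  induction l generalizing n with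
  | nil => simp [Denumerable.raise] at h
  | cons m l ih =>
    simp only [Denumerable.raise, List.mem_cons] at h
    have h1 := Nat.add_le_pair m (Encodable.encode l)
    simp only [Encodable.encode_list_cons, Encodable.encode_nat] at *
    rcases h with h | h
    · omega
    · have := ih _ h
      omega

theorem lt_of_mem_decode {x n : ℕ} (h : x ∈ (Denumerable.eqv (Multiset ℕ)).symm n) : x < n := by
  have h' : x ∈ ((Denumerable.raise (Denumerable.ofNat (List ℕ) n) 0 : List ℕ) : Multiset ℕ).map
      (Denumerable.ofNat ℕ) := h
  obtain ⟨y, hy, rfl⟩ := Multiset.mem_map.1 h'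
  have := lt_of_mem_raise _ _ _ hy
  rwa [Denumerable.encode_ofNat, zero_add] at this

theorem wf : WellFounded (fun x t : RT => x ∈ ch t) :=
  Subrelation.wf (fun h => lt_of_mem_decode h) Nat.lt_wfRel.wf

instance : WellFoundedRelation RT := ⟨_, wf⟩

/-- Structural induction on rooted trees. -/
theorem ind {P : RT → Prop} (h : ∀ F, (∀ x ∈ F, P x) → P (mk F)) (t : RT) : P t := by
  induction t using wf.induction with
  | _ t ih =>
    rw [← mk_ch t]
    exact h _ ih

/-- A one-hole context: the path from the root down to the hole, recording at each vertex of the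
path the multiset of branches hanging off it other than the one continuing towards the hole. -/
abbrev Ctx := List (Multiset RT)

/-- The rooted tree obtained by filling the hole of a context with a tree. -/
def plug : Ctx → RT → RT
  | [], t => t
  | F :: C, t => mk (plug C t ::ₘ F)

/-- All decompositions of `t` as a tree plugged into a context, one for each vertex of `t`; vertices
related by an automorphism give the same decomposition, which is then counted with multiplicity. -/
def dec (t : RT) : Multiset (Ctx × RT) :=
  ([], t) ::ₘ (ch t).attach.bind
    (fun x => (dec x.1).map fun p => ((ch t).erase x.1 :: p.1, p.2))
termination_by t
decreasing_by exact x.2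

theorem dec_mk (F : Multiset RT) :
    dec (mk F) = ([], mk F) ::ₘ F.bind (fun x => (dec x).map fun p => (F.erase x :: p.1, p.2)) := by
  rw [dec]
  have := Multiset.attach_bind_coe (ch (mk F)) (fun x => (dec x).map fun p => ((ch (mk F)).erase x :: p.1, p.2))
  rw [this]
  simp

theorem mem_dec (t : RT) : ∀ C S, (C, S) ∈ dec t ↔ plug C S = t := by
  induction t using ind with
  | h F ih =>
  intro C S
  rw [dec_mk]
  rcases C with _ | ⟨H, C⟩
  · simp [plug]
  · simp only [Multiset.mem_cons, Prod.mk.injEq, reduceCtorEq, false_and, Multiset.mem_bind,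
      Multiset.mem_map, List.cons.injEq, Prod.exists, false_or, plug, mk_inj]
    constructor
    · rintro ⟨x, hx, C', S', h, ⟨rfl, rfl⟩, rfl⟩
      rw [(ih x hx _ _).1 h, Multiset.cons_erase hx]
    · rintro rfl
      refine ⟨plug C S, by simp, C, S, ?_, by simp⟩
      exact (ih _ (by simp) _ _).2 rfl

/-- The subtrees of `t` formed by a vertex and its descendants, one for each vertex of `t`. -/
def sub (t : RT) : Multiset RT := (dec t).map Prod.snd

theorem sub_mk (F : Multiset RT) : sub (mk F) = mk F ::ₘ F.bind sub := by
  simp only [sub, dec_mk, Multiset.map_bind, Multiset.map_cons, Multiset.map_map, Function.comp_def]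
  rfl

/-- The number of vertices. -/
def size (t : RT) : ℕ := (sub t).card

theorem card_dec (t : RT) : (dec t).card = size t := by simp [size, sub]

theorem size_mk (F : Multiset RT) : size (mk F) = (F.map size).sum + 1 := by
  simp only [size, sub_mk, Multiset.card_bind, Multiset.card_cons, Function.comp_def]
  rfl

theorem size_pos (t : RT) : 0 < size t := by
  rw [← mk_ch t, size_mk]; omega

/-- The number of vertices of a context, the hole not included. -/
def csize (C : Ctx) : ℕ := (C.map fun F => (F.map size).sum + 1).sum

theorem size_plug (C : Ctx) (S : RT) : size (plug C S) = csize C + size S := by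
  induction C with
  | nil => simp [plug, csize]
  | cons F C ih => simp [plug, size_mk, ih, csize] ; omega

theorem plug_append (C C' : Ctx) (S : RT) : plug (C ++ C') S = plug C (plug C' S) := by
  induction C with
  | nil => rfl
  | cons F C ih => simp [plug, ih]

/-- The rooted tree with a single vertex. -/
def leaf : RT := mk 0

theorem exists_leaf (t : RT) : t = leaf ∨ ∃ C F, t = plug C (mk (leaf ::ₘ F)) := by
  induction t using ind with
  | h F ih =>
  induction F using Multiset.induction with
  | empty => left; rfl
  | cons a F _ =>
    right
    rcases ih a (by simp) with h | ⟨C, F', h⟩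
    · exact ⟨[], F, by rw [h]; rfl⟩
    · exact ⟨F :: C, F', by rw [h]; rfl⟩

theorem size_leaf : size leaf = 1 := by simp [leaf, size_mk]

/-- The rooted trees with `n` vertices, generated by adding a leaf in all possible ways to those with
one vertex less. -/
def R : ℕ → Finset RT
  | 0 => ∅
  | 1 => {leaf}
  | n + 2 => (R (n + 1)).biUnion fun t => (dec t).toFinset.image
      fun p => plug p.1 (mk (leaf ::ₘ ch p.2))

theorem size_eq_one {t : RT} (h : size t = 1) : t = leaf := by
  rcases exists_leaf t with h' | ⟨C, F, rfl⟩
  · exact h'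
  · rw [size_plug, size_mk] at h
    simp [size_leaf] at h
    omega

theorem mem_R (n : ℕ) (t : RT) : t ∈ R n ↔ size t = n := by
  induction n using R.induct generalizing t with
  | case1 => have := size_pos t; simp [R]; omega
  | case2 => simp [R]; exact ⟨fun h => h ▸ size_leaf, size_eq_one⟩
  | case3 n ih =>
    simp only [R, Finset.mem_biUnion, Finset.mem_image, Multiset.mem_toFinset, Prod.exists, ih]
    constructor
    · rintro ⟨t', ht', C, S, h, rfl⟩
      rw [mem_dec] at h
      subst h
      rw [← mk_ch S, size_plug, size_mk] at ht'
      simp [size_plug, size_mk, size_leaf]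
      omega
    · intro h
      rcases exists_leaf t with h' | ⟨C, F, rfl⟩
      · rw [h', size_leaf] at h; omega
      · refine ⟨plug C (mk F), ?_, C, mk F, (mem_dec _ _ _).2 rfl, by simp⟩
        simp [size_plug, size_mk, size_leaf] at h ⊢
        omega

/-- The number of rooted trees with `n` vertices. -/
def r (n : ℕ) : ℕ := (R n).card

theorem card_dec_toFinset (t : RT) : (dec t).toFinset.card ≤ size t :=
  (Multiset.toFinset_card_le _).trans (card_dec t).le

theorem r_succ_le (n : ℕ) (hn : 1 ≤ n) : r (n + 1) ≤ n * r n := by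
  obtain ⟨n, rfl⟩ : ∃ k, n = k + 1 := ⟨n - 1, by omega⟩
  rw [mul_comm]
  refine Finset.card_biUnion_le_card_mul _ _ _ fun t ht => Finset.card_image_le.trans ?_
  exact (card_dec_toFinset t).trans ((mem_R _ _).1 ht).le

theorem r_mono_succ (n : ℕ) : r n ≤ r (n + 1) := by
  refine Finset.card_le_card_of_injOn (fun t => mk {t}) (fun t ht => ?_) (fun a _ b _ h => ?_)
  · simp only [SetLike.mem_coe, mem_R] at ht ⊢
    simp [size_mk, ht]
  · simpa [mk_inj] using h

theorem r_mono : Monotone r := monotone_nat_of_le_succ r_mono_succ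

theorem r_one : r 1 = 1 := rfl

theorem r_pos {n : ℕ} (hn : 1 ≤ n) : 0 < r n := by
  have := r_mono hn
  rw [r_one] at this; omega

/-- Two injections with disjoint images: put `t` below a path of two vertices, or below a new root
that also carries a leaf. -/
theorem two_mul_r_le (n : ℕ) : 2 * r n ≤ r (n + 2) := by
  have h1 : Disjoint ((R n).image fun t => mk {mk {t}}) ((R n).image fun t => mk {leaf, t}) := by
    rw [Finset.disjoint_left]
    intro x hx hx'
    simp only [Finset.mem_image] at hx hx'
    obtain ⟨a, -, rfl⟩ := hx
    obtain ⟨b, -, h⟩ := hx'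
    rw [mk_inj] at h
    simpa using congrArg Multiset.card h
  have h2 : ((R n).image fun t => mk {mk {t}}) ∪ ((R n).image fun t => mk {leaf, t}) ⊆ R (n + 2) := by
    intro x hx
    simp only [Finset.mem_union, Finset.mem_image, mem_R] at hx ⊢
    rcases hx with ⟨a, h, rfl⟩ | ⟨a, h, rfl⟩
    · simp [size_mk, h]
    · simp [size_mk, h, size_leaf]; omega
  have h3 := Finset.card_le_card h2
  rw [Finset.card_union_of_disjoint h1, Finset.card_image_of_injective, Finset.card_image_of_injective] at h3
  · change r n + r n ≤ r (n + 2) at h3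
    omega
  · intro a b h; simpa [mk_inj] using h
  · intro a b h; simpa [mk_inj] using h

theorem two_pow_le_r (m : ℕ) : 2 ^ m ≤ r (2 * m + 1) := by
  induction m with
  | zero => simp [r_one]
  | succ m ih =>
    have := two_mul_r_le (2 * m + 1)
    rw [pow_succ, show 2 * (m + 1) + 1 = 2 * m + 1 + 2 by ring]
    omega

theorem card_le_sum_size (F : Multiset RT) : F.card ≤ (F.map size).sum := by
  induction F using Multiset.induction with
  | empty => simp
  | cons a F ih => have := size_pos a; simp; omega

/-- Grafting `x` below the root of `s` recovers `(s, x)` from the result and one of its root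
branches. -/
theorem r_mul_r_le (a b : ℕ) : r a * r b ≤ (a + b) * r (a + b) := by
  have : (R a ×ˢ R b) ⊆ (R (a + b)).biUnion fun t =>
      (ch t).toFinset.image fun x => (mk ((ch t).erase x), x) := by
    rintro ⟨s, x⟩ h
    simp only [Finset.mem_product, mem_R, Finset.mem_biUnion, Finset.mem_image, Multiset.mem_toFinset] at h ⊢
    refine ⟨mk (x ::ₘ ch s), ?_, x, by simp, by simp⟩
    have := h.1
    rw [← mk_ch s, size_mk] at this
    simp [size_mk]
    omega
  have h2 := Finset.card_le_card this
  rw [Finset.card_product] at h2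
  refine h2.trans ?_
  rw [mul_comm]
  refine Finset.card_biUnion_le_card_mul _ _ _ fun t ht => Finset.card_image_le.trans ?_
  refine (Multiset.toFinset_card_le _).trans ?_
  have := card_le_sum_size (ch t)
  rw [mem_R, ← mk_ch t, size_mk] at ht
  omega

/-! ### Exceptional families of rooted trees -/

/-- Among the equal branches below any one vertex, all copies but one have fewer than `L` vertices in
total. -/
def Sparse (L : ℕ) (t : RT) : Prop :=
  ∀ C F S, t = plug C (mk F) → S ∈ F → (F.count S - 1) * size S < L

open Classical in
/-- The rooted trees with `n` vertices that are not `L`-sparse. -/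
noncomputable def Bad (L n : ℕ) : Finset RT := (R n).filter fun t => ¬ Sparse L t

theorem mem_Bad {L n : ℕ} {t : RT} : t ∈ Bad L n ↔ size t = n ∧ ¬ Sparse L t := by
  classical
  rw [Bad, Finset.mem_filter, mem_R]

theorem card_ch_lt (t : RT) : (ch t).card < size t := by
  have := card_le_sum_size (ch t)
  conv_rhs => rw [← mk_ch t, size_mk]
  omega

/-- A tree that is not sparse arises from a tree with `j ≥ L` vertices fewer by duplicating some branch
as often as `j` allows. -/
theorem bad_subset (L n : ℕ) : Bad L n ⊆ (Finset.Ico L n).biUnion fun j =>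
    (R (n - j)).biUnion fun t => (dec t).toFinset.biUnion fun p =>
      (ch p.2).toFinset.image fun S =>
        plug p.1 (mk (Multiset.replicate (j / size S) S + ch p.2)) := by
  intro t ht
  obtain ⟨hn, ht⟩ := mem_Bad.1 ht
  unfold Sparse at ht
  push Not at ht
  obtain ⟨C, F, S, rfl, hS, hL⟩ := ht
  obtain ⟨G, hG⟩ := Multiset.le_iff_exists_add.1 (Multiset.le_count_iff_replicate_le.1 (le_refl (F.count S)))
  have h1 : 1 ≤ F.count S := Multiset.one_le_count_iff_mem.2 hS
  obtain ⟨k, hk⟩ : ∃ k, F.count S = k + 1 := ⟨F.count S - 1, by omega⟩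
  rw [hk] at hL hG
  have hF : F = Multiset.replicate k S + (S ::ₘ G) := by
    rw [hG, Multiset.replicate_succ, Multiset.add_cons, Multiset.cons_add]
  have hp := size_pos S
  clear hk hG
  subst hF
  simp only [Nat.add_sub_cancel] at hL
  simp only [size_plug, size_mk, Multiset.map_add, Multiset.map_replicate, Multiset.sum_add, Multiset.sum_replicate, smul_eq_mul] at hn
  simp only [Finset.mem_biUnion, Finset.mem_Ico, mem_R, Multiset.mem_toFinset, Finset.mem_image]
  refine ⟨k * size S, ⟨hL, by omega⟩, plug C (mk (S ::ₘ G)), ?_, (C, mk (S ::ₘ G)),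
    (mem_dec _ _ _).2 rfl, S, by simp, ?_⟩
  · rw [size_plug, size_mk]; omega
  · simp [Nat.mul_div_cancel _ hp]

/-- Non-sparse trees are rare: the deleted duplicates could have been any tree with `j ≥ L` vertices, so
one loses a factor `r L` at the cost of a power of `n`. -/
theorem card_bad_le (L n : ℕ) : (Bad L n).card * r L ≤ n ^ 4 * r n := by
  have h1 : (Bad L n).card ≤ ∑ j ∈ Finset.Ico L n, r (n - j) * (n * n) := by
    refine (Finset.card_le_card (bad_subset L n)).trans (Finset.card_biUnion_le.trans ?_)
    refine Finset.sum_le_sum fun j hj => ?_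
    refine Finset.card_biUnion_le_card_mul _ _ _ fun t ht => ?_
    rw [mem_R] at ht
    have hn : size t ≤ n := by omega
    calc _ ≤ (dec t).toFinset.card * n := by
          refine Finset.card_biUnion_le_card_mul _ _ _ fun p hp => ?_
          have h2 : size p.2 ≤ size t := by
            rw [Multiset.mem_toFinset] at hp
            rw [← (mem_dec t p.1 p.2).1 hp, size_plug]; omega
          have := card_ch_lt p.2
          exact Finset.card_image_le.trans ((Multiset.toFinset_card_le _).trans (by omega))
      _ ≤ n * n := Nat.mul_le_mul_right _ ((card_dec_toFinset t).trans hn)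
  calc (Bad L n).card * r L ≤ (∑ j ∈ Finset.Ico L n, r (n - j) * (n * n)) * r L :=
        Nat.mul_le_mul_right _ h1
    _ = ∑ j ∈ Finset.Ico L n, (r (n - j) * r L) * (n * n) := by
        rw [Finset.sum_mul]; exact Finset.sum_congr rfl fun _ _ => by ring
    _ ≤ ∑ j ∈ Finset.Ico L n, (n * r n) * (n * n) := by
        refine Finset.sum_le_sum fun j hj => Nat.mul_le_mul_right _ ?_
        rw [Finset.mem_Ico] at hj
        have h2 := r_mul_r_le (n - j) j
        rw [Nat.sub_add_cancel hj.2.le] at h2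
        exact (Nat.mul_le_mul_left _ (r_mono hj.1)).trans h2
    _ ≤ n * ((n * r n) * (n * n)) := by
        rw [Finset.sum_const, smul_eq_mul, Nat.card_Ico]
        exact Nat.mul_le_mul_right _ (by omega)
    _ = n ^ 4 * r n := by ring

open Classical in
/-- The rooted trees with `n` vertices having a vertex with at least `d` distinct branches. -/
noncomputable def Wide (d n : ℕ) : Finset RT :=
  (R n).filter fun t => ∃ C F, t = plug C (mk F) ∧ d ≤ F.toFinset.card

theorem mem_Wide {d n : ℕ} {t : RT} : t ∈ Wide d n ↔
    size t = n ∧ ∃ C F, t = plug C (mk F) ∧ d ≤ F.toFinset.card := by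
  classical
  rw [Wide, Finset.mem_filter, mem_R]

/-- If a vertex has `d` distinct branches, moving any subset of them below a new child yields `2 ^ d`
trees with one more vertex, and each is reached from few trees. -/
theorem card_wide_le (d n : ℕ) : (Wide d n).card * 2 ^ d ≤ (n + 1) * r (n + 1) := by
  have h : ∀ t ∈ Wide d n, ∃ p : Ctx × Multiset RT, t = plug p.1 (mk p.2) ∧ d ≤ p.2.toFinset.card := by
    intro t ht
    obtain ⟨C, F, h⟩ := (mem_Wide.1 ht).2
    exact ⟨(C, F), h⟩
  choose! f hf hd using h
  have hle : ∀ t, ∀ I ∈ (f t).2.toFinset.powerset, I.val ≤ (f t).2 := by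
    intro t I hI
    rw [Finset.mem_powerset, ← Finset.val_le_iff] at hI
    exact hI.trans (Multiset.dedup_le _)
  have key : ((Wide d n).sigma fun t => (f t).2.toFinset.powerset).card ≤
      ((R (n + 1)).sigma fun t => (dec t).toFinset).card := by
    refine Finset.card_le_card_of_injOn (fun x => ⟨plug ((f x.1).1) (mk (mk x.2.val ::ₘ ((f x.1).2 - x.2.val))),
      ((f x.1).1 ++ [(f x.1).2 - x.2.val], mk x.2.val)⟩) ?_ ?_
    · rintro ⟨t, I⟩ hx
      simp only [Finset.coe_sigma, Set.mem_sigma_iff, SetLike.mem_coe] at hx ⊢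
      refine ⟨?_, ?_⟩
      · have h1 := hf t hx.1
        have h2 := hle t I hx.2
        have h3 := (mem_Wide.1 hx.1).1
        rw [h1, size_plug, size_mk] at h3
        have h4 : ((f t).2.map size).sum = (((f t).2 - I.val).map size).sum + (I.val.map size).sum := by
          rw [← Multiset.sum_add, ← Multiset.map_add, Multiset.sub_add_cancel h2]
        rw [mem_R, size_plug, size_mk, Multiset.map_cons, Multiset.sum_cons, size_mk]
        omega
      · rw [Multiset.mem_toFinset, mem_dec, plug_append]
        rfl
    · rintro ⟨t, I⟩ hx ⟨t', I'⟩ hx' h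
      simp only [Finset.coe_sigma, Set.mem_sigma_iff, SetLike.mem_coe] at hx hx'
      have h2 := hle t I hx.2
      have h2' := hle t' I' hx'.2
      simp only [Sigma.mk.injEq, heq_eq_eq, Prod.mk.injEq] at h
      obtain ⟨-, h3, h4⟩ := h
      rw [mk_inj] at h4
      obtain ⟨h5, h6⟩ := List.append_inj' h3 rfl
      simp only [List.cons.injEq, and_true] at h6
      have h7 : (f t).2 = (f t').2 := by
        rw [← Multiset.sub_add_cancel h2, ← Multiset.sub_add_cancel h2', h6, h4]
      have h8 : t = t' := by rw [hf t hx.1, hf t' hx'.1, h5, h7]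
      subst h8
      rw [Finset.val_inj] at h4
      rw [h4]
  rw [Finset.card_sigma, Finset.card_sigma] at key
  calc (Wide d n).card * 2 ^ d ≤ ∑ t ∈ Wide d n, ((f t).2.toFinset.powerset).card := by
        rw [← smul_eq_mul]
        refine Finset.card_nsmul_le_sum _ _ _ fun t ht => ?_
        rw [Finset.card_powerset]
        exact Nat.pow_le_pow_right (by norm_num) (hd t ht)
    _ ≤ _ := key
    _ ≤ (R (n + 1)).card • (n + 1) := Finset.sum_le_card_nsmul _ _ _ fun t ht => by
        have := (mem_R _ _).1 ht
        exact (card_dec_toFinset t).trans this.le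
    _ = (n + 1) * r (n + 1) := by rw [smul_eq_mul, mul_comm]; rfl

theorem Sparse.count_le {L : ℕ} {C : Ctx} {F : Multiset RT} (h : Sparse L (plug C (mk F))) (S : RT) (hS : S ∈ F) :
    F.count S ≤ L := by
  have h1 := h C F S rfl hS
  have h2 := size_pos S
  have h3 := Nat.le_mul_of_pos_right (F.count S - 1) h2
  omega

theorem Sparse.card_le {L : ℕ} {C : Ctx} {F : Multiset RT} (h : Sparse L (plug C (mk F))) :
    F.card ≤ F.toFinset.card * L := by
  rw [← Multiset.toFinset_sum_count_eq, ← smul_eq_mul]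
  refine Finset.sum_le_card_nsmul _ _ _ fun S hS => ?_
  rw [Multiset.mem_toFinset] at hS
  exact h.count_le S hS

theorem sum_ite_eq_count (F : Multiset RT) (x : RT) (K : ℕ) :
    (F.map fun b => if b = x then K else 0).sum = F.count x * K := by
  induction F using Multiset.induction with
  | empty => simp
  | cons a F ih =>
    rw [Multiset.map_cons, Multiset.sum_cons, ih, Multiset.count_cons]
    by_cases h : a = x
    · simp [h]; ring
    · simp [h, Ne.symm h]

/-- In a sparse tree every vertex has at most `L ^ 2` equivalent ones. On the path to the vertex, the
first step to a repeated branch leaves at most `L` choices, and that branch has fewer than `L` vertices. -/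
theorem count_dec_le {L : ℕ} (hL : 1 ≤ L) (t : RT) (h : Sparse L t) (p : Ctx × RT) :
    (dec t).count p ≤ L * L := by
  induction t using ind generalizing p with
  | h F ih =>
  have hLL : 1 ≤ L * L := Nat.mul_pos hL hL
  obtain ⟨C, S⟩ := p
  rw [dec_mk, Multiset.count_cons, Multiset.count_bind]
  rcases C with _ | ⟨H, C⟩
  · have : (F.map fun b => Multiset.count (([] : Ctx), S) ((dec b).map fun p => (F.erase b :: p.1, p.2))) = F.map fun b => 0 := by
      refine Multiset.map_congr rfl fun b _ => ?_
      rw [Multiset.count_eq_zero]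
      simp
    rw [this]
    simp only [Multiset.map_const', Multiset.sum_replicate, smul_eq_mul, mul_zero, zero_add]
    split_ifs <;> omega
  · rw [if_neg (by simp), add_zero]
    have h1 : ∀ b, Multiset.count (H :: C, S) ((dec b).map fun p => (F.erase b :: p.1, p.2)) =
        if F.erase b = H then (dec b).count (C, S) else 0 := by
      intro b
      split_ifs with hb
      · have := Multiset.count_map_eq_count' (fun p : Ctx × RT => (F.erase b :: p.1, p.2)) (dec b)
          (by rintro ⟨a, b⟩ ⟨c, d⟩; simp) (C, S)
        rw [← this, hb]
      · rw [Multiset.count_eq_zero]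
        simp [hb]
    simp only [h1]
    by_cases hx : ∃ x ∈ F, F.erase x = H
    · obtain ⟨x, hx, rfl⟩ := hx
      have h2 : (F.map fun b => if F.erase b = F.erase x then (dec b).count (C, S) else 0) =
          F.map fun b => if b = x then (dec x).count (C, S) else 0 := by
        refine Multiset.map_congr rfl fun b hb => ?_
        have : F.erase b = F.erase x ↔ b = x := by
          refine ⟨fun h => ?_, fun h => h ▸ rfl⟩
          have h3 := Multiset.cons_erase hb
          rw [h, ← Multiset.cons_erase hx] at h3
          simpa using h3
        by_cases h4 : b = x
        · simp [h4]
        · simp [h4, this]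
      rw [h2, sum_ite_eq_count]
      have h5 := h [] F x rfl hx
      have h6 := size_pos x
      by_cases h7 : L ≤ size x
      · have : F.count x ≤ 1 := by
          by_contra hc
          have := Nat.le_mul_of_pos_left (size x) (show 0 < F.count x - 1 by omega)
          omega
        have hs : Sparse L x := by
          rintro C F' S rfl hS
          exact h (F.erase (plug C (mk F')) :: C) F' S (by simp [plug, Multiset.cons_erase hx]) hS
        calc _ ≤ 1 * (L * L) := Nat.mul_le_mul this (ih x hx hs _)
          _ = _ := one_mul _
      · refine Nat.mul_le_mul (Sparse.count_le (C := []) h x hx) ?_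
        have := Multiset.count_le_card (C, S) (dec x)
        rw [card_dec] at this
        omega
    · push Not at hx
      rw [Multiset.map_congr rfl (fun b hb => if_neg (hx b hb))]
      simp

/-- The number of vertices having exactly one child. -/
def u (t : RT) : ℕ := (sub t).countP fun x => (ch x).card = 1

theorem u_mk (F : Multiset RT) : u (mk F) = (F.map u).sum + if F.card = 1 then 1 else 0 := by
  simp only [u, sub_mk, Multiset.countP_cons, ch_mk]
  congr 1
  induction F using Multiset.induction with
  | empty => simp
  | cons a F ih => simp [ih]; rfl

theorem u_plug (C : Ctx) (S S' : RT) : u (plug C S') + u S = u (plug C S) + u S' := by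
  induction C with
  | nil => simp [plug, add_comm]
  | cons F C ih => simp [plug, u_mk]; omega

theorem u_leaf : u leaf = 0 := by simp [leaf, u_mk]

theorem sub_eq (t : RT) : sub t = t ::ₘ (sub t).bind ch := by
  induction t using ind with
  | h F ih =>
  rw [sub_mk]
  simp only [Multiset.cons_bind, ch_mk, Multiset.bind_assoc]
  congr 1
  conv_lhs => rw [Multiset.bind_congr ih]
  rw [Multiset.bind_cons]
  simp

/-- Counting children: a tree with few one-child vertices has many leaves. -/
theorem leaves_lower (t : RT) : size t + 1 ≤ 2 * (sub t).count leaf + u t := by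
  have h1 : size t = 1 + ((sub t).map fun x => (ch x).card).sum := by
    rw [size, sub_eq t, Multiset.card_cons, Multiset.card_bind, ← sub_eq t]
    simp [add_comm]
  have h2 : ∀ s : Multiset RT, 2 * s.card ≤ 2 * s.count leaf + s.countP (fun x => (ch x).card = 1) + (s.map fun x => (ch x).card).sum := by
    intro s
    induction s using Multiset.induction with
    | empty => simp
    | cons a s ih =>
      have : (ch a).card = 0 → leaf = a := by
        intro h
        rw [Multiset.card_eq_zero] at h
        rw [← mk_ch a, h]; rfl
      simp only [Multiset.card_cons, Multiset.count_cons, Multiset.countP_cons, Multiset.map_cons, Multiset.sum_cons]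
      split_ifs <;> try omega
      all_goals
        have : (ch a).card ≠ 0 := fun h => by tauto
        omega
  have h3 := h2 (sub t)
  change 2 * size t ≤ 2 * _ + u t + _ at h3
  omega

/-- In a sparse tree every vertex has at most `L` leaf children. -/
theorem leaves_upper {L : ℕ} {t : RT} (h : Sparse L t) (ht : t ≠ leaf) :
    (sub t).count leaf ≤ ((dec t).filter fun p => leaf ∈ ch p.2).card * L := by
  rw [sub_eq t, Multiset.count_cons_of_ne ht.symm, Multiset.count_bind, sub, Multiset.map_map]
  have : ∀ p ∈ dec t, Multiset.count leaf (ch p.2) ≤ if leaf ∈ ch p.2 then L else 0 := by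
    rintro ⟨C, S⟩ hp
    rw [mem_dec] at hp
    split_ifs with hl
    · exact Sparse.count_le (C := C) (by rw [mk_ch, hp]; exact h) _ hl
    · rw [Multiset.count_eq_zero_of_notMem hl]
  refine (Multiset.sum_map_le_sum_map _ _ this).trans ?_
  rw [← Multiset.countP_eq_card_filter]
  generalize dec t = s
  induction s using Multiset.induction with
  | empty => simp
  | cons a s ih =>
    simp only [Multiset.map_cons, Multiset.sum_cons, Multiset.countP_cons]
    split_ifs
    · rw [add_mul]; omega
    · simpa using ih

/-- A sparse tree with few one-child vertices has, up to automorphism, linearly many vertices with a leaf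
child. -/
theorem leafParents_lower {L n q : ℕ} (hL : 1 ≤ L) {t : RT} (h : Sparse L t) (hn : size t = n) (h2 : 2 ≤ n)
    (hq : u t ≤ q) : n - q ≤ ((dec t).filter fun p => leaf ∈ ch p.2).toFinset.card * (2 * L ^ 3) := by
  have h1 := leaves_lower t
  have h3 := leaves_upper h (by rintro rfl; rw [size_leaf] at hn; omega)
  set s := (dec t).filter fun p => leaf ∈ ch p.2 with hs
  have h4 : s.card ≤ s.toFinset.card * (L * L) := by
    conv_lhs => rw [← Multiset.toFinset_sum_count_eq]
    rw [← smul_eq_mul]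
    refine Finset.sum_le_card_nsmul _ _ _ fun p hp => ?_
    exact (Multiset.count_le_of_le _ (Multiset.filter_le _ _)).trans (count_dec_le hL t h p)
  have h5 : s.card * L ≤ s.toFinset.card * (L * L) * L := Nat.mul_le_mul_right _ h4
  have h6 : s.toFinset.card * (2 * L ^ 3) = 2 * (s.toFinset.card * (L * L) * L) := by ring
  omega

/-- The rooted trees with `n` vertices of which at most `q` have exactly one child. -/
def Few (q n : ℕ) : Finset RT := (R n).filter fun t => u t ≤ q

theorem mem_Few {q n : ℕ} {t : RT} : t ∈ Few q n ↔ size t = n ∧ u t ≤ q := by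
  rw [Few, Finset.mem_filter, mem_R]

/-- Switching: at a vertex with a leaf child, remove that leaf and insert a new vertex with a single
child just above. A sparse tree of `Few q n` admits about `n - q` such moves up to a factor `2 * L ^ 3`,
and each resulting tree is reached at most `q + 2` times since the move marks a one-child vertex. -/
theorem few_le {L n q : ℕ} (hL : 1 ≤ L) (h2 : 2 ≤ n) :
    (Few q n \ Bad L n).card * (n - q) ≤ (Few (q + 2) n).card * (q + 2) * (2 * L ^ 3) := by
  have key : ((Few q n \ Bad L n).sigma fun t => ((dec t).filter fun p => leaf ∈ ch p.2).toFinset).card ≤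
      ((Few (q + 2) n).sigma fun t => ((dec t).filter fun p => (ch p.2).card = 1).toFinset).card := by
    refine Finset.card_le_card_of_injOn (fun x => ⟨plug x.2.1 (mk {mk ((ch x.2.2).erase leaf)}),
      (x.2.1, mk {mk ((ch x.2.2).erase leaf)})⟩) ?_ ?_
    · rintro ⟨t, C, S⟩ hx
      simp only [Finset.coe_sigma, Set.mem_sigma_iff, SetLike.mem_coe, Multiset.mem_toFinset,
        Multiset.mem_filter, mem_dec] at hx ⊢
      obtain ⟨ht, hC, hl⟩ := hx
      refine ⟨?_, trivial, by simp⟩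
      simp only [mem_Few, mem_Bad, Finset.mem_sdiff] at ht ⊢
      have hS : S = mk (leaf ::ₘ (ch S).erase leaf) := by rw [Multiset.cons_erase hl, mk_ch]
      generalize (ch S).erase leaf = F at *
      have h1 := u_plug C S (mk {mk F})
      subst hS
      subst hC
      simp only [size_plug, size_mk, u_mk, Multiset.map_cons, Multiset.sum_cons, size_leaf, u_leaf,
        Multiset.map_singleton, Multiset.sum_singleton, Multiset.card_singleton, if_true] at *
      refine ⟨by omega, ?_⟩
      have : (if F.card = 1 then 1 else 0) ≤ 1 := by split_ifs <;> omega
      omega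
    · rintro ⟨t, C, S⟩ hx ⟨t', C', S'⟩ hx' h
      simp only [Finset.coe_sigma, Set.mem_sigma_iff, SetLike.mem_coe, Multiset.mem_toFinset,
        Multiset.mem_filter, mem_dec] at hx hx'
      simp only [Sigma.mk.injEq, heq_eq_eq, Prod.mk.injEq, mk_inj, Multiset.singleton_inj] at h
      obtain ⟨-, rfl, h⟩ := h
      have hS : S = S' := by
        rw [← mk_ch S, ← mk_ch S', ← Multiset.cons_erase hx.2.2, h, Multiset.cons_erase hx'.2.2]
      subst hS
      have : t = t' := hx.2.1.symm.trans hx'.2.1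
      subst this
      rfl
  rw [Finset.card_sigma, Finset.card_sigma] at key
  calc (Few q n \ Bad L n).card * (n - q) ≤ ∑ t ∈ Few q n \ Bad L n,
        ((dec t).filter fun p => leaf ∈ ch p.2).toFinset.card * (2 * L ^ 3) := by
        rw [← smul_eq_mul]
        refine Finset.card_nsmul_le_sum _ _ _ fun t ht => ?_
        simp only [mem_Few, mem_Bad, Finset.mem_sdiff] at ht
        have hs : Sparse L t := by tauto
        exact leafParents_lower hL hs ht.1.1 h2 ht.1.2
    _ ≤ (∑ t ∈ Few (q + 2) n, ((dec t).filter fun p => (ch p.2).card = 1).toFinset.card) * (2 * L ^ 3) := by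
        rw [← Finset.sum_mul]
        exact Nat.mul_le_mul_right _ key
    _ ≤ _ := by
        refine Nat.mul_le_mul_right _ ?_
        rw [← smul_eq_mul]
        refine Finset.sum_le_card_nsmul _ _ _ fun t ht => ?_
        rw [mem_Few] at ht
        refine (Multiset.toFinset_card_le _).trans (le_trans ?_ ht.2)
        rw [u, sub, Multiset.countP_map]

/-! ### A degree criterion for balanced graphs -/

/-- `W` can be split into two nearly equal parts, given by signs, such that the sums of `f` over the
parts differ by at most `M`. -/
def Splits {V : Type*} (W : Finset V) (f : V → ℤ) (M : ℤ) : Prop :=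
  ∃ ε : V → ℤ, (∀ v, ε v = 1 ∨ ε v = -1) ∧ |∑ v ∈ W, ε v| ≤ 1 ∧ |∑ v ∈ W, ε v * f v| ≤ M

/-- Two further elements receive opposite signs, chosen so as to reduce the current imbalance. -/
theorem Splits.insert_pair {V : Type*} [DecidableEq V] {W : Finset V} {f : V → ℤ} {M : ℤ}
    (h : Splits W f M) {a b : V} (ha : a ∉ W) (hb : b ∉ W) (hab : a ≠ b) :
    Splits (insert a (insert b W)) f (max (M - |f a - f b|) |f a - f b|) := by
  obtain ⟨ε, h1, h2, h3⟩ := h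
  have key : ∀ η : ℤ, (η = 1 ∨ η = -1) →
      |∑ v ∈ W, ε v * f v + η * (f a - f b)| ≤ max (M - |f a - f b|) |f a - f b| →
      Splits (insert a (insert b W)) f (max (M - |f a - f b|) |f a - f b|) := by
    intro η hη hle
    refine ⟨fun v => if v = a then η else if v = b then -η else ε v, ?_, ?_, ?_⟩
    · intro v
      dsimp only
      split_ifs
      · exact hη
      · omega
      · exact h1 v
    · rw [Finset.sum_insert (by simp [ha, hab]), Finset.sum_insert hb, Finset.sum_congr rfl (g := ε)]
      · simpa [hab.symm] using h2
      · intro x hx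
        rw [if_neg (by rintro rfl; exact ha hx), if_neg (by rintro rfl; exact hb hx)]
    · rw [Finset.sum_insert (by simp [ha, hab]), Finset.sum_insert hb, Finset.sum_congr rfl (g := fun v => ε v * f v)]
      · simp only [if_true, if_neg hab.symm]
        convert hle using 2
        ring
      · intro x hx
        dsimp only
        rw [if_neg (by rintro rfl; exact ha hx), if_neg (by rintro rfl; exact hb hx)]
  generalize ∑ v ∈ W, ε v * f v = S at *
  generalize f a - f b = x at *
  by_cases hs : 0 ≤ S * x
  · refine key (-1) (Or.inr rfl) ?_
    rcases mul_nonneg_iff.1 hs with ⟨h, h'⟩ | ⟨h, h'⟩ <;> grind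
  · refine key 1 (Or.inl rfl) ?_
    rcases mul_neg_iff.1 (not_le.1 hs) with ⟨h, h'⟩ | ⟨h, h'⟩ <;> grind

theorem Splits.mono {V : Type*} {W : Finset V} {f : V → ℤ} {M M' : ℤ} (h : Splits W f M) (hM : M ≤ M') :
    Splits W f M' := by
  obtain ⟨ε, h1, h2, h3⟩ := h
  exact ⟨ε, h1, h2, h3.trans hM⟩

theorem splits_of_bounded {V : Type*} [DecidableEq V] (f : V → ℤ) (M : ℤ) (W : Finset V)
    (hf : ∀ v ∈ W, 0 ≤ f v ∧ f v ≤ M) (hM : 0 ≤ M) : Splits W f M := by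
  induction W using Finset.strongInduction with
  | H W ih =>
  rcases W.eq_empty_or_nonempty with rfl | ⟨a, ha⟩
  · exact ⟨fun _ => 1, by simp, by simp, by simpa using hM⟩
  rcases (W.erase a).eq_empty_or_nonempty with h | ⟨b, hb⟩
  · have h2 : W = {a} := by rw [← Finset.insert_erase ha, h]; rfl
    subst h2
    refine ⟨fun _ => 1, by simp, by simp, ?_⟩
    have := hf a ha
    simp only [Finset.sum_singleton, one_mul, abs_le]
    omega
  · have hs : (W.erase a).erase b ⊂ W :=
      (Finset.erase_subset _ _).trans_ssubset (Finset.erase_ssubset ha)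
    have h1 := ih _ hs (fun v hv => hf v (hs.1 hv))
    have h2 := h1.insert_pair (a := a) (b := b) (by simp) (by simp) (Finset.ne_of_mem_erase hb).symm
    rw [Finset.insert_erase hb, Finset.insert_erase ha] at h2
    have h3 := hf a ha
    have h4 := hf b (Finset.mem_of_mem_erase hb)
    refine h2.mono ?_
    grind

/-- Each of the `k` pairs of an element of value `1` and one of value `2` lowers the imbalance by one. -/
theorem splits_of_pairs {V : Type*} [DecidableEq V] (f : V → ℤ) (M : ℤ) (k : ℕ) (W A B : Finset V)
    (hf : ∀ v ∈ W, 0 ≤ f v ∧ f v ≤ M) (hM : 0 ≤ M) (hA : A ⊆ W) (hB : B ⊆ W) (hA1 : ∀ v ∈ A, f v = 1)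
    (hB2 : ∀ v ∈ B, f v = 2) (hAk : k ≤ A.card) (hBk : k ≤ B.card) : Splits W f (max (M - k) 1) := by
  induction k generalizing W A B with
  | zero => exact (splits_of_bounded f M W hf hM).mono (by simp)
  | succ k ih =>
    obtain ⟨a, ha⟩ := Finset.card_pos.1 (show 0 < A.card by omega)
    obtain ⟨b, hb⟩ := Finset.card_pos.1 (show 0 < B.card by omega)
    have hab : a ≠ b := by
      rintro rfl
      have := hA1 a ha
      have := hB2 a hb
      omega
    have haB : a ∉ B := fun h => by
      have := hA1 a ha
      have := hB2 a h
      omega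
    have hbA : b ∉ A := fun h => by
      have := hA1 b h
      have := hB2 b hb
      omega
    have h1 := ih ((W.erase a).erase b) (A.erase a) (B.erase b)
      (fun v hv => hf v (Finset.mem_of_mem_erase (Finset.mem_of_mem_erase hv)))
      (fun x hx => by
        rw [Finset.mem_erase] at hx
        simp only [Finset.mem_erase]
        exact ⟨fun h => hbA (h ▸ hx.2), hx.1, hA hx.2⟩)
      (fun x hx => by
        rw [Finset.mem_erase] at hx
        simp only [Finset.mem_erase]
        exact ⟨hx.1, fun h => haB (h ▸ hx.2), hB hx.2⟩)
      (fun v hv => hA1 v (Finset.mem_of_mem_erase hv)) (fun v hv => hB2 v (Finset.mem_of_mem_erase hv))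
      (by rw [Finset.card_erase_of_mem ha]; omega) (by rw [Finset.card_erase_of_mem hb]; omega)
    have h2 := h1.insert_pair (a := a) (b := b) (by simp) (by simp) hab
    rw [Finset.insert_erase (Finset.mem_erase.2 ⟨hab.symm, hB hb⟩), Finset.insert_erase (hA ha),
      hA1 a ha, hB2 b hb] at h2
    refine h2.mono ?_
    push_cast
    grind

/-- The degree sum of a color class is twice its number of monochromatic edges plus the number of
bicolored edges, so the difference of degree sums is twice the difference of edge counts. -/
theorem isBalanced_of_splits {V : Type*} [Fintype V] [DecidableEq V] (G : SimpleGraph V) [DecidableRel G.Adj]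
    (h : Splits Finset.univ (fun v => (G.degree v : ℤ)) 2) : IsBalanced G := by
  obtain ⟨ε, h1, h2, h3⟩ := h
  let c : V → Fin 2 := fun v => if ε v = 1 then 0 else 1
  have c0 : ∀ v, c v = 0 ↔ ε v = 1 := fun v => by simp [c]
  have c1 : ∀ v, c v = 1 ↔ ε v = -1 := fun v => by
    rcases h1 v with h | h <;> simp [c, h]
  refine ⟨c, ?_, ?_⟩
  · have e0 : ({v | c v = 0} : Set V) = ((Finset.univ.filter fun v => c v = 0 : Finset V) : Set V) := by ext; simp
    have e1 : ({v | c v = 1} : Set V) = ((Finset.univ.filter fun v => c v = 1 : Finset V) : Set V) := by ext; simp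
    rw [e0, e1, Set.ncard_coe_finset, Set.ncard_coe_finset, Finset.card_filter, Finset.card_filter]
    push_cast
    rw [← Finset.sum_sub_distrib]
    convert h2 using 2
    refine Finset.sum_congr rfl fun v _ => ?_
    rcases h1 v with h | h <;> simp [c, h]
  · have e0 : ({e ∈ G.edgeSet | ∀ v ∈ e, c v = 0} : Set (Sym2 V)) =
        ((G.edgeFinset.filter fun e => ∀ v ∈ e, c v = 0 : Finset _) : Set _) := by ext; simp
    have e1 : ({e ∈ G.edgeSet | ∀ v ∈ e, c v = 1} : Set (Sym2 V)) =
        ((G.edgeFinset.filter fun e => ∀ v ∈ e, c v = 1 : Finset _) : Set _) := by ext; simp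
    rw [e0, e1, Set.ncard_coe_finset, Set.ncard_coe_finset, Finset.card_filter, Finset.card_filter]
    push_cast
    rw [← Finset.sum_sub_distrib]
    have key : ∑ v, ε v * (G.degree v : ℤ) = 2 * ∑ e ∈ G.edgeFinset,
        ((if ∀ v ∈ e, c v = 0 then (1 : ℤ) else 0) - if ∀ v ∈ e, c v = 1 then 1 else 0) := by
      have s1 : ∀ v, ε v * (G.degree v : ℤ) = ∑ e ∈ G.edgeFinset, if v ∈ e then ε v else 0 := by
        intro v
        rw [← Finset.sum_filter, Finset.sum_const, ← G.card_incidenceFinset_eq_degree, nsmul_eq_mul, mul_comm,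
          G.incidenceFinset_eq_filter]
      simp only [s1]
      rw [Finset.sum_comm, Finset.mul_sum]
      refine Finset.sum_congr rfl fun e he => ?_
      induction e with
      | h a b =>
      have hab : a ≠ b := by
        rw [mem_edgeFinset, mem_edgeSet] at he
        exact he.ne
      have : ∑ v, (if v ∈ s(a, b) then ε v else 0) = ε a + ε b := by
        rw [← Finset.sum_filter, ← Finset.sum_pair hab]
        congr 1
        ext; simp
      rw [this]
      simp only [Sym2.mem_iff, forall_eq_or_imp, forall_eq, c0, c1]
      rcases h1 a with h | h <;> rcases h1 b with h' | h' <;> simp [h, h']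
    rw [key] at h3
    have : ∀ x : ℤ, |2 * x| ≤ 2 → |x| ≤ 1 := fun x hx => by
      rw [abs_le] at hx ⊢
      omega
    exact this _ h3

theorem isBalanced_of_degrees {V : Type*} [Fintype V] [DecidableEq V] (G : SimpleGraph V) [DecidableRel G.Adj] (D : ℕ)
    (hD : ∀ v, G.degree v ≤ D) (h1 : D ≤ (Finset.univ.filter fun v => G.degree v = 1).card)
    (h2 : D ≤ (Finset.univ.filter fun v => G.degree v = 2).card) : IsBalanced G := by
  refine isBalanced_of_splits G ((splits_of_pairs _ (D : ℤ) D Finset.univ _ _ ?_ (by omega) (Finset.subset_univ _)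
    (Finset.subset_univ _) ?_ ?_ h1 h2).mono (by simp))
  · intro v _
    have := hD v
    omega
  · simp
  · intro v hv
    simp only [Finset.mem_filter] at hv
    exact_mod_cast hv.2

/-- In a tree the sum of `degree v - 2` is `-2`, so every vertex of degree `d` forces `d` leaves. -/
theorem IsTree.degree_le_leaves {V : Type*} [Fintype V] [DecidableEq V] [Nontrivial V] (G : SimpleGraph V) [DecidableRel G.Adj] (hG : G.IsTree)
    (x : V) : G.degree x ≤ (Finset.univ.filter fun v => G.degree v = 1).card := by
  have h1 := G.sum_degrees_eq_twice_card_edges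
  have h2 := hG.card_edgeFinset
  have hpos : ∀ v, 0 < G.degree v := fun v => hG.connected.preconnected.degree_pos_of_nontrivial v
  have h3 : ∑ v, (G.degree v : ℤ) = 2 * Fintype.card V - 2 := by
    rw [← h2]; push_cast; rw [← Nat.cast_sum, h1]; push_cast; ring
  have h4 : ∑ v, ((if G.degree v = 1 then (1 : ℤ) else 0) + (G.degree v - 2)) ≥ G.degree x - 2 := by
    have : (if G.degree x = 1 then (1 : ℤ) else 0) + (G.degree x - 2) ≥ G.degree x - 2 := by split_ifs <;> omega
    refine this.le.trans (Finset.single_le_sum (f := fun v => (if G.degree v = 1 then (1 : ℤ) else 0) + (G.degree v - 2)) (fun v _ => ?_) (Finset.mem_univ x))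
    have := hpos v
    split_ifs <;> omega
  rw [Finset.sum_add_distrib, Finset.sum_sub_distrib, h3] at h4
  simp at h4
  omega

/-! ### Graphs realizing rooted trees -/

/-- A realization of the rooted tree `t` on the vertex set `V` with root `r`, given by a parent map, the
depth function and the map `s` sending a vertex to the isomorphism type of the subtree below it. The
value `par r` is irrelevant. -/
structure Model (V : Type) [Fintype V] [DecidableEq V] (r : V) (t : RT) where
  par : V → V
  depth : V → ℕ
  s : V → RT
  depth_root : depth r = 0
  depth_par : ∀ x, x ≠ r → depth x = depth (par x) + 1
  s_eq : ∀ x, s x = mk ((Finset.univ.filter fun y => y ≠ r ∧ par y = x).val.map s)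
  s_root : s r = t

namespace Model

variable {V : Type} [Fintype V] [DecidableEq V] {r : V} {t : RT} (M : Model V r t)

/-- The children of a vertex. -/
def kids (x : V) : Finset V := Finset.univ.filter fun y => y ≠ r ∧ M.par y = x

theorem mem_kids {x y : V} : y ∈ M.kids x ↔ y ≠ r ∧ M.par y = x := by simp [kids]

theorem ch_s (x : V) : ch (M.s x) = (M.kids x).val.map M.s := by
  rw [M.s_eq x, ch_mk]; rfl

/-- The underlying graph: every vertex other than the root is joined to its parent. -/
def graph : SimpleGraph V where
  Adj x y := (x ≠ r ∧ M.par x = y) ∨ (y ≠ r ∧ M.par y = x)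
  symm := ⟨fun _ _ h => h.symm⟩
  loopless := ⟨fun x h => by
    have h' : x ≠ r ∧ M.par x = x := by tauto
    have := M.depth_par x h'.1
    rw [h'.2] at this
    omega⟩

instance : DecidableRel M.graph.Adj := fun x y =>
  inferInstanceAs (Decidable ((x ≠ r ∧ M.par x = y) ∨ (y ≠ r ∧ M.par y = x)))

theorem graph_adj {x y : V} : M.graph.Adj x y ↔ (x ≠ r ∧ M.par x = y) ∨ (y ≠ r ∧ M.par y = x) := Iff.rfl

/-- The subtrees below the vertices of a model are those of `t`: sum over all vertices the identity
`sub (s x) = {s x} + ∑ sub (s y)`, `y` ranging over the children of `x`, and cancel. -/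
theorem map_s : Finset.univ.val.map M.s = sub t := by
  have h1 : ∀ x, sub (M.s x) = {M.s x} + ∑ y ∈ M.kids x, sub (M.s y) := by
    intro x
    conv_lhs => rw [← mk_ch (M.s x), sub_mk, mk_ch, M.ch_s x, Multiset.bind_map]
    rfl
  have h2 : ∑ x, sub (M.s x) = ∑ x, {M.s x} + ∑ x, ∑ y ∈ M.kids x, sub (M.s y) := by
    rw [← Finset.sum_add_distrib]
    exact Finset.sum_congr rfl fun x _ => h1 x
  have h3 : ∑ x, ∑ y ∈ M.kids x, sub (M.s y) = ∑ y ∈ Finset.univ.erase r, sub (M.s y) := by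
    rw [← Finset.sum_fiberwise (Finset.univ.erase r) M.par]
    refine Finset.sum_congr rfl fun x _ => Finset.sum_congr ?_ fun _ _ => rfl
    ext y
    simp [mem_kids]
  rw [h3, ← Finset.add_sum_erase _ _ (Finset.mem_univ r)] at h2
  have h4 := add_right_cancel h2
  rw [M.s_root] at h4
  rw [h4, ← Multiset.sum_map_singleton (Multiset.map M.s _), Multiset.map_map]
  rfl

theorem card_eq (M : Model V r t) : Fintype.card V = size t := by
  have := congrArg Multiset.card M.map_s
  simpa [size] using this

theorem reachable (x : V) : M.graph.Reachable x r := by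
  induction h : M.depth x using Nat.strong_induction_on generalizing x with
  | _ k ih =>
  by_cases hx : x = r
  · rw [hx]
  · have h1 := M.depth_par x hx
    exact (Adj.reachable (M.graph_adj.2 (Or.inl ⟨hx, rfl⟩))).trans (ih _ (by omega) _ rfl)

theorem edge_injOn : Set.InjOn (fun y => s(y, M.par y)) {y | y ≠ r} := by
  intro y hy z hz h
  simp only [Sym2.eq_iff] at h
  rcases h with h | ⟨h, h'⟩
  · exact h.1
  · have h1 := M.depth_par y hy
    have h2 := M.depth_par z hz
    rw [h'] at h1
    rw [← h] at h2
    omega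

theorem isTree : M.graph.IsTree := by
  rw [isTree_iff_connected_and_card]
  have : Nonempty V := ⟨r⟩
  refine ⟨⟨fun x y => (M.reachable x).trans (M.reachable y).symm⟩, ?_⟩
  have h : M.graph.edgeSet = (fun y => s(y, M.par y)) '' {y | y ≠ r} := by
    ext e
    induction e with
    | h a b =>
    simp only [mem_edgeSet, graph_adj, Set.mem_image, Set.mem_ofPred_eq, Sym2.eq_iff]
    constructor
    · rintro (⟨h, rfl⟩ | ⟨h, rfl⟩)
      · exact ⟨a, h, by simp⟩
      · exact ⟨b, h, by simp⟩
    · rintro ⟨y, h, ⟨rfl, rfl⟩ | ⟨rfl, rfl⟩⟩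
      · exact Or.inl ⟨h, rfl⟩
      · exact Or.inr ⟨h, rfl⟩
  rw [h, Nat.card_image_of_injOn M.edge_injOn, Nat.card_eq_fintype_card, Nat.card_eq_fintype_card]
  have h2 : Fintype.card {y | y ≠ r} = (Finset.univ.erase r).card := by
    rw [Fintype.card_ofFinset]; congr 1; ext; simp
  rw [h2, Finset.card_erase_of_mem (Finset.mem_univ r), Finset.card_univ]
  have := Fintype.card_pos (α := V)
  omega

theorem degree_eq (x : V) : M.graph.degree x = (ch (M.s x)).card + if x = r then 0 else 1 := by
  have h1 : M.graph.neighborFinset x = M.kids x ∪ if x = r then ∅ else {M.par x} := by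
    ext y
    rw [mem_neighborFinset, graph_adj, Finset.mem_union, mem_kids]
    split_ifs with h
    · simp [h]
    · simp [h, or_comm, eq_comm]
  have h2 : Disjoint (M.kids x) (if x = r then ∅ else {M.par x}) := by
    split_ifs with h
    · simp
    · rw [Finset.disjoint_singleton_right, mem_kids]
      rintro ⟨h3, h4⟩
      have h5 := M.depth_par _ h3
      have h6 := M.depth_par _ h
      rw [h4] at h5
      omega
  rw [← card_neighborFinset_eq_degree, h1, Finset.card_union_of_disjoint h2, ch_s]
  split_ifs <;> simp

/-- Graph isomorphisms matching the roots preserve the parent map, by induction on the depth, and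
therefore the isomorphism types of the subtrees. -/
theorem eq_of_iso {V' : Type} [Fintype V'] [DecidableEq V'] {r' : V'} {t' : RT} (M' : Model V' r' t')
    (φ : M.graph ≃g M'.graph) (hr : φ r = r') : t = t' := by
  have hne : ∀ x, x ≠ r → φ x ≠ r' := fun x hx h => hx (φ.injective (h.trans hr.symm))
  have hpar : ∀ k, ∀ x, M.depth x = k → x ≠ r → M'.par (φ x) = φ (M.par x) := by
    intro k
    induction k using Nat.strong_induction_on with
    | _ k ih =>
    intro x hk hx
    have h1 := M.depth_par x hx
    have h2 : M'.graph.Adj (φ x) (φ (M.par x)) := φ.map_adj_iff.2 (M.graph_adj.2 (Or.inl ⟨hx, rfl⟩))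
    rcases M'.graph_adj.1 h2 with h | h
    · exact h.2
    · have h3 : M.par x ≠ r := fun h' => h.1 (by rw [h', hr])
      have h4 := ih _ (by omega) (M.par x) rfl h3
      rw [h.2] at h4
      have h5 := φ.injective h4
      have h6 := M.depth_par _ h3
      rw [← h5] at h6
      omega
  have hkids : ∀ x, (M'.kids (φ x)).val = (M.kids x).val.map φ := by
    intro x
    have : M'.kids (φ x) = (M.kids x).map φ.toEquiv.toEmbedding := by
      ext y
      obtain ⟨z, rfl⟩ := φ.surjective y
      simp only [mem_kids, Finset.mem_map]
      constructor
      · rintro ⟨h, h'⟩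
        have hz : z ≠ r := fun h' => h (by rw [h', hr])
        rw [hpar _ z rfl hz] at h'
        exact ⟨z, ⟨hz, φ.injective h'⟩, rfl⟩
      · rintro ⟨a, ⟨h, h'⟩, h''⟩
        have h3 : a = z := φ.injective h''
        subst h3
        exact ⟨hne _ h, by rw [hpar _ a rfl h, h']⟩
    rw [this]; rfl
  have hs : ∀ u : RT, ∀ x, M.s x = u → M'.s (φ x) = M.s x := by
    intro u
    induction u using wf.induction with
    | _ u ih =>
    intro x hx
    rw [← mk_ch (M'.s (φ x)), ← mk_ch (M.s x), ch_s, ch_s, hkids, Multiset.map_map]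
    congr 1
    refine Multiset.map_congr rfl fun y hy => ?_
    refine ih (M.s y) ?_ y rfl
    rw [← hx, ch_s]
    exact Multiset.mem_map_of_mem _ hy
  rw [← M.s_root, ← M'.s_root, ← hs _ r rfl, hr]

/-- Families with equal multisets of values are matched by an injection. -/
theorem exists_match {α β γ : Type} [DecidableEq α] [DecidableEq β] [Nonempty β] (f : α → γ) (g : β → γ) (A : Finset α) (B : Finset β)
    (h : A.val.map f = B.val.map g) :
    ∃ σ : α → β, (∀ a ∈ A, σ a ∈ B ∧ g (σ a) = f a) ∧ Set.InjOn σ A := by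
  induction A using Finset.induction generalizing B with
  | empty => exact ⟨fun _ => Classical.arbitrary β, by simp, by simp⟩
  | insert a A ha ih =>
    rw [Finset.insert_val_of_notMem ha, Multiset.map_cons] at h
    have h1 : f a ∈ B.val.map g := by rw [← h]; simp
    obtain ⟨b, hb, hba⟩ := Multiset.mem_map.1 h1
    rw [← Multiset.cons_erase hb, Multiset.map_cons, hba, Multiset.cons_inj_right, ← Finset.erase_val] at h
    obtain ⟨σ, h2, h3⟩ := ih _ h
    refine ⟨Function.update σ a b, ?_, ?_⟩
    · intro x hx
      by_cases hxa : x = a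
      · subst hxa; simpa using ⟨hb, hba⟩
      · rw [Function.update_of_ne hxa]
        have := h2 x (Finset.mem_of_mem_insert_of_ne hx hxa)
        exact ⟨Finset.mem_of_mem_erase this.1, this.2⟩
    · intro x hx y hy hxy
      rw [Finset.mem_coe, Finset.mem_insert] at hx hy
      have hne : ∀ z ∈ A, σ z ≠ b := fun z hz => Finset.ne_of_mem_erase (h2 z hz).1
      have hza : ∀ z ∈ A, z ≠ a := fun z hz h => ha (h ▸ hz)
      rcases hx with rfl | hx <;> rcases hy with rfl | hy
      · rfl
      · rw [Function.update_self, Function.update_of_ne (hza y hy)] at hxy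
        exact absurd hxy.symm (hne y hy)
      · rw [Function.update_self, Function.update_of_ne (hza x hx)] at hxy
        exact absurd hxy (hne x hx)
      · rw [Function.update_of_ne (hza x hx), Function.update_of_ne (hza y hy)] at hxy
        exact h3 hx hy hxy

/-- Starting from the root, choose matchings between children with equal subtree types. -/
theorem exists_iso {V' : Type} [Fintype V'] [DecidableEq V'] {r' : V'} (M' : Model V' r' t) :
    Nonempty (M.graph ≃g M'.graph) := by
  have : Nonempty V' := ⟨r'⟩
  have h : ∀ x x', M.s x = M'.s x' → ∃ σ : V → V', (∀ a ∈ M.kids x, σ a ∈ M'.kids x' ∧ M'.s (σ a) = M.s a)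
      ∧ Set.InjOn σ (M.kids x) := fun x x' h =>
    exists_match _ _ _ _ (by rw [← ch_s, ← ch_s, h])
  choose! σ hσ hinj using h
  obtain ⟨φ, hφr, hφ⟩ : ∃ φ : V → V', φ r = r' ∧ ∀ x, x ≠ r → φ x = σ (M.par x) (φ (M.par x)) x := by
    have wfd : WellFounded (fun x y : V => M.depth x < M.depth y) := (measure M.depth).wf
    let φ : V → V' := wfd.fix fun x ih => if h : x = r then r' else
      σ (M.par x) (ih (M.par x) (by have := M.depth_par x h; omega)) x
    refine ⟨φ, ?_, ?_⟩
    · simp only [φ]; rw [wfd.fix_eq]; simp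
    · intro x hx
      simp only [φ]; rw [wfd.fix_eq]; simp [hx]
  have hs : ∀ k x, M.depth x = k → M'.s (φ x) = M.s x := by
    intro k
    induction k using Nat.strong_induction_on with
    | _ k ih =>
    intro x hk
    by_cases hx : x = r
    · rw [hx, hφr, M.s_root, M'.s_root]
    · have h1 := M.depth_par x hx
      rw [hφ x hx]
      exact (hσ _ _ (ih _ (by omega) _ rfl).symm x (M.mem_kids.2 ⟨hx, rfl⟩)).2
  have hk : ∀ x, x ≠ r → φ x ≠ r' ∧ M'.par (φ x) = φ (M.par x) := by
    intro x hx
    have := (hσ _ _ (hs _ (M.par x) rfl).symm x (M.mem_kids.2 ⟨hx, rfl⟩)).1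
    rwa [← hφ x hx, M'.mem_kids] at this
  have hφi : ∀ k x y, M.depth x = k → φ x = φ y → x = y := by
    intro k
    induction k using Nat.strong_induction_on with
    | _ k ih =>
    intro x y hxk hxy
    by_cases hx : x = r
    · by_contra hne
      have : y ≠ r := fun h => hne (by rw [hx, h])
      exact (hk y this).1 (by rw [← hxy, hx, hφr])
    · by_cases hy : y = r
      · exact absurd (by rw [hxy, hy, hφr]) (hk x hx).1
      · have h1 := M.depth_par x hx
        have h2 : φ (M.par x) = φ (M.par y) := by rw [← (hk x hx).2, ← (hk y hy).2, hxy]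
        have h3 := ih _ (by omega) _ _ rfl h2
        refine hinj _ _ (hs _ (M.par x) rfl).symm (M.mem_kids.2 ⟨hx, rfl⟩) (M.mem_kids.2 ⟨hy, h3.symm⟩) ?_
        rw [← hφ x hx, hxy, hφ y hy, h3]
  have hi : Function.Injective φ := fun x y => hφi _ x y rfl
  have hb : Function.Bijective φ := by
    rw [Fintype.bijective_iff_injective_and_card]
    exact ⟨hi, by rw [M.card_eq, M'.card_eq]⟩
  refine ⟨⟨Equiv.ofBijective φ hb, ?_⟩⟩
  intro a b
  have key : ∀ a b, (φ a ≠ r' ∧ M'.par (φ a) = φ b) ↔ (a ≠ r ∧ M.par a = b) := by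
    intro a b
    constructor
    · rintro ⟨h1, h2⟩
      have ha : a ≠ r := fun h => h1 (by rw [h, hφr])
      rw [(hk a ha).2] at h2
      exact ⟨ha, hi h2⟩
    · rintro ⟨h1, rfl⟩
      exact hk a h1
  simp only [Equiv.ofBijective_apply, graph_adj, key]

theorem graph_eq_of_adj {G : SimpleGraph V} (hG : G.IsTree) (h : ∀ x, x ≠ r → G.Adj x (M.par x)) :
    M.graph = G := by
  classical
  have hle : M.graph ≤ G := by
    intro x y hxy
    rcases M.graph_adj.1 hxy with ⟨h1, h2⟩ | ⟨h1, h2⟩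
    · rw [← h2]; exact h x h1
    · rw [← h2]; exact (h y h1).symm
  have h5 : M.graph.edgeFinset.card + 1 = Fintype.card V := M.isTree.card_edgeFinset
  have h6 : G.edgeFinset.card + 1 = Fintype.card V := hG.card_edgeFinset
  have h7 : M.graph.edgeFinset = G.edgeFinset :=
    Finset.eq_of_subset_of_card_le (edgeFinset_mono hle) (by omega)
  exact edgeFinset_inj.1 h7

end Model

/-- Every rooted tree is realized: glue a model of the branch `a` to the root of a model of `mk F`. -/
theorem exists_model (t : RT) : ∃ (V : Type) (_ : Fintype V) (_ : DecidableEq V) (r : V), Nonempty (Model V r t) := by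
  induction t using ind with
  | h F ih =>
  induction F using Multiset.induction with
  | empty =>
    refine ⟨Unit, inferInstance, inferInstance, (), ⟨⟨id, fun _ => 0, fun _ => mk 0, rfl, ?_, ?_, rfl⟩⟩⟩
    · intro x hx; exact absurd rfl hx
    · intro x
      rw [Finset.filter_false_of_mem]
      · rfl
      · simp
  | cons a F ihF =>
    obtain ⟨V, _, _, r, ⟨M⟩⟩ := ihF fun x hx => ih x (Multiset.mem_cons_of_mem hx)
    obtain ⟨V', _, _, r', ⟨M'⟩⟩ := ih a (by simp)
    refine ⟨V ⊕ V', inferInstance, inferInstance, Sum.inl r,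
      ⟨⟨Sum.elim (fun x => Sum.inl (M.par x)) (fun x => if x = r' then Sum.inl r else Sum.inr (M'.par x)),
        Sum.elim M.depth (fun x => M'.depth x + 1),
        Sum.elim (fun x => if x = r then mk (a ::ₘ F) else M.s x) M'.s, ?_, ?_, ?_, ?_⟩⟩⟩
    · simp [M.depth_root]
    · rintro (x | x) hx
      · have : x ≠ r := fun h => hx (by rw [h])
        simp [M.depth_par x this]
      · by_cases h : x = r'
        · simp [h, M.depth_root, M'.depth_root]
        · simp [h, M'.depth_par x h]
    · rintro (x | x)
      · have hF := M.ch_s r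
        rw [M.s_root, ch_mk] at hF
        have hk : ∀ x, ((M.kids x).val.map fun y => if y = r then mk (a ::ₘ F) else M.s y) = (M.kids x).val.map M.s := by
          intro x
          refine Multiset.map_congr rfl fun y hy => ?_
          rw [if_neg (M.mem_kids.1 hy).1]
        by_cases h : x = r
        · have hf : (Finset.univ.filter fun y : V ⊕ V' => y ≠ Sum.inl r ∧
              Sum.elim (fun x => Sum.inl (M.par x)) (fun x => if x = r' then Sum.inl r else Sum.inr (M'.par x)) y = Sum.inl x) =
              (M.kids x).disjSum {r'} := by
            ext (y | y)
            · simp [Model.mem_kids]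
            · by_cases hy : y = r' <;> simp [hy, h]
          rw [hf, Finset.val_disjSum, Multiset.disjSum, Multiset.map_add, Multiset.map_map, Multiset.map_map]
          simp only [Function.comp_def, Sum.elim_inl, Sum.elim_inr, hk]
          subst h
          simp [← hF, M'.s_root, mk_inj]
          rw [add_comm, Multiset.singleton_add]
        · have hf : (Finset.univ.filter fun y : V ⊕ V' => y ≠ Sum.inl r ∧
              Sum.elim (fun x => Sum.inl (M.par x)) (fun x => if x = r' then Sum.inl r else Sum.inr (M'.par x)) y = Sum.inl x) =
              (M.kids x).disjSum ∅ := by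
            ext (y | y)
            · simp [Model.mem_kids]
            · by_cases hy : y = r' <;> simp [hy, Ne.symm h]
          rw [hf, Finset.val_disjSum, Multiset.disjSum, Multiset.map_add, Multiset.map_map, Multiset.map_map]
          simp only [Function.comp_def, Sum.elim_inl, Sum.elim_inr, hk]
          rw [if_neg h, ← M.ch_s]
          simp
      · have hf : (Finset.univ.filter fun y : V ⊕ V' => y ≠ Sum.inl r ∧
              Sum.elim (fun x => Sum.inl (M.par x)) (fun x => if x = r' then Sum.inl r else Sum.inr (M'.par x)) y = Sum.inr x) =
              (∅ : Finset V).disjSum (M'.kids x) := by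
            ext (y | y)
            · simp
            · by_cases hy : y = r' <;> simp [hy, Model.mem_kids]
        rw [hf, Finset.val_disjSum, Multiset.disjSum, Multiset.map_add, Multiset.map_map, Multiset.map_map]
        simp only [Function.comp_def, Sum.elim_inl, Sum.elim_inr]
        rw [← M'.ch_s]
        simp
    · simp

/-- Every tree graph with a chosen vertex comes from a rooted tree; the parent of a vertex is a neighbor
closer to the root. -/
theorem exists_model_of_isTree {V : Type} [Fintype V] [DecidableEq V] (G : SimpleGraph V) (hG : G.IsTree) (r : V) :
    ∃ (t : RT) (M : Model V r t), M.graph = G := by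
  classical
  have h1 : ∀ x, x ≠ r → ∃ y, G.Adj x y ∧ G.dist x r = G.dist y r + 1 := by
    intro x hx
    obtain ⟨p, hp⟩ := hG.connected.exists_walk_length_eq_dist x r
    cases p with
    | nil => exact absurd rfl hx
    | @cons _ y _ h q =>
      refine ⟨y, h, ?_⟩
      have h2 := SimpleGraph.dist_le q
      have h3 := hG.connected.dist_triangle (u := x) (v := y) (w := r)
      have h4 : G.dist x y = 1 := SimpleGraph.dist_eq_one_iff_adj.2 h
      rw [Walk.length_cons] at hp
      omega
  have : Nonempty V := ⟨r⟩
  choose! par hadj hdist using h1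
  -- The subtree types are computed by recursion on the height still available below a vertex.
  let kids : V → Finset V := fun x => Finset.univ.filter fun y => y ≠ r ∧ par y = x
  let sf : ℕ → V → RT := fun k => Nat.rec (fun _ => mk 0) (fun _ f x => mk ((kids x).val.map f)) k
  have sf_succ : ∀ k x, sf (k + 1) x = mk ((kids x).val.map (sf k)) := fun _ _ => rfl
  let N := Finset.univ.sup (fun x => G.dist x r) + 1
  have hN : ∀ x, G.dist x r < N := fun x => Nat.lt_succ_of_le (Finset.le_sup (f := fun x => G.dist x r) (Finset.mem_univ x))
  let s : V → RT := fun x => sf (N - G.dist x r) x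
  refine ⟨s r, ⟨par, fun x => G.dist x r, s, by simp, hdist, ?_, rfl⟩, ?_⟩
  · intro x
    have h2 := hN x
    obtain ⟨k, hk⟩ : ∃ k, N - G.dist x r = k + 1 := ⟨N - G.dist x r - 1, by omega⟩
    simp only [s]
    rw [hk, sf_succ]
    congr 1
    refine Multiset.map_congr rfl fun y hy => ?_
    have hy' : y ≠ r ∧ par y = x := by simpa [kids] using hy
    have h3 := hdist y hy'.1
    rw [hy'.2] at h3
    rw [show N - G.dist y r = k by omega]
  · exact Model.graph_eq_of_adj _ hG fun x hx => hadj x hx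

/-! ### From rooted trees to isomorphism classes of trees -/

/-- Sparseness and the absence of wide vertices bound the maximal degree by `m * L + 1`; all but at most
one of the one-child vertices have degree two. -/
theorem Model.isBalanced {V : Type} [Fintype V] [DecidableEq V] {r : V} {t : RT} (M : Model V r t)
    {L m : ℕ} (h2 : 2 ≤ size t) (hS : Sparse L t)
    (hW : ∀ C F, t = plug C (UT.mk F) → F.toFinset.card ≤ m) (hu : m * L + 2 ≤ u t) :
    IsBalanced M.graph := by
  have : Nontrivial V := by
    rw [← Fintype.one_lt_card_iff_nontrivial, M.card_eq]; omega
  obtain ⟨x₀, -, hx₀⟩ := Finset.exists_mem_eq_sup Finset.univ ⟨r, Finset.mem_univ r⟩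
    (fun v => M.graph.degree v)
  refine isBalanced_of_degrees M.graph (M.graph.degree x₀) (fun v => ?_)
    (IsTree.degree_le_leaves _ M.isTree x₀) ?_
  · rw [← hx₀]
    exact Finset.le_sup (f := fun v => M.graph.degree v) (Finset.mem_univ v)
  · have h3 : M.s x₀ ∈ sub t := by
      rw [← M.map_s]; exact Multiset.mem_map_of_mem _ (Finset.mem_univ x₀)
    obtain ⟨⟨C, S⟩, h4, h5⟩ := Multiset.mem_map.1 h3
    rw [mem_dec, show S = M.s x₀ from h5, ← mk_ch (M.s x₀)] at h4
    have h6 := hW _ _ h4.symm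
    have h7 : (ch (M.s x₀)).card ≤ (ch (M.s x₀)).toFinset.card * L :=
      Sparse.card_le (C := C) (by rw [h4]; exact hS)
    have h8 : (ch (M.s x₀)).toFinset.card * L ≤ m * L := Nat.mul_le_mul_right _ h6
    have h9 : M.graph.degree x₀ ≤ m * L + 1 := by
      rw [M.degree_eq]; split_ifs <;> omega
    have h10 : u t ≤ (insert r (Finset.univ.filter fun v => M.graph.degree v = 2)).card := by
      rw [u, ← M.map_s, Multiset.countP_map, ← Finset.filter_val]
      refine Finset.card_le_card fun v hv => ?_
      rw [Finset.mem_insert, Finset.mem_filter]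
      by_cases hr : v = r
      · exact Or.inl hr
      · right
        refine ⟨Finset.mem_univ v, ?_⟩
        rw [M.degree_eq, if_neg hr, (Finset.mem_filter.1 hv).2]
    have h11 := Finset.card_insert_le r (Finset.univ.filter fun v => M.graph.degree v = 2)
    omega

/-- A rooted tree is determined by its underlying tree and the position of the root. -/
theorem r_le_mul_card (n : ℕ) :
    UT.r n ≤ n * Nat.card (Quotient (isoSetoid n (fun G => G.IsTree))) := by
  have h : ∀ t : R n, ∃ p : Fin n × Quotient (isoSetoid n (fun G => G.IsTree)),
      ∃ (V : Type) (_ : Fintype V) (_ : DecidableEq V) (r : V) (M : Model V r t.1)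
        (φ : M.graph ≃g p.2.out.1), φ r = p.1 := by
    rintro ⟨t, ht⟩
    obtain ⟨V, _, _, r, ⟨M⟩⟩ := exists_model t
    have hc : Fintype.card V = n := by rw [M.card_eq]; exact (mem_R n t).1 ht
    let φ := M.graph.overFinIso hc
    let q : Quotient (isoSetoid n (fun G => G.IsTree)) :=
      Quotient.mk _ ⟨M.graph.overFin hc, φ.isTree_iff.1 M.isTree⟩
    obtain ⟨ψ⟩ : Nonempty (M.graph.overFin hc ≃g q.out.1) :=
      (Quotient.exact (Quotient.out_eq q).symm :)
    exact ⟨(ψ (φ r), q), V, _, _, r, M, φ.trans ψ, rfl⟩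
  choose f hf using h
  have hinj : Function.Injective f := by
    rintro t t' htt
    obtain ⟨V, _, _, r, M, φ, hφ⟩ := hf t
    have h' := hf t'
    rw [← htt] at h'
    obtain ⟨V', _, _, r', M', φ', hφ'⟩ := h'
    refine Subtype.ext (M.eq_of_iso M' (φ.trans φ'.symm) ?_)
    show φ'.symm (φ r) = r'
    rw [hφ, ← hφ']
    exact φ'.symm_apply_apply r'
  have := Nat.card_le_card_of_injective f hinj
  rw [Nat.card_prod, Nat.card_eq_fintype_card, Fintype.card_coe, Nat.card_fin] at this
  exact this

theorem card_balanced_le (n : ℕ) :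
    Nat.card (Quotient (isoSetoid n (fun G => G.IsTree ∧ IsBalanced G))) ≤
      Nat.card (Quotient (isoSetoid n (fun G => G.IsTree))) := by
  refine Nat.card_le_card_of_injective
    (Quotient.map' (fun G => ⟨G.1, G.2.1⟩) fun _ _ h => h) fun p q => ?_
  refine Quotient.inductionOn₂' p q fun G G' h => Quotient.sound' ?_
  exact (Quotient.exact' h :)

/-- Each isomorphism class of unbalanced trees, rooted arbitrarily, gives a rooted tree in one of the
three exceptional families. -/
theorem card_le_balanced_add {n L m : ℕ} (hn : 2 ≤ n) :
    Nat.card (Quotient (isoSetoid n (fun G => G.IsTree))) ≤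
      Nat.card (Quotient (isoSetoid n (fun G => G.IsTree ∧ IsBalanced G))) +
      ((Bad L n).card + (Wide m n).card + (Few (m * L + 1) n).card) := by
  classical
  have : NeZero n := ⟨by omega⟩
  have h : ∀ q : Quotient (isoSetoid n (fun G => G.IsTree)),
      ∃ (t : RT) (M : Model (Fin n) 0 t), M.graph = q.out.1 := fun q =>
    exists_model_of_isTree _ q.out.2 0
  choose t M hM using h
  let U : Finset RT := Bad L n ∪ Wide m n ∪ Few (m * L + 1) n
  have hU : ∀ q, ¬ IsBalanced q.out.1 → t q ∈ U := by
    intro q hq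
    by_contra hcon
    have hs : size (t q) = n := by rw [← (M q).card_eq, Fintype.card_fin]
    simp only [U, Finset.mem_union, not_or, mem_Bad, mem_Wide, mem_Few, hs, true_and, not_not,
      not_exists, not_and, not_le] at hcon
    obtain ⟨⟨h1, h2⟩, h3⟩ := hcon
    refine hq ?_
    rw [← hM q]
    exact (M q).isBalanced (by omega) h1 (fun C F h => (h2 C F h).le) (by omega)
  let f : Quotient (isoSetoid n (fun G => G.IsTree)) →
      Quotient (isoSetoid n (fun G => G.IsTree ∧ IsBalanced G)) ⊕ U := fun q =>
    if hq : IsBalanced q.out.1 then Sum.inl (Quotient.mk _ ⟨q.out.1, q.out.2, hq⟩)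
    else Sum.inr ⟨t q, hU q hq⟩
  have hf : Function.Injective f := by
    intro p q hpq
    have key : Nonempty (p.out.1 ≃g q.out.1) → p = q := fun h => by
      rw [← Quotient.out_eq p, ← Quotient.out_eq q]
      exact Quotient.sound h
    apply key
    by_cases hp : IsBalanced p.out.1 <;> by_cases hq : IsBalanced q.out.1 <;>
      simp only [f, hp, hq, dif_pos, dif_neg, not_false_eq_true, Sum.inl.injEq, Sum.inr.injEq,
        reduceCtorEq, Subtype.mk.injEq] at hpq
    · exact (Quotient.exact hpq :)
    · rw [← hM p, ← hM q]
      have h' : ∀ t', t' = t q → ∀ M' : Model (Fin n) 0 t', Nonempty (M'.graph ≃g (M q).graph) := by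
        rintro _ rfl M'
        exact M'.exists_iso _
      exact h' _ hpq _
  have h1 := Nat.card_le_card_of_injective f hf
  rw [Nat.card_sum, Nat.card_eq_fintype_card (α := U), Fintype.card_coe] at h1
  have h2 := Finset.card_union_le (Bad L n ∪ Wide m n) (Few (m * L + 1) n)
  have h3 := Finset.card_union_le (Bad L n) (Wide m n)
  simp only [U] at h1
  omega

/-! ### Asymptotics -/

/-- The least `ℓ` such that `n < 2 ^ ℓ`, for `n ≠ 0`. -/
def lg (n : ℕ) : ℕ := Nat.log 2 n + 1

/-- The three exceptional families have together at most `10 * K ^ 2 / n ^ 2 * r n` members. The switching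
inequality is applied twice since a single application only yields a saving of order `K / n`, which
the factor `n` from the choice of the root would consume. -/
theorem exceptional_bound {n : ℕ} (hn : 1 ≤ n) {m L q K : ℕ} (hm : n ^ 10 ≤ 2 ^ m) (hL : L = 2 * m + 1)
    (hK : K = 2 * L ^ 3 * (q + 4)) (hnK : 2 * K ≤ n) :
    (((Bad L n).card + (Wide m n).card + (Few q n).card : ℕ) : ℝ) * n ≤ 10 * (K : ℝ) ^ 2 / n * UT.r n := by
  have hL1 : 1 ≤ L := by omega
  have hqK : q + 4 ≤ K := by
    rw [hK]; exact Nat.le_mul_of_pos_left _ (by positivity)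
  have hB : (Bad L n).card * n ^ 6 ≤ UT.r n := by
    have h1 : (Bad L n).card * n ^ 10 ≤ n ^ 4 * UT.r n := calc
      _ ≤ (Bad L n).card * UT.r L := by
        refine Nat.mul_le_mul_left _ (hm.trans ?_)
        rw [hL]; exact two_pow_le_r m
      _ ≤ _ := card_bad_le L n
    refine le_of_mul_le_mul_left (a := n ^ 4) ?_ (by positivity)
    calc _ = (Bad L n).card * n ^ 10 := by ring
      _ ≤ _ := h1
  have hW : (Wide m n).card * n ^ 8 ≤ 2 * UT.r n := by
    refine le_of_mul_le_mul_left (a := n ^ 2) ?_ (by positivity)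
    calc _ = (Wide m n).card * n ^ 10 := by ring
      _ ≤ (Wide m n).card * 2 ^ m := Nat.mul_le_mul_left _ hm
      _ ≤ (n + 1) * UT.r (n + 1) := card_wide_le m n
      _ ≤ (n + n) * (n * UT.r n) := Nat.mul_le_mul (by omega) (r_succ_le n hn)
      _ = _ := by ring
  -- The switching inequality in the form used, `n - q'` being at least `n / 2`.
  have hF : ∀ q', q' ≤ q + 2 → (Few q' n).card * n ≤ (Bad L n).card * n + 2 * K * (Few (q' + 2) n).card := by
    intro q' hq'
    have h1 := few_le (q := q') hL1 (show 2 ≤ n by omega)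
    have h2 : (Few q' n).card ≤ (Bad L n).card + (Few q' n \ Bad L n).card := by
      have := Finset.card_le_card_sdiff_add_card (s := Few q' n) (t := Bad L n)
      omega
    have h3 : (Few q' n \ Bad L n).card * n ≤ 2 * K * (Few (q' + 2) n).card := calc
      _ ≤ (Few q' n \ Bad L n).card * (2 * (n - q')) := Nat.mul_le_mul_left _ (by omega)
      _ = 2 * ((Few q' n \ Bad L n).card * (n - q')) := by ring
      _ ≤ 2 * ((Few (q' + 2) n).card * (q' + 2) * (2 * L ^ 3)) := Nat.mul_le_mul_left _ h1
      _ ≤ 2 * ((Few (q' + 2) n).card * (q + 4) * (2 * L ^ 3)) := by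
        have : q' + 2 ≤ q + 4 := by omega
        exact Nat.mul_le_mul_left _ (Nat.mul_le_mul_right _ (Nat.mul_le_mul_left _ this))
      _ = _ := by rw [hK]; ring
    calc _ ≤ ((Bad L n).card + (Few q' n \ Bad L n).card) * n := Nat.mul_le_mul_right _ h2
      _ ≤ _ := by rw [add_mul]; omega
  have hF0 := hF q (by omega)
  have hF1 := hF (q + 2) le_rfl
  have hF2 : (Few (q + 2 + 2) n).card ≤ UT.r n := Finset.card_filter_le _ _
  have hK1 : (1 : ℝ) ≤ K := by exact_mod_cast (show 1 ≤ K by omega)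
  have hn1 : (1 : ℝ) ≤ n := by exact_mod_cast hn
  generalize (Few (q + 2 + 2) n).card = x2 at *
  generalize (Few (q + 2) n).card = x1 at *
  generalize (Few q n).card = x0 at *
  generalize (Bad L n).card = b at *
  generalize (Wide m n).card = w at *
  generalize UT.r n = ρ at *
  have hB' : b * n ^ 2 ≤ ρ := le_trans (Nat.mul_le_mul_left _ (Nat.pow_le_pow_right hn (by norm_num))) hB
  have hW' : w * n ^ 2 ≤ 2 * ρ := le_trans (Nat.mul_le_mul_left _ (Nat.pow_le_pow_right hn (by norm_num))) hW
  have hx : x0 * n ^ 2 ≤ ρ + (2 * K * ρ + 4 * K ^ 2 * ρ) := calc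
    x0 * n ^ 2 = (x0 * n) * n := by ring
    _ ≤ (b * n + 2 * K * x1) * n := Nat.mul_le_mul_right _ hF0
    _ = b * n ^ 2 + 2 * K * (x1 * n) := by ring
    _ ≤ ρ + 2 * K * (b * n + 2 * K * ρ) := by
      refine Nat.add_le_add hB' (Nat.mul_le_mul_left _ (hF1.trans ?_))
      gcongr
    _ ≤ ρ + 2 * K * (ρ + 2 * K * ρ) := by
      gcongr
      refine le_trans ?_ hB'
      gcongr
      exact Nat.le_self_pow (by norm_num) n
    _ = _ := by ring
  rw [div_mul_eq_mul_div, le_div_iff₀ (by positivity)]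
  have hK2 : K ≤ K ^ 2 := Nat.le_self_pow (by norm_num) K
  have hK3 : 1 ≤ K ^ 2 := Nat.one_le_pow _ _ (by omega)
  have : (b + w + x0) * n * n ≤ 10 * K ^ 2 * ρ := calc
    (b + w + x0) * n * n = b * n ^ 2 + w * n ^ 2 + x0 * n ^ 2 := by ring
    _ ≤ ρ + 2 * ρ + (ρ + (2 * K * ρ + 4 * K ^ 2 * ρ)) := by omega
    _ = (4 * 1 + 2 * K + 4 * K ^ 2) * ρ := by ring
    _ ≤ (4 * K ^ 2 + 2 * K ^ 2 + 4 * K ^ 2) * ρ := by gcongr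
    _ = _ := by ring
  exact_mod_cast this

theorem tendsto_lg : Filter.Tendsto (fun n : ℕ => (lg n : ℝ) ^ 10 / n) Filter.atTop (nhds 0) := by
  have h1 : Filter.Tendsto lg Filter.atTop Filter.atTop := by
    refine Filter.tendsto_atTop.2 fun b => ?_
    filter_upwards [Filter.eventually_ge_atTop (2 ^ b)] with n hn
    have := Nat.le_log_of_pow_le (b := 2) (by norm_num) hn
    unfold lg; omega
  have h2 := ((tendsto_pow_const_div_const_pow_of_one_lt 10 (r := (2 : ℝ)) (by norm_num)).comp h1).const_mul 2
  rw [mul_zero] at h2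
  refine squeeze_zero' (Filter.Eventually.of_forall fun n => by positivity) ?_ h2
  filter_upwards [Filter.eventually_ge_atTop 1] with n hn
  have h3 : (2 : ℕ) ^ Nat.log 2 n ≤ n := Nat.pow_log_le_self 2 (by omega)
  have h3' : (2 : ℝ) ^ Nat.log 2 n ≤ n := by exact_mod_cast h3
  have h4 : (2 : ℝ) ^ lg n = 2 * 2 ^ Nat.log 2 n := by rw [lg, pow_succ, mul_comm]
  simp only [Function.comp]
  rw [h4, mul_div_assoc', mul_div_mul_left _ _ (two_ne_zero)]
  gcongr

end UT

open UT

/-- A random unlabeled tree is balanced: the proportion of isomorphism classes of balanced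
trees on `n` vertices among all isomorphism classes of trees on `n` vertices tends to `1`
as `n → ∞`. -/
theorem random_unlabeled_tree_is_balanced :
    Filter.Tendsto
      (fun n : ℕ =>
        (Nat.card (Quotient (isoSetoid n (fun G => G.IsTree ∧ IsBalanced G))) : ℝ) /
        (Nat.card (Quotient (isoSetoid n (fun G => G.IsTree))) : ℝ))
      Filter.atTop (nhds 1) := by
  -- With `ℓ = lg n`, the parameters are `m = 10 * ℓ`, `L = 2 * m + 1` and `q = m * L + 1`.
  let K : ℕ → ℕ := fun n =>
    2 * (2 * (10 * lg n) + 1) ^ 3 * (10 * lg n * (2 * (10 * lg n) + 1) + 1 + 4)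
  have hKlim : Filter.Tendsto (fun n : ℕ => 10 * (K n : ℝ) ^ 2 / n) Filter.atTop (nhds 0) := by
    have h := tendsto_lg.const_mul (10 * (2 * 21 ^ 3 * 215 : ℝ) ^ 2)
    rw [mul_zero] at h
    refine squeeze_zero (fun n => by positivity) (fun n => ?_) h
    have hl : 1 ≤ lg n := by unfold lg; omega
    have h1 : K n ≤ 2 * 21 ^ 3 * 215 * lg n ^ 5 := by
      have h2 : 2 * (10 * lg n) + 1 ≤ 21 * lg n := by omega
      have h3 : lg n * 1 ≤ lg n * lg n := Nat.mul_le_mul_left _ hl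
      calc K n ≤ 2 * (21 * lg n) ^ 3 * (10 * lg n * (21 * lg n) + 1 + 4) := by
            simp only [K]; gcongr
        _ ≤ 2 * (21 * lg n) ^ 3 * (215 * (lg n * lg n)) := by
            gcongr
            nlinarith
        _ = _ := by ring
    have h4 : (K n : ℝ) ≤ 2 * 21 ^ 3 * 215 * (lg n : ℝ) ^ 5 := by exact_mod_cast h1
    calc 10 * (K n : ℝ) ^ 2 / n ≤ 10 * (2 * 21 ^ 3 * 215 * (lg n : ℝ) ^ 5) ^ 2 / n := by gcongr
      _ = _ := by ring
  have hlow : Filter.Tendsto (fun n : ℕ => 1 - 10 * (K n : ℝ) ^ 2 / n) Filter.atTop (nhds 1) := by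
    simpa using hKlim.const_sub 1
  refine tendsto_of_tendsto_of_tendsto_of_le_of_le' hlow tendsto_const_nhds ?_ ?_
  · filter_upwards [hKlim.eventually (gt_mem_nhds one_pos), Filter.eventually_ge_atTop 2] with n h1 hn
    have hn0 : (0 : ℝ) < n := by exact_mod_cast (show 0 < n by omega)
    have hK1 : 1 ≤ K n := Nat.succ_le_of_lt (by positivity)
    have hnK : 2 * K n ≤ n := by
      rw [div_lt_one hn0] at h1
      have h2 : 10 * K n ^ 2 < n := by exact_mod_cast h1
      nlinarith
    have hm : n ^ 10 ≤ 2 ^ (10 * lg n) := by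
      rw [mul_comm, pow_mul]
      exact Nat.pow_le_pow_left (Nat.lt_pow_succ_log_self (by norm_num) n).le 10
    have h3 := exceptional_bound (K := K n) (q := 10 * lg n * (2 * (10 * lg n) + 1) + 1) (by omega) hm rfl rfl hnK
    have h4 := card_le_balanced_add (L := 2 * (10 * lg n) + 1) (m := 10 * lg n) hn
    have h5 := r_le_mul_card n
    have h6 : 0 < UT.r n := r_pos (by omega)
    have hτ : 0 < Nat.card (Quotient (isoSetoid n (fun G => G.IsTree))) :=
      Nat.pos_of_mul_pos_left (h6.trans_le h5)
    clear_value K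
    generalize (Bad _ n).card + (Wide _ n).card + (Few _ n).card = U at h3 h4
    generalize Nat.card (Quotient (isoSetoid n (fun G => G.IsTree))) = τ at *
    generalize Nat.card (Quotient (isoSetoid n (fun G => G.IsTree ∧ IsBalanced G))) = b at *
    have hτ' : (0 : ℝ) < τ := by exact_mod_cast hτ
    rw [le_div_iff₀ hτ']
    have h4' : (τ : ℝ) ≤ b + U := by exact_mod_cast h4
    have h5' : (UT.r n : ℝ) ≤ n * τ := by exact_mod_cast h5
    have h7 : (U : ℝ) * n ≤ (10 * (K n : ℝ) ^ 2 / n * τ) * n := calc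
      _ ≤ _ := h3
      _ ≤ 10 * (K n : ℝ) ^ 2 / n * (n * τ) := by gcongr
      _ = _ := by ring
    have h8 := le_of_mul_le_mul_right h7 hn0
    linarith
  · refine Filter.Eventually.of_forall fun n => div_le_one_of_le₀ ?_ (by positivity)
    exact_mod_cast card_balanced_le n
end

section
/- For every fixed integer k ≥ 3, a random labeled tree is strongly k-balanced: if t_n denotes the number of labeled trees on the vertex set {1, ..., n}, and s_n denotes the number of strongly k-balanced labeled trees on the vertex set {1, ..., n}, then lim_{n→∞} s_n / t_n = 1. -/
/-!
A random labeled tree has small maximum degree with high probability, and every tree of small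
maximum degree is `k`-equitably colorable for each `k ≥ 3`.

*Degrees.* Root all labeled trees at a vertex `r` and encode them by their parent maps. In a tree
whose root has at least `D + 1` children, detach the subtree at a child `u` of `r` and attach it to
a vertex `w` outside this subtree. Every `w` descends from at most one child of the root, so there
are at least `D n` such moves; the new tree, with at least `D` children at the root, has at most `n`
preimages, since it and `u` determine the move. Hence the proportion of trees with degree at least
`D + 1` at `r` is at most `1 / D` times that with degree at least `D` (`parentMaps_switch`), the
tail is at most `2⁻ʲ` at `j + 2` (`card_trees_large_degree`), and by the union bound all
degrees are at most `√(n / k)` except for a proportion `O(n 2 ^ (-√(n / k)))` of the trees.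

*Coloring.* For `k > 3`, a class contained in the larger side of the bipartition is split off, which
reduces the claim to three colors for forests (`Layered.splitsInto`). Let `A`, `B` be the sides of
the bipartition of a forest of order about `3 q`, with `A` the larger side. If `B` has more than `q`
vertices, one class is taken inside `A`, one inside `B`, and the remaining one combines the vertices
of lowest degree of `B` with non-neighbours in `A`; the number of edges being less than the order,
there are enough of these (`Layered.splitsInto_three_of_balanced`). If `B` has at most `q` vertices,
it is cut into two parts, each completed to a class by non-neighbours in `A`, and the third class is
the rest of `A`. Here the cut is made along the distance to a root, so that few vertices of `A` have
neighbours on both sides (`Layered.card_overlap_le`), and the degree bound allows its position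
to be chosen such that both parts have enough non-neighbours
(`Layered.splitsInto_three_of_unbalanced`).
-/

open SimpleGraph

/-- A finite simple graph is *strongly k-balanced* if there is a coloring of the vertices
with k colors such that no edge has both endpoints of the same color and the numbers of
vertices of any two colors differ by at most 1. -/
def StronglyKBalanced (k : ℕ) {V : Type*} (G : SimpleGraph V) : Prop :=
  ∃ c : V → Fin k,
    (∀ u w : V, G.Adj u w → c u ≠ c w) ∧
    ∀ i j : Fin k,
      |(({v | c v = i} : Set V).ncard : ℤ) - (({v | c v = j} : Set V).ncard : ℤ)| ≤ 1

/-! ### Layered forests and equitable partitions of vertex sets -/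

/-- `ρ` layers the graph `G`: adjacent vertices lie in consecutive layers, and every vertex has
at most one neighbour in the layer just below. For a tree, `ρ` is the distance to a root. Layered
graphs are forests; unlike connectedness, the two conditions survive passing to a vertex subset,
so one `ρ` serves for all the induced subforests of a tree. -/
structure Layered {V : Type*} (G : SimpleGraph V) (ρ : V → ℕ) : Prop where
  step : ∀ u v, G.Adj u v → ρ u = ρ v + 1 ∨ ρ v = ρ u + 1
  unique : ∀ w u v, G.Adj w u → G.Adj w v → ρ w = ρ u + 1 → ρ w = ρ v + 1 → u = v

/-- The finite set `I` spans no edge of `G`. -/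
def Indep {V : Type*} (G : SimpleGraph V) (I : Finset V) : Prop :=
  ∀ u ∈ I, ∀ v ∈ I, ¬ G.Adj u v

/-- The subgraph of `G` induced on `U` has a proper coloring with `k` colors all of whose classes
have size `q` or `q + 1`. Colors are the natural numbers below `k`; the values of the coloring
outside `U` are irrelevant. -/
def SplitsInto {V : Type*} [DecidableEq V] (G : SimpleGraph V) (q k : ℕ) (U : Finset V) : Prop :=
  ∃ c : V → ℕ, (∀ v ∈ U, c v < k) ∧ (∀ u ∈ U, ∀ v ∈ U, G.Adj u v → c u ≠ c v) ∧
    ∀ i < k, q ≤ (U.filter (fun v => c v = i)).card ∧ (U.filter (fun v => c v = i)).card ≤ q + 1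

section det
variable {V : Type*} {G : SimpleGraph V} {ρ : V → ℕ}

lemma Indep.mono {I J : Finset V} (h : Indep G J) (hIJ : I ⊆ J) : Indep G I :=
  fun u hu v hv => h u (hIJ hu) v (hIJ hv)

open Classical in
/-- The vertices of `A` that have a neighbour in `S`. -/
noncomputable def nbrs (G : SimpleGraph V) (A S : Finset V) : Finset V :=
  A.filter (fun v => ∃ w ∈ S, G.Adj v w)

lemma mem_nbrs {A S : Finset V} {v : V} : v ∈ nbrs G A S ↔ v ∈ A ∧ ∃ w ∈ S, G.Adj v w := by
  simp [nbrs]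

lemma nbrs_subset (A S : Finset V) : nbrs G A S ⊆ A :=
  fun _ hv => (mem_nbrs.1 hv).1

variable [DecidableEq V]

lemma SplitsInto.zero (q : ℕ) : SplitsInto G q 0 ∅ := ⟨fun _ => 0, by simp, by simp, by simp⟩

/-- An independent class of admissible size can be added as a new color. -/
lemma SplitsInto.succ {q k : ℕ} {U I : Finset V} (hIU : I ⊆ U) (hI : Indep G I)
    (h1 : q ≤ I.card) (h2 : I.card ≤ q + 1) (h : SplitsInto G q k (U \ I)) :
    SplitsInto G q (k + 1) U := by
  obtain ⟨c, hc1, hc2, hc3⟩ := h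
  refine ⟨fun v => if v ∈ I then k else c v, ?_, ?_, ?_⟩
  · intro v hv
    have := hc1 v
    by_cases hvI : v ∈ I
    · simp [hvI]
    · have := this (by simp [hv, hvI])
      simp only [hvI, if_false]; omega
  · intro u hu v hv huv
    have hu1 := hc1 u
    have hv1 := hc1 v
    have := hc2 u
    by_cases huI : u ∈ I <;> by_cases hvI : v ∈ I
    · exact absurd huv (hI u huI v hvI)
    · have := hv1 (by simp [hv, hvI])
      simp only [huI, hvI, if_true, if_false]; omega
    · have := hu1 (by simp [hu, huI])
      simp only [huI, hvI, if_true, if_false]; omega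
    · simp only [huI, hvI, if_false]
      exact this (by simp [hu, huI]) v (by simp [hv, hvI]) huv
  · intro i hi
    rcases Nat.lt_succ_iff_lt_or_eq.1 hi with hi | rfl
    · have : U.filter (fun v => (if v ∈ I then k else c v) = i)
          = (U \ I).filter (fun v => c v = i) := by
        ext v
        by_cases hvI : v ∈ I
        · simp only [Finset.mem_filter, Finset.mem_sdiff, hvI, if_true]
          constructor
          · intro h; omega
          · intro h; exact absurd trivial h.1.2
        · simp [hvI]
      rw [this]; exact hc3 i hi
    · have : U.filter (fun v => (if v ∈ I then i else c v) = i) = I := by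
        ext v
        by_cases hvI : v ∈ I
        · simp [hvI, hIU hvI]
        · have := hc1 v
          simp only [Finset.mem_filter, hvI, if_false, iff_false]
          rintro ⟨a, b⟩
          have := this (by simp [a, hvI]); omega
      rw [this]; exact ⟨h1, h2⟩

lemma SplitsInto.three {q : ℕ} {U I J K : Finset V} (hU : U = I ∪ J ∪ K)
    (hIJ : Disjoint I J) (hIK : Disjoint I K) (hJK : Disjoint J K)
    (hI : Indep G I) (hJ : Indep G J) (hK : Indep G K)
    (hI1 : q ≤ I.card ∧ I.card ≤ q + 1) (hJ1 : q ≤ J.card ∧ J.card ≤ q + 1)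
    (hK1 : q ≤ K.card ∧ K.card ≤ q + 1) : SplitsInto G q 3 U := by
  rw [Finset.disjoint_left] at hIJ hIK hJK
  refine SplitsInto.succ (I := I) ?_ hI hI1.1 hI1.2
    (SplitsInto.succ (I := J) ?_ hJ hJ1.1 hJ1.2 (SplitsInto.succ (I := K) ?_ hK hK1.1 hK1.2 ?_))
  · subst hU; intro x; simp; tauto
  · subst hU; intro x hx; have := @hIJ x; simp; tauto
  · subst hU; intro x hx; have := @hIK x; have := @hJK x; simp; tauto
  · have : ((U \ I) \ J) \ K = ∅ := by
      subst hU; ext x; simp; tauto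
    rw [this]; exact SplitsInto.zero q

/-! ### Selection lemmas for finite sets -/

/-- Some `s`-element subset of `B` has an average value of `f` at most that of `B`: the `s`
smallest values. -/
lemma exists_light_subset (f : V → ℕ) (s : ℕ) (B : Finset V) (hs : s ≤ B.card) :
    ∃ S ⊆ B, S.card = s ∧ B.card * ∑ v ∈ S, f v ≤ s * ∑ v ∈ B, f v := by
  induction hb : B.card generalizing B with
  | zero => exact ⟨∅, by simp, by simp; omega, by simp⟩
  | succ b ih =>
    rcases Nat.eq_or_lt_of_le hs with h | h
    · exact ⟨B, subset_rfl, h.symm, by rw [h, hb]⟩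
    have hne : B.Nonempty := Finset.card_pos.1 (by omega)
    obtain ⟨x, hx, hmax⟩ := B.exists_max_image f hne
    have hcard : (B.erase x).card = b := by rw [Finset.card_erase_of_mem hx]; omega
    obtain ⟨S, hS, hSs, hle⟩ := ih (B.erase x) (by omega) hcard
    refine ⟨S, hS.trans (Finset.erase_subset _ _), hSs, ?_⟩
    have hsum := Finset.add_sum_erase B f hx
    have hbx : ∑ v ∈ B.erase x, f v ≤ b * f x := by
      rw [← hcard, ← smul_eq_mul]
      exact Finset.sum_le_card_nsmul _ _ _ fun v hv => hmax v (Finset.mem_of_mem_erase hv)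
    set X := ∑ v ∈ B.erase x, f v
    set Y := ∑ v ∈ S, f v
    rw [← hsum]
    rcases Nat.eq_zero_or_pos b with h0 | h0
    · have : S = ∅ := by rw [← Finset.card_eq_zero]; omega
      simp [Y, this]
    · refine Nat.le_of_mul_le_mul_left ?_ h0
      calc b * ((b + 1) * Y) = (b + 1) * (b * Y) := by ring
        _ ≤ (b + 1) * (s * X) := Nat.mul_le_mul_left _ hle
        _ = s * (b * X + X) := by ring
        _ ≤ s * (b * X + b * f x) := by gcongr
        _ = b * (s * (f x + X)) := by ring

/-- Hall's theorem with prescribed multiplicities for two sets. -/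
lemma exists_disjoint_subsets (X Y : Finset V) (x y : ℕ) (hx : x ≤ X.card) (hy : y ≤ Y.card)
    (hxy : x + y ≤ (X ∪ Y).card) :
    ∃ R ⊆ X, ∃ S ⊆ Y, Disjoint R S ∧ R.card = x ∧ S.card = y := by
  by_cases h : x ≤ (X \ Y).card
  · obtain ⟨R, hR, hRx⟩ := Finset.exists_subset_card_eq h
    obtain ⟨S, hS, hSy⟩ := Finset.exists_subset_card_eq hy
    refine ⟨R, hR.trans Finset.sdiff_subset, S, hS, ?_, hRx, hSy⟩
    exact Finset.disjoint_of_subset_left hR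
      (Finset.disjoint_of_subset_right hS Finset.sdiff_disjoint)
  · obtain ⟨R, hR1, hR2, hRx⟩ := Finset.exists_subsuperset_card_eq
      (Finset.sdiff_subset (s := X) (t := Y)) (by omega : (X \ Y).card ≤ x) hx
    have : Y \ R = (X ∪ Y) \ R := by
      ext z
      have := @hR1 z
      simp only [Finset.mem_sdiff, Finset.mem_union] at *; tauto
    have hc : y ≤ (Y \ R).card := by
      rw [this, Finset.card_sdiff_of_subset (hR2.trans Finset.subset_union_left)]; omega
    obtain ⟨S, hS, hSy⟩ := Finset.exists_subset_card_eq hc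
    exact ⟨R, hR2, S, hS.trans Finset.sdiff_subset,
      (Finset.disjoint_of_subset_left hS Finset.sdiff_disjoint).symm, hRx, hSy⟩

/-! ### Three colors -/

lemma card_nbrs_le_sum (A S : Finset V) :
    (nbrs G A S).card ≤ ∑ w ∈ S, (nbrs G A {w}).card := by
  refine le_trans (Finset.card_le_card ?_) Finset.card_biUnion_le
  intro v hv
  obtain ⟨hvA, w, hw, hvw⟩ := mem_nbrs.1 hv
  exact Finset.mem_biUnion.2 ⟨w, hw, mem_nbrs.2 ⟨hvA, w, by simp, hvw⟩⟩

/-- The forest edge count, in a weak form: every edge between `A` and `B` is charged to its upper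
endpoint, and no vertex is charged twice. -/
lemma Layered.sum_card_nbrs_le (h : Layered G ρ) (A B : Finset V) :
    ∑ w ∈ B, (nbrs G A {w}).card ≤ A.card + B.card := by
  classical
  have h1 : ∀ w ∈ B, (nbrs G A {w}).card ≤
      (A.filter (fun v => G.Adj v w ∧ ρ v = ρ w + 1)).card + 1 := by
    intro w _
    have h2 : (A.filter (fun v => G.Adj v w ∧ ρ w = ρ v + 1)).card ≤ 1 := by
      rw [Finset.card_le_one]
      intro x hx y hy
      rw [Finset.mem_filter] at hx hy
      exact h.unique w x y hx.2.1.symm hy.2.1.symm hx.2.2 hy.2.2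
    refine le_trans (Finset.card_le_card ?_)
      (le_trans (Finset.card_union_le _ _) (Nat.add_le_add_left h2 _))
    intro v hv
    obtain ⟨hvA, w', hw', hvw⟩ := mem_nbrs.1 hv
    obtain rfl := Finset.mem_singleton.1 hw'
    rw [Finset.mem_union, Finset.mem_filter, Finset.mem_filter]
    rcases h.step _ _ hvw with h3 | h3
    · exact Or.inl ⟨hvA, hvw, h3⟩
    · exact Or.inr ⟨hvA, hvw, h3⟩
  refine le_trans (Finset.sum_le_sum h1) ?_
  rw [Finset.sum_add_distrib, Finset.sum_const, smul_eq_mul, mul_one]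
  refine Nat.add_le_add_right ?_ _
  have h4 := Finset.sum_card_bipartiteAbove_eq_sum_card_bipartiteBelow
    (s := B) (t := A) (fun w v => G.Adj v w ∧ ρ v = ρ w + 1)
  simp only [Finset.bipartiteAbove, Finset.bipartiteBelow] at h4
  rw [h4]
  refine le_trans (Finset.sum_le_card_nsmul _ _ 1 ?_) (by simp)
  intro v _
  rw [Finset.card_le_one]
  intro x hx y hy
  rw [Finset.mem_filter] at hx hy
  exact h.unique v x y hx.2.1 hy.2.1 hx.2.2 hy.2.2

lemma Indep.union_of_disjoint_nbrs {A R S : Finset V} (hRA : R ⊆ A) (hR : Indep G R)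
    (hS : Indep G S) (hRS : Disjoint R (nbrs G A S)) : Indep G (S ∪ R) := by
  rw [Finset.disjoint_left] at hRS
  intro u hu v hv huv
  rcases Finset.mem_union.1 hu with hu | hu <;> rcases Finset.mem_union.1 hv with hv | hv
  · exact hS u hu v hv huv
  · exact hRS hv (mem_nbrs.2 ⟨hRA hv, u, hu, huv.symm⟩)
  · exact hRS hu (mem_nbrs.2 ⟨hRA hu, v, hv, huv⟩)
  · exact hR u hu v hv huv

/-- If both sides `A`, `B` of the bipartition are large, two classes lie inside `A` and inside `B`,
and only the third one is mixed: it consists of the `s` vertices of lowest degree of `B` together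
with `r` vertices of `A` not adjacent to them. -/
lemma Layered.splitsInto_three_of_balanced (h : Layered G ρ) {A B : Finset V}
    (hAB : Disjoint A B) (hA : Indep G A) (hB : Indep G B) {q mA mB m s r : ℕ}
    (hmA : q ≤ mA ∧ mA ≤ q + 1) (hmB : q ≤ mB ∧ mB ≤ q + 1) (hm : q ≤ m ∧ m ≤ q + 1)
    (ha : A.card = mA + r) (hb : B.card = mB + s) (hrs : s + r = m) (hpos : 0 < B.card)
    (hineq : s * (A.card + B.card) ≤ mA * B.card) : SplitsInto G q 3 (A ∪ B) := by
  obtain ⟨S, hSB, hSs, hS⟩ := exists_light_subset (fun w => (nbrs G A {w}).card) s B (by omega)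
  have hN : (nbrs G A S).card ≤ mA := by
    refine Nat.le_of_mul_le_mul_left ?_ hpos
    calc B.card * (nbrs G A S).card ≤ B.card * ∑ w ∈ S, (nbrs G A {w}).card :=
          Nat.mul_le_mul_left _ (card_nbrs_le_sum A S)
      _ ≤ _ := hS
      _ ≤ s * (A.card + B.card) := Nat.mul_le_mul_left _ (h.sum_card_nbrs_le A B)
      _ ≤ mA * B.card := hineq
      _ = B.card * mA := mul_comm _ _
  have hr : r ≤ (A \ nbrs G A S).card := by
    rw [Finset.card_sdiff_of_subset (nbrs_subset A S)]; omega
  obtain ⟨R, hR, hRr⟩ := Finset.exists_subset_card_eq hr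
  have hRA : R ⊆ A := hR.trans Finset.sdiff_subset
  have hSR : Disjoint S R := (Finset.disjoint_of_subset_left hRA
    (Finset.disjoint_of_subset_right hSB hAB)).symm
  refine SplitsInto.three (I := S ∪ R) (J := A \ R) (K := B \ S) ?_ ?_ ?_ ?_ ?_
    (hA.mono Finset.sdiff_subset) (hB.mono Finset.sdiff_subset) ?_ ?_ ?_
  · ext x; have := @hRA x; have := @hSB x
    simp only [Finset.mem_union, Finset.mem_sdiff]; tauto
  · rw [Finset.disjoint_left] at *
    intro x; have := @hAB x; have := @hSB x
    simp only [Finset.mem_union, Finset.mem_sdiff]; tauto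
  · rw [Finset.disjoint_left] at *
    intro x; have := @hAB x; have := @hRA x
    simp only [Finset.mem_union, Finset.mem_sdiff]; tauto
  · exact Finset.disjoint_of_subset_left Finset.sdiff_subset
      (Finset.disjoint_of_subset_right Finset.sdiff_subset hAB)
  · exact Indep.union_of_disjoint_nbrs hRA (hA.mono hRA) (hB.mono hSB)
      (Finset.disjoint_of_subset_left hR Finset.sdiff_disjoint)
  · rw [Finset.card_union_of_disjoint hSR]; omega
  · rw [Finset.card_sdiff_of_subset hRA]; omega
  · rw [Finset.card_sdiff_of_subset hSB]; omega

/-- `B₁` is an initial segment of `B` for the preorder given by `ρ`, ties being broken freely. -/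
def InitialPart (ρ : V → ℕ) (B B₁ : Finset V) : Prop :=
  B₁ ⊆ B ∧ ∀ x ∈ B₁, ∀ y ∈ B \ B₁, ρ x ≤ ρ y

/-- A vertex `v` of `A` with neighbours in an initial segment `B₁` of `B` as well as in its
complement has some neighbour outside `B₁` in the layer above `v`. This assigns distinct vertices of `B \ B₁`
to distinct `v`, since each has only one neighbour in the layer below. -/
lemma Layered.card_overlap_le (h : Layered G ρ) (A : Finset V) {B B₁ : Finset V}
    (hB : InitialPart ρ B B₁) :
    (nbrs G A B₁ ∩ nbrs G A (B \ B₁)).card ≤ (B \ B₁).card := by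
  have key : ∀ v ∈ nbrs G A B₁ ∩ nbrs G A (B \ B₁), ∃ w ∈ B \ B₁, G.Adj w v ∧ ρ w = ρ v + 1 := by
    intro v hv
    rw [Finset.mem_inter, mem_nbrs, mem_nbrs] at hv
    obtain ⟨⟨-, x, hx, hvx⟩, -, w, hw, hvw⟩ := hv
    refine ⟨w, hw, hvw.symm, ?_⟩
    have hxw := hB.2 x hx w hw
    rcases h.step _ _ hvw with h1 | h1
    · rcases h.step _ _ hvx with h2 | h2
      · have : x = w := h.unique v x w hvx hvw h2 h1
        rw [← this] at hw
        exact absurd hx (Finset.mem_sdiff.1 hw).2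
      · omega
    · exact h1
  choose! f hf using key
  refine Finset.card_le_card_of_injOn f (fun v hv => (hf v hv).1) ?_
  intro v hv v' hv' hvv
  obtain ⟨-, h1, h2⟩ := hf v hv
  obtain ⟨-, h3, h4⟩ := hf v' hv'
  rw [← hvv] at h3 h4
  exact h.unique _ _ _ h1 h3 h2 h4

/-- Adding vertices of `B` one at a time in the order of `ρ` increases the neighbourhood by at most
`Δ` per step, so its size hits every window of length `Δ`. -/
lemma exists_initialPart (A B : Finset V) {Δ : ℕ} (hΔ : ∀ w ∈ B, (nbrs G A {w}).card ≤ Δ)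
    {m : ℕ} (hm : 0 < m) (hP : m ≤ (nbrs G A B).card) :
    ∃ B₁, InitialPart ρ B B₁ ∧ m ≤ (nbrs G A B₁).card ∧ (nbrs G A B₁).card < m + Δ := by
  classical
  let F := B.powerset.filter (fun B₁ => InitialPart ρ B B₁ ∧ m ≤ (nbrs G A B₁).card)
  have hF : F.Nonempty := ⟨B, by
    simp only [F, Finset.mem_filter, Finset.mem_powerset]
    exact ⟨subset_rfl, ⟨subset_rfl, by simp⟩, hP⟩⟩
  obtain ⟨B₁, hB₁, hmin⟩ := F.exists_min_image Finset.card hF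
  simp only [F, Finset.mem_filter, Finset.mem_powerset] at hB₁ hmin
  obtain ⟨-, hI, hmB⟩ := hB₁
  have hne : B₁.Nonempty := by
    by_contra h0
    rw [Finset.not_nonempty_iff_eq_empty] at h0
    subst h0
    simp [nbrs] at hmB; omega
  obtain ⟨x, hx, hmax⟩ := B₁.exists_max_image ρ hne
  refine ⟨B₁, hI, hmB, ?_⟩
  have hI' : InitialPart ρ B (B₁.erase x) := by
    refine ⟨(Finset.erase_subset _ _).trans hI.1, ?_⟩
    intro y hy z hz
    have hyB := Finset.mem_of_mem_erase hy
    by_cases hzx : z = x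
    · subst hzx; exact hmax y hyB
    · refine hI.2 y hyB z ?_
      simp only [Finset.mem_sdiff, Finset.mem_erase] at hz ⊢; tauto
  have hlt : (nbrs G A (B₁.erase x)).card < m := by
    by_contra hge
    have := hmin (B₁.erase x) ⟨hI'.1, hI', by omega⟩
    have := Finset.card_erase_lt_of_mem hx
    omega
  have hsub : nbrs G A B₁ ⊆ nbrs G A (B₁.erase x) ∪ nbrs G A {x} := by
    intro v hv
    obtain ⟨hvA, w, hw, hvw⟩ := mem_nbrs.1 hv
    rw [Finset.mem_union, mem_nbrs, mem_nbrs]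
    by_cases hwx : w = x
    · exact Or.inr ⟨hvA, w, by simp [hwx], hvw⟩
    · exact Or.inl ⟨hvA, w, by simp [hwx, hw], hvw⟩
  have := (Finset.card_le_card hsub).trans (Finset.card_union_le _ _)
  have := hΔ x (hI.1 hx)
  omega

/-- If the side `B` of the bipartition is small, it is cut into two parts `B₁` and `B \ B₁`, each
of which is completed to a color class by vertices of `A` not adjacent to it; the rest of `A` is the
third class. -/
lemma Layered.splitsInto_three_of_unbalanced (h : Layered G ρ) {A B : Finset V}
    (hAB : Disjoint A B) (hA : Indep G A) (hB : Indep G B) {Δ q m₁ m₂ m₃ : ℕ}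
    (hΔ : ∀ w ∈ B, (nbrs G A {w}).card ≤ Δ) (hq : 0 < q) (hΔq : Δ * Δ ≤ q)
    (h₁ : q ≤ m₁ ∧ m₁ ≤ q + 1) (h₂ : q ≤ m₂ ∧ m₂ ≤ q + 1) (h₃ : q ≤ m₃ ∧ m₃ ≤ q + 1)
    (hn : A.card + B.card = m₁ + m₂ + m₃) (hb : B.card ≤ q) : SplitsInto G q 3 (A ∪ B) := by
  -- Both parts must leave enough non-adjacent vertices in `A`. By the overlap bound, it suffices
  -- that the neighbourhood of `B₁` has size in `[m₂, m₂ + Δ)` and that `B₁` has at least `Δ` elements.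
  obtain ⟨B₁, hI, hP, hQ⟩ : ∃ B₁, InitialPart ρ B B₁ ∧
      (nbrs G A B₁).card + m₁ ≤ A.card + B₁.card ∧
      (nbrs G A (B \ B₁)).card + m₂ ≤ A.card + (B \ B₁).card := by
    by_cases hP : m₂ ≤ (nbrs G A B).card
    · obtain ⟨B₁, hI, hl, hu⟩ := exists_initialPart (ρ := ρ) A B hΔ (by omega) hP
      refine ⟨B₁, hI, ?_, ?_⟩
      · have h1 : (nbrs G A B₁).card ≤ B₁.card * Δ := by
          refine (card_nbrs_le_sum A B₁).trans ?_
          rw [← smul_eq_mul]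
          exact Finset.sum_le_card_nsmul _ _ _ fun w hw => hΔ w (hI.1 hw)
        have h2 : Δ ≤ B₁.card := by
          by_contra hlt
          have : B₁.card * Δ < Δ * Δ := Nat.mul_lt_mul_of_pos_right (by omega) (by omega)
          omega
        omega
      · have := h.card_overlap_le A hI
        have h3 := Finset.card_union_add_card_inter (nbrs G A B₁) (nbrs G A (B \ B₁))
        have h4 := Finset.card_le_card
          (Finset.union_subset (nbrs_subset (G := G) A B₁) (nbrs_subset (G := G) A (B \ B₁)))
        omega
    -- If `B` has few neighbours altogether, it need not be cut.
    · refine ⟨B, ⟨subset_rfl, by simp⟩, by omega, ?_⟩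
      simp [nbrs]; omega
  have hj := Finset.card_le_card hI.1
  have hsd := Finset.card_sdiff_of_subset hI.1
  have c1 := Finset.card_sdiff_of_subset (nbrs_subset (G := G) A B₁)
  have c2 := Finset.card_sdiff_of_subset (nbrs_subset (G := G) A (B \ B₁))
  have hun : (A \ nbrs G A B₁) ∪ (A \ nbrs G A (B \ B₁))
      = A \ (nbrs G A B₁ ∩ nbrs G A (B \ B₁)) := by
    ext x; simp only [Finset.mem_union, Finset.mem_sdiff, Finset.mem_inter]; tauto
  have c3 := Finset.card_sdiff_of_subset
    (Finset.inter_subset_left.trans (nbrs_subset (G := G) A B₁) :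
      nbrs G A B₁ ∩ nbrs G A (B \ B₁) ⊆ A)
  have ho := h.card_overlap_le A hI
  obtain ⟨R, hR, S, hS, hRS, hRc, hSc⟩ := exists_disjoint_subsets
    (A \ nbrs G A B₁) (A \ nbrs G A (B \ B₁)) (m₁ - B₁.card) (m₂ - (B \ B₁).card)
    (by omega) (by omega) (by rw [hun]; omega)
  have hRA : R ⊆ A := hR.trans Finset.sdiff_subset
  have hSA : S ⊆ A := hS.trans Finset.sdiff_subset
  have hB1 := hI.1
  have d1 : Disjoint B₁ R := (Finset.disjoint_of_subset_left hRA
    (Finset.disjoint_of_subset_right hB1 hAB)).symm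
  have d2 : Disjoint (B \ B₁) S := (Finset.disjoint_of_subset_left hSA
    (Finset.disjoint_of_subset_right Finset.sdiff_subset hAB)).symm
  have hRSA : R ∪ S ⊆ A := Finset.union_subset hRA hSA
  refine SplitsInto.three (I := B₁ ∪ R) (J := (B \ B₁) ∪ S) (K := A \ (R ∪ S)) ?_ ?_ ?_ ?_
    (Indep.union_of_disjoint_nbrs hRA (hA.mono hRA) (hB.mono hB1)
      (Finset.disjoint_of_subset_left hR Finset.sdiff_disjoint))
    (Indep.union_of_disjoint_nbrs hSA (hA.mono hSA) (hB.mono Finset.sdiff_subset)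
      (Finset.disjoint_of_subset_left hS Finset.sdiff_disjoint))
    (hA.mono Finset.sdiff_subset) ?_ ?_ ?_
  · have e1 := Finset.union_sdiff_of_subset hB1
    have e2 := Finset.union_sdiff_of_subset hRSA
    rw [Finset.union_union_union_comm, Finset.union_assoc, e1, e2, Finset.union_comm]
  · rw [Finset.disjoint_union_left, Finset.disjoint_union_right, Finset.disjoint_union_right]
    refine ⟨⟨Finset.disjoint_sdiff, ?_⟩, ?_, hRS⟩
    · exact (Finset.disjoint_of_subset_left hSA (Finset.disjoint_of_subset_right hB1 hAB)).symm
    · exact Finset.disjoint_of_subset_left hRA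
        (Finset.disjoint_of_subset_right Finset.sdiff_subset hAB)
  · rw [Finset.disjoint_union_left]
    exact ⟨(Finset.disjoint_of_subset_left Finset.sdiff_subset
      (Finset.disjoint_of_subset_right hB1 hAB)).symm,
      Finset.disjoint_of_subset_left Finset.subset_union_left Finset.disjoint_sdiff⟩
  · rw [Finset.disjoint_union_left]
    exact ⟨(Finset.disjoint_of_subset_left Finset.sdiff_subset
      (Finset.disjoint_of_subset_right Finset.sdiff_subset hAB)).symm,
      Finset.disjoint_of_subset_left Finset.subset_union_right Finset.disjoint_sdiff⟩
  · rw [Finset.card_union_of_disjoint d1]; omega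
  · rw [Finset.card_union_of_disjoint d2]; omega
  · rw [Finset.card_sdiff_of_subset hRSA, Finset.card_union_of_disjoint hRS]; omega

/-- Three colors suffice for a forest with bipartition `A`, `B` whose smaller side `B` has degrees
at most the square root of about a third of the order. -/
lemma Layered.splitsInto_three_aux (h : Layered G ρ) {A B : Finset V}
    (hAB : Disjoint A B) (hA : Indep G A) (hB : Indep G B) {Δ q : ℕ}
    (hΔ : ∀ w ∈ B, (nbrs G A {w}).card ≤ Δ) (hq : 0 < q) (hΔq : Δ * Δ ≤ q)
    (hle : B.card ≤ A.card)
    (h1 : 3 * q ≤ A.card + B.card) (h2 : A.card + B.card ≤ 3 * (q + 1)) :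
    SplitsInto G q 3 (A ∪ B) := by
  -- Giving the larger pure class to the smaller side `B` makes the degree inequality of the
  -- balanced case hold for every residue of the order modulo 3.
  obtain ⟨mA, mB, m, hmA, hmB, hm, hn, hh⟩ : ∃ mA mB m : ℕ, (q ≤ mA ∧ mA ≤ q + 1) ∧
      (q ≤ mB ∧ mB ≤ q + 1) ∧ (q ≤ m ∧ m ≤ q + 1) ∧ A.card + B.card = mA + mB + m ∧
      m ≤ mA ∧ mA ≤ mB := by
    obtain h3 | h3 | h3 | h3 : A.card + B.card = 3 * q ∨ A.card + B.card = 3 * q + 1 ∨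
      A.card + B.card = 3 * q + 2 ∨ A.card + B.card = 3 * q + 3 := by omega
    · exact ⟨q, q, q, by omega⟩
    · exact ⟨q, q + 1, q, by omega⟩
    · exact ⟨q + 1, q + 1, q, by omega⟩
    · exact ⟨q + 1, q + 1, q + 1, by omega⟩
  by_cases hb : B.card ≤ q
  · exact h.splitsInto_three_of_unbalanced hAB hA hB hΔ hq hΔq hmA hmB hm hn hb
  · obtain ⟨s, hs⟩ : ∃ s, B.card = mB + s := ⟨B.card - mB, by omega⟩
    obtain ⟨r, hr⟩ : ∃ r, A.card = mA + r := ⟨A.card - mA, by omega⟩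
    refine h.splitsInto_three_of_balanced hAB hA hB hmA hmB hm hr hs (by omega) (by omega) ?_
    obtain ⟨x, rfl⟩ := Nat.exists_eq_add_of_le hh.1
    obtain ⟨y, rfl⟩ := Nat.exists_eq_add_of_le hh.2
    rw [hn, hs]
    have h5 : 2 * s + y ≤ m := by omega
    nlinarith [Nat.zero_le (m * x), Nat.zero_le (m * y), Nat.zero_le (x * x),
      Nat.zero_le (x * y), Nat.mul_le_mul_left s h5, Nat.mul_le_mul_left m h5,
      Nat.mul_le_mul_left x h5, Nat.mul_le_mul_left y h5]

/-! ### Any number of colors -/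

/-- The deterministic part: forests of small maximum degree split equitably into any number `k ≥ 3`
of classes. One class at a time is taken from the larger side of the bipartition, until three are
left. The bounds on the order express that the only possible class sizes are `q` and `q + 1`. -/
lemma Layered.splitsInto (h : Layered G ρ) {Δ q : ℕ}
    (hΔ : ∀ A w, (nbrs G A {w}).card ≤ Δ) (hq : 0 < q) (hΔq : Δ * Δ ≤ q) (k : ℕ) (hk : 3 ≤ k) :
    ∀ U : Finset V, k * q ≤ U.card → U.card ≤ k * (q + 1) → SplitsInto G q k U := by
  have parts : ∀ U : Finset V, ∃ A B : Finset V, Disjoint A B ∧ Indep G A ∧ Indep G B ∧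
      A ∪ B = U ∧ B.card ≤ A.card := by
    intro U
    have key : ∀ t, Indep G (U.filter (fun v => ρ v % 2 = t)) := by
      intro t u hu v hv huv
      rw [Finset.mem_filter] at hu hv
      have := h.step _ _ huv
      omega
    have hd : Disjoint (U.filter (fun v => ρ v % 2 = 0)) (U.filter (fun v => ρ v % 2 = 1)) := by
      rw [Finset.disjoint_filter]; intro x _ h1; omega
    have hu : U.filter (fun v => ρ v % 2 = 0) ∪ U.filter (fun v => ρ v % 2 = 1) = U := by
      ext x
      have := Nat.mod_two_eq_zero_or_one (ρ x)
      simp only [Finset.mem_union, Finset.mem_filter]; tauto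
    rcases le_total (U.filter (fun v => ρ v % 2 = 0)).card
      (U.filter (fun v => ρ v % 2 = 1)).card with hle | hle
    · exact ⟨_, _, hd.symm, key 1, key 0, by rw [Finset.union_comm, hu], hle⟩
    · exact ⟨_, _, hd, key 0, key 1, hu, hle⟩
  induction k, hk using Nat.le_induction with
  | base =>
    intro U h1 h2
    obtain ⟨A, B, hAB, hA, hB, rfl, hle⟩ := parts U
    rw [Finset.card_union_of_disjoint hAB] at h1 h2
    exact h.splitsInto_three_aux hAB hA hB (fun w _ => hΔ A w) hq hΔq hle h1 h2
  | succ k hk ih =>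
    intro U h1 h2
    obtain ⟨A, B, hAB, hA, hB, hU, hle⟩ := parts U
    have hc := Finset.card_union_of_disjoint hAB
    rw [hU] at hc
    have hkq : 3 * q ≤ k * q := Nat.mul_le_mul_right q hk
    have e1 : (k + 1) * q = k * q + q := by ring
    have e2 : (k + 1) * (q + 1) = k * q + q + k + 1 := by ring
    have e3 : k * (q + 1) = k * q + k := by ring
    obtain ⟨s, hs1, hs2, hs3, hs4⟩ : ∃ s, q ≤ s ∧ s ≤ q + 1 ∧ k * q + s ≤ U.card ∧
        U.card ≤ k * (q + 1) + s := by
      by_cases h3 : U.card ≤ k * (q + 1) + q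
      · exact ⟨q, by omega⟩
      · exact ⟨q + 1, by omega⟩
    obtain ⟨I, hIA, hI⟩ := Finset.exists_subset_card_eq (show s ≤ A.card by omega)
    have hIU : I ⊆ U := hIA.trans (hU ▸ Finset.subset_union_left)
    have hcs := Finset.card_sdiff_of_subset hIU
    exact SplitsInto.succ hIU (hA.mono hIA) (by omega) (by omega)
      (ih (U \ I) (by omega) (by omega))

end det

section counting
variable {V : Type*} [Fintype V] [DecidableEq V]

/-! ### Rooted trees as parent maps -/

/-- `p` is the parent map of a tree on `V` rooted at `r`: the root is its own parent, and every
vertex reaches the root under iteration of `p`. -/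
def IsParentMap (r : V) (p : V → V) : Prop := p r = r ∧ ∀ x, ∃ m, p^[m] x = r

/-- The graph joining every vertex to its parent, with the loop at the root discarded. -/
def parentGraph (p : V → V) : SimpleGraph V where
  Adj x y := x ≠ y ∧ (p x = y ∨ p y = x)
  symm := ⟨fun _ _ h => ⟨h.1.symm, h.2.symm⟩⟩
  loopless := ⟨fun _ h => h.1 rfl⟩

/-- The children of the root `r` (not of an arbitrary vertex). -/
def children (r : V) (p : V → V) : Finset V := Finset.univ.filter (fun u => u ≠ r ∧ p u = r)

open Classical in
/-- The parent maps with root `r` whose root has at least `D` children. -/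
noncomputable def parentMaps (r : V) (D : ℕ) : Finset (V → V) :=
  Finset.univ.filter (fun p => IsParentMap r p ∧ D ≤ (children r p).card)

lemma mem_children {r u : V} {p : V → V} : u ∈ children r p ↔ u ≠ r ∧ p u = r := by
  simp [children]

lemma mem_parentMaps {r : V} {D : ℕ} {p : V → V} :
    p ∈ parentMaps r D ↔ IsParentMap r p ∧ D ≤ (children r p).card := by
  simp [parentMaps]

omit [Fintype V] [DecidableEq V] in
/-- Induction from the root towards the leaves. -/
lemma IsParentMap.induction {r : V} {p : V → V} (h : IsParentMap r p) {P : V → Prop}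
    (hr : P r) (hs : ∀ x, x ≠ r → P (p x) → P x) (x : V) : P x := by
  obtain ⟨m, hm⟩ := h.2 x
  induction m generalizing x with
  | zero => simp at hm; rwa [hm]
  | succ m ih =>
    by_cases hx : x = r
    · rwa [hx]
    · exact hs x hx (ih (p x) (by simpa using hm))

omit [Fintype V] in
/-- Moving the subtree at `u` to a new parent `w` again gives a tree, if `w` is not itself in that
subtree. -/
lemma IsParentMap.update {r u w : V} {p : V → V} (h : IsParentMap r p) (hu : u ≠ r)
    (hw : ∀ m, p^[m] w ≠ u) : IsParentMap r (Function.update p u w) := by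
  have h0 : Function.update p u w r = r := by
    rw [Function.update_of_ne hu.symm]; exact h.1
  have hiter : ∀ m, (Function.update p u w)^[m] w = p^[m] w := by
    intro m
    induction m with
    | zero => rfl
    | succ m ih =>
      rw [Function.iterate_succ_apply', Function.iterate_succ_apply', ih,
        Function.update_of_ne (hw m)]
  refine ⟨h0, fun x => ?_⟩
  refine h.induction (P := fun x => ∃ m, (Function.update p u w)^[m] x = r) ⟨0, rfl⟩ ?_ x
  intro x _ ⟨m, hm⟩
  by_cases hxu : x = u
  · subst hxu
    obtain ⟨m', hm'⟩ := h.2 w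
    refine ⟨m' + 1, ?_⟩
    rw [Function.iterate_succ_apply, Function.update_self, hiter, hm']
  · exact ⟨m + 1, by rw [Function.iterate_succ_apply, Function.update_of_ne hxu, hm]⟩

omit [Fintype V] [DecidableEq V] in
/-- Every vertex descends from at most one child of the root. -/
lemma eq_of_iterate_eq_child {r w u u' : V} {p : V → V} (hr : p r = r) (hu : u ≠ r)
    (hu' : u' ≠ r) (hpu : p u = r) (hpu' : p u' = r) {m m' : ℕ} (hm : p^[m] w = u)
    (hm' : p^[m'] w = u') : u = u' := by
  have key : ∀ {a b : ℕ} {x y : V}, p^[a] w = x → p^[b] w = y → p x = r → y ≠ r → ¬ a < b := by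
    intro a b x y ha hb hx hy hab
    obtain ⟨c, rfl⟩ := Nat.exists_eq_add_of_lt hab
    apply hy
    rw [← hb, show a + c + 1 = c + (1 + a) by ring, Function.iterate_add_apply,
      Function.iterate_add_apply, ha, Function.iterate_one, hx]
    exact Function.iterate_fixed hr c
  have h1 := key hm hm' hpu hu'
  have h2 := key hm' hm hpu' hu
  have : m = m' := by omega
  rw [← hm, ← hm', this]

/-- Double counting of the moves of a child `u` of the root to a new parent `w` outside the subtree
at `u`. A map whose root has at least `D + 1` children admits at least `D` choices of `u` for each
`w`; conversely the new map and `u` determine the move. -/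
lemma parentMaps_switch (r : V) (D : ℕ) :
    D * (parentMaps r (D + 1)).card ≤ (parentMaps r D).card := by
  classical
  have hcard : 0 < Fintype.card V := Fintype.card_pos_iff.2 ⟨r⟩
  let X : Finset (Σ _ : V → V, Σ _ : V, V) := (parentMaps r (D + 1)).sigma fun p =>
    Finset.univ.sigma fun w => (children r p).filter fun u => ∀ m, p^[m] w ≠ u
  have hlow : (parentMaps r (D + 1)).card * (Fintype.card V * D) ≤ X.card := by
    rw [Finset.card_sigma, ← smul_eq_mul]
    refine Finset.card_nsmul_le_sum _ _ _ fun p hp => ?_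
    simp only [parentMaps, Finset.mem_filter, Finset.mem_univ, true_and] at hp
    obtain ⟨hp, hD⟩ := hp
    rw [Finset.card_sigma, ← smul_eq_mul, ← Finset.card_univ]
    refine Finset.card_nsmul_le_sum _ _ _ fun w _ => ?_
    have h1 := Finset.card_filter_add_card_filter_not (s := children r p)
      (fun u => ∀ m, p^[m] w ≠ u)
    have h2 : ((children r p).filter fun u => ¬ ∀ m, p^[m] w ≠ u).card ≤ 1 := by
      rw [Finset.card_le_one]
      intro a ha b hb
      simp only [children, Finset.mem_filter, Finset.mem_univ, true_and, not_forall,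
        not_not] at ha hb
      obtain ⟨⟨ha1, ha2⟩, ma, ha3⟩ := ha
      obtain ⟨⟨hb1, hb2⟩, mb, hb3⟩ := hb
      exact eq_of_iterate_eq_child hp.1 ha1 hb1 ha2 hb2 ha3 hb3
    omega
  have hup : X.card ≤ (parentMaps r D ×ˢ (Finset.univ : Finset V)).card := by
    refine Finset.card_le_card_of_injOn
      (fun t => (Function.update t.1 t.2.2 t.2.1, t.2.2)) ?_ ?_
    · rintro ⟨p, w, u⟩ ht
      simp only [X, mem_parentMaps, Finset.mem_coe, Finset.mem_sigma,
        Finset.mem_filter, mem_children, Finset.mem_univ, true_and] at ht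
      obtain ⟨⟨hp, hD⟩, ⟨hur, hpu⟩, hw⟩ := ht
      simp only [Finset.coe_product, Set.mem_prod, Finset.mem_coe, Finset.mem_univ, and_true,
        parentMaps, Finset.mem_filter, true_and]
      refine ⟨hp.update hur hw, ?_⟩
      have hsub : (children r p).erase u ⊆ children r (Function.update p u w) := by
        intro x hx
        simp only [children, Finset.mem_erase, Finset.mem_filter, Finset.mem_univ,
          true_and] at hx ⊢
        exact ⟨hx.2.1, by rw [Function.update_of_ne hx.1]; exact hx.2.2⟩
      have h1 := Finset.card_le_card hsub
      have h2 := Finset.pred_card_le_card_erase (s := children r p) (a := u)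
      have h3 : D + 1 ≤ (children r p).card := hD
      omega
    · rintro ⟨p, w, u⟩ ht ⟨p', w', u'⟩ ht' heq
      simp only [X, mem_parentMaps, Finset.mem_coe, Finset.mem_sigma,
        Finset.mem_filter, mem_children, Finset.mem_univ, true_and] at ht ht'
      obtain ⟨-, ⟨-, hpu⟩, -⟩ := ht
      obtain ⟨-, ⟨-, hpu'⟩, -⟩ := ht'
      simp only [Prod.mk.injEq] at heq
      obtain ⟨h1, rfl⟩ := heq
      have hw : w = w' := by simpa using congrFun h1 u
      subst hw
      have hp : p = p' := by
        funext x
        by_cases hx : x = u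
        · rw [hx, hpu, hpu']
        · simpa [Function.update_of_ne hx] using congrFun h1 x
      subst hp
      rfl
  rw [Finset.card_product, Finset.card_univ] at hup
  refine Nat.le_of_mul_le_mul_right ?_ hcard
  calc D * (parentMaps r (D + 1)).card * Fintype.card V
      = (parentMaps r (D + 1)).card * (Fintype.card V * D) := by ring
    _ ≤ _ := hlow.trans hup

lemma parentMaps_decay (r : V) (j : ℕ) :
    2 ^ j * (parentMaps r (j + 2)).card ≤ (parentMaps r 0).card := by
  induction j with
  | zero =>
    rw [pow_zero, one_mul]
    refine Finset.card_le_card ?_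
    intro p hp
    simp only [parentMaps, Finset.mem_filter, Finset.mem_univ, true_and] at hp ⊢
    exact ⟨hp.1, Nat.zero_le _⟩
  | succ j ih =>
    refine le_trans ?_ ih
    rw [pow_succ, mul_assoc]
    refine Nat.mul_le_mul_left _ (le_trans ?_ (parentMaps_switch r (j + 2)))
    exact Nat.mul_le_mul_right _ (by omega)

omit [Fintype V] [DecidableEq V] in
lemma IsParentMap.reachable {r : V} {p : V → V} (h : IsParentMap r p) (x : V) :
    (parentGraph p).Reachable x r := by
  refine h.induction (P := fun x => (parentGraph p).Reachable x r) (Reachable.refl _) ?_ x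
  intro x _ hx
  by_cases hxp : x = p x
  · rw [hxp]; exact hx
  · exact (Adj.reachable (show (parentGraph p).Adj x (p x) from ⟨hxp, Or.inl rfl⟩)).trans hx

omit [DecidableEq V] in
/-- The graph is connected and has at most one edge for each vertex other than the root. -/
lemma IsParentMap.isTree {r : V} {p : V → V} (h : IsParentMap r p) : (parentGraph p).IsTree := by
  classical
  have hconn : (parentGraph p).Connected :=
    { preconnected := fun x y => (h.reachable x).trans (h.reachable y).symm
      nonempty := ⟨r⟩ }
  refine isTree_iff_connected_and_card.2 ⟨hconn, le_antisymm ?_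
    hconn.card_vert_le_card_edgeSet_add_one⟩
  have hsub : (parentGraph p).edgeSet ⊆ ((Finset.univ.erase r).image fun x => s(x, p x) :
      Finset (Sym2 V)) := by
    intro e
    induction e using Sym2.ind with
    | _ x y =>
      intro hxy
      obtain ⟨hne, h1 | h1⟩ : x ≠ y ∧ (p x = y ∨ p y = x) := hxy
      · simp only [Finset.coe_image, Set.mem_image, Finset.mem_coe, Finset.mem_erase,
          Finset.mem_univ, and_true]
        refine ⟨x, fun hxr => hne ?_, by rw [h1]⟩
        rw [← h1, hxr, h.1]
      · simp only [Finset.coe_image, Set.mem_image, Finset.mem_coe, Finset.mem_erase,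
          Finset.mem_univ, and_true]
        refine ⟨y, fun hyr => hne ?_, by rw [h1, Sym2.eq_swap]⟩
        rw [← h1, hyr, h.1]
  have h1 := Set.ncard_le_ncard hsub (Finset.finite_toSet _)
  rw [Set.ncard_coe_finset] at h1
  have h2 := h1.trans Finset.card_image_le
  rw [Finset.card_erase_of_mem (Finset.mem_univ r), Finset.card_univ] at h2
  have h3 : 0 < Fintype.card V := Fintype.card_pos_iff.2 ⟨r⟩
  rw [Nat.card_coe_set_eq, Nat.card_eq_fintype_card]
  omega

omit [Fintype V] [DecidableEq V] in
lemma IsParentMap.injective {r : V} {p p' : V → V} (h : IsParentMap r p)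
    (h' : IsParentMap r p') (heq : parentGraph p = parentGraph p') : p = p' := by
  funext x
  refine h.induction (P := fun x => p x = p' x) (by rw [h.1, h'.1]) ?_ x
  intro x hxr ih
  -- A point with `p (p x) = x` other than the root would never reach the root.
  have hno : ∀ y, y ≠ r → p (p y) ≠ y := by
    intro y hyr hyy
    have key : ∀ m, p^[m] y = y ∨ p^[m] y = p y := by
      intro m
      induction m with
      | zero => exact Or.inl rfl
      | succ m ihm =>
        rw [Function.iterate_succ_apply']
        rcases ihm with e | e
        · exact Or.inr (by rw [e])
        · exact Or.inl (by rw [e, hyy])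
    obtain ⟨m, hm⟩ := h.2 y
    rcases key m with e | e
    · exact hyr (e.symm.trans hm)
    · have : p y = r := e.symm.trans hm
      rw [this, h.1] at hyy
      exact hyr hyy.symm
  have hxp : x ≠ p x := fun e => hno x hxr (by rw [← e, ← e])
  have hadj : (parentGraph p).Adj x (p x) := ⟨hxp, Or.inl rfl⟩
  rw [heq] at hadj
  obtain ⟨-, h1 | h1⟩ := hadj
  · exact h1.symm
  · exact absurd (ih.trans h1) (hno x hxr)

omit [Fintype V] [DecidableEq V] in
lemma exists_parentMap {G : SimpleGraph V} (hG : G.IsTree) (r : V) :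
    ∃ p, IsParentMap r p ∧ parentGraph p = G := by
  classical
  have key : ∀ x, ∃ y, (x = r → y = r) ∧ (x ≠ r → G.Adj x y ∧ G.dist x r = G.dist y r + 1) := by
    intro x
    by_cases hx : x = r
    · exact ⟨r, fun _ => rfl, fun h => absurd hx h⟩
    obtain ⟨w, hw⟩ := (hG.connected x r).exists_walk_length_eq_dist
    cases w with
    | nil => exact absurd rfl hx
    | cons hadj w' =>
      rename_i y
      refine ⟨y, fun h => absurd h hx, fun _ => ⟨hadj, ?_⟩⟩
      rw [Walk.length_cons] at hw
      have h1 := dist_le w'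
      have h2 := hG.dist_eq_dist_add_one_of_adj r hadj
      rw [dist_comm (u := r) (v := x), dist_comm (u := r) (v := y)] at h2
      omega
  choose p hp1 hp2 using key
  have hp : IsParentMap r p := by
    refine ⟨hp1 r rfl, fun x => ?_⟩
    induction hd : G.dist x r using Nat.strong_induction_on generalizing x with
    | _ d ih =>
      by_cases hx : x = r
      · exact ⟨0, hx⟩
      · obtain ⟨m, hm⟩ := ih (G.dist (p x) r) (by have := (hp2 x hx).2; omega) (p x) rfl
        exact ⟨m + 1, by rwa [Function.iterate_succ_apply]⟩
  refine ⟨p, hp, ?_⟩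
  have hle : parentGraph p ≤ G := by
    intro x y hxy
    obtain ⟨hne, h1 | h1⟩ : x ≠ y ∧ (p x = y ∨ p y = x) := hxy
    · have hx : x ≠ r := fun e => hne (by rw [← h1, e, hp.1])
      exact h1 ▸ (hp2 x hx).1
    · have hy : y ≠ r := fun e => hne (by rw [← h1, e, hp.1])
      exact h1 ▸ (hp2 y hy).1.symm
  have hconn : (parentGraph p).Connected :=
    { preconnected := fun x y => (hp.reachable x).trans (hp.reachable y).symm
      nonempty := ⟨r⟩ }
  exact le_antisymm hle ((isTree_iff_minimal_connected.1 hG).2 hconn hle)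

/-! ### Random trees have small maximum degree -/

lemma nbrs_parentGraph_root {r : V} {p : V → V} (h : p r = r) :
    nbrs (parentGraph p) Finset.univ {r} = children r p := by
  ext x
  simp only [mem_nbrs, children, Finset.mem_filter, Finset.mem_univ, true_and,
    Finset.mem_singleton, exists_eq_left, parentGraph, h]
  constructor
  · rintro ⟨a, b | b⟩
    · exact ⟨a, b⟩
    · exact absurd b.symm a
  · rintro ⟨a, b⟩; exact ⟨a, Or.inl b⟩

/-- A given vertex of a random tree has degree at least `j + 2` with probability at most `2⁻ʲ`. The
degree of `r` is written as the number of its neighbours in the whole vertex set. -/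
lemma card_trees_large_degree (r : V) (j : ℕ) :
    2 ^ j * {G : SimpleGraph V | G.IsTree ∧ j + 2 ≤ (nbrs G Finset.univ {r}).card}.ncard
      ≤ {G : SimpleGraph V | G.IsTree}.ncard := by
  have h1 : {G : SimpleGraph V | G.IsTree ∧ j + 2 ≤ (nbrs G Finset.univ {r}).card}.ncard
      ≤ (parentMaps r (j + 2)).card := by
    rw [← Set.ncard_coe_finset]
    refine le_trans (Set.ncard_le_ncard ?_ (Set.toFinite _))
      (Set.ncard_image_le (f := parentGraph) (Set.toFinite _))
    rintro G ⟨hG, hd⟩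
    obtain ⟨p, hp, rfl⟩ := exists_parentMap hG r
    rw [nbrs_parentGraph_root hp.1] at hd
    exact ⟨p, by simp [parentMaps, hp, hd], rfl⟩
  have h2 : (parentMaps r 0).card ≤ {G : SimpleGraph V | G.IsTree}.ncard := by
    rw [← Set.ncard_coe_finset]
    have hm : ∀ p ∈ (parentMaps r 0 : Finset (V → V)), IsParentMap r p := by
      intro p hp; simp [parentMaps] at hp; exact hp
    refine Set.ncard_le_ncard_of_injOn parentGraph ?_ ?_ (Set.toFinite _)
    · intro p hp; exact (hm p hp).isTree
    · intro p hp p' hp' heq; exact (hm p hp).injective (hm p' hp') heq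
  exact (Nat.mul_le_mul_left _ h1).trans ((parentMaps_decay r j).trans h2)

omit [Fintype V] [DecidableEq V] in
/-- A tree is layered by the number of steps from each vertex to a root. -/
lemma exists_layered {G : SimpleGraph V} (hG : G.IsTree) : ∃ ρ, Layered G ρ := by
  classical
  obtain ⟨r⟩ := hG.connected.nonempty
  obtain ⟨p, hp, rfl⟩ := exists_parentMap hG r
  let ρ : V → ℕ := fun x => Nat.find (hp.2 x)
  have hρ : ∀ x, x ≠ r → ρ x = ρ (p x) + 1 := by
    intro x hx
    have h1 : 0 < ρ x := Nat.pos_of_ne_zero fun h0 => hx ((Nat.find_eq_zero (hp.2 x)).1 h0)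
    have h2 : ρ (p x) ≤ ρ x - 1 := by
      refine Nat.find_min' (hp.2 (p x)) ?_
      rw [← Function.iterate_succ_apply, Nat.succ_eq_add_one, Nat.sub_add_cancel h1]
      exact Nat.find_spec (hp.2 x)
    have h3 : ρ x ≤ ρ (p x) + 1 := by
      refine Nat.find_min' (hp.2 x) ?_
      rw [Function.iterate_succ_apply]
      exact Nat.find_spec (hp.2 (p x))
    omega
  have hpar : ∀ x y, x ≠ y → p x = y → ρ x = ρ y + 1 := by
    intro x y hne hxy
    rw [← hxy]
    exact hρ x fun e => hne (by rw [← hxy, e, hp.1])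
  have hlow : ∀ w u, (parentGraph p).Adj w u → ρ w = ρ u + 1 → p w = u := by
    intro w u hwu hr
    obtain ⟨hne, h1 | h1⟩ : w ≠ u ∧ (p w = u ∨ p u = w) := hwu
    · exact h1
    · have := hpar u w hne.symm h1; omega
  refine ⟨ρ, ?_, ?_⟩
  · intro u v huv
    obtain ⟨hne, h1 | h1⟩ : u ≠ v ∧ (p u = v ∨ p v = u) := huv
    · exact Or.inl (hpar u v hne h1)
    · exact Or.inr (hpar v u hne.symm h1)
  · intro w u v hwu hwv h1 h2
    rw [← hlow w u hwu h1, hlow w v hwv h2]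

lemma stronglyKBalanced_of_degree_le {G : SimpleGraph V} (hG : G.IsTree) {k Δ : ℕ} (hk : 3 ≤ k)
    (hkV : k ≤ Fintype.card V) (hΔ : ∀ r, (nbrs G Finset.univ {r}).card ≤ Δ)
    (hΔq : Δ * Δ ≤ Fintype.card V / k) : StronglyKBalanced k G := by
  obtain ⟨ρ, hρ⟩ := exists_layered hG
  have hd : ∀ A w, (nbrs G A {w}).card ≤ Δ := fun A w =>
    (Finset.card_le_card fun v hv =>
      mem_nbrs.2 ⟨Finset.mem_univ v, (mem_nbrs.1 hv).2⟩).trans (hΔ w)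
  obtain ⟨c, hc1, hc2, hc3⟩ := hρ.splitsInto hd (Nat.div_pos hkV (by omega)) hΔq k hk Finset.univ
    (by rw [Finset.card_univ]; exact Nat.mul_div_le _ _)
    (by rw [Finset.card_univ]; exact (Nat.lt_mul_div_succ _ (by omega)).le)
  refine ⟨fun v => ⟨c v, hc1 v (Finset.mem_univ v)⟩, ?_, ?_⟩
  · intro u w huw heq
    exact hc2 u (Finset.mem_univ u) w (Finset.mem_univ w) huw (Fin.mk.inj_iff.1 heq)
  · have key : ∀ i : Fin k, ({v | (⟨c v, hc1 v (Finset.mem_univ v)⟩ : Fin k) = i} : Set V).ncard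
        = (Finset.univ.filter (fun v => c v = (i : ℕ))).card := by
      intro i
      rw [← Set.ncard_coe_finset]
      congr 1
      ext v
      simp [Fin.ext_iff]
    intro i j
    rw [key, key, abs_le]
    have h1 := hc3 i i.2
    have h2 := hc3 j j.2
    omega

/-- The union bound over the possible vertices of degree at least `j + 2`: the other trees are
strongly `k`-balanced. -/
lemma card_trees_le (k : ℕ) (hk : 3 ≤ k) (hkV : k ≤ Fintype.card V) (j : ℕ)
    (hj : (j + 1) * (j + 1) ≤ Fintype.card V / k) :
    2 ^ j * {G : SimpleGraph V | G.IsTree}.ncard ≤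
      2 ^ j * {G : SimpleGraph V | G.IsTree ∧ StronglyKBalanced k G}.ncard
        + Fintype.card V * {G : SimpleGraph V | G.IsTree}.ncard := by
  have hsub : {G : SimpleGraph V | G.IsTree} ⊆
      {G : SimpleGraph V | G.IsTree ∧ StronglyKBalanced k G} ∪
        ⋃ r ∈ (Finset.univ : Finset V),
          {G : SimpleGraph V | G.IsTree ∧ j + 2 ≤ (nbrs G Finset.univ {r}).card} := by
    intro G hG
    by_cases hΔ : ∀ r, (nbrs G Finset.univ {r}).card ≤ j + 1
    · exact Or.inl ⟨hG, stronglyKBalanced_of_degree_le hG hk hkV hΔ hj⟩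
    · push Not at hΔ
      obtain ⟨r, hr⟩ := hΔ
      exact Or.inr (Set.mem_biUnion (Finset.mem_univ r) ⟨hG, hr⟩)
  have h1 := (Set.ncard_le_ncard hsub (Set.toFinite _)).trans (Set.ncard_union_le _ _)
  have h2 := h1.trans (Nat.add_le_add_left (Finset.set_ncard_biUnion_le _ _) _)
  refine (Nat.mul_le_mul_left _ h2).trans ?_
  rw [mul_add, Finset.mul_sum]
  refine Nat.add_le_add_left ?_ _
  refine (Finset.sum_le_card_nsmul _ _ _ fun r _ => card_trees_large_degree r j).trans ?_
  rw [smul_eq_mul, Finset.card_univ]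

end counting

theorem random_labeled_tree_is_strongly_k_balanced (k : ℕ) (hk : 3 ≤ k) :
    Filter.Tendsto
      (fun n : ℕ =>
        (Nat.card {G : SimpleGraph (Fin n) // G.IsTree ∧ StronglyKBalanced k G} : ℝ) /
        (Nat.card {G : SimpleGraph (Fin n) // G.IsTree} : ℝ))
      Filter.atTop (nhds 1) := by
  have hD : Filter.Tendsto (fun n : ℕ => Nat.sqrt (n / k)) Filter.atTop Filter.atTop := by
    refine Filter.tendsto_atTop.2 fun b => ?_
    filter_upwards [Filter.eventually_ge_atTop (b * b * k)] with n hn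
    rw [Nat.le_sqrt]
    exact (Nat.le_div_iff_mul_le (by omega)).2 hn
  have hlim : Filter.Tendsto (fun n : ℕ => 1 - 8 * (k : ℝ) *
      (((Nat.sqrt (n / k) : ℕ) : ℝ) ^ 2 / (2 : ℝ) ^ Nat.sqrt (n / k)))
      Filter.atTop (nhds 1) := by
    have := ((tendsto_pow_const_div_const_pow_of_one_lt 2
      (by norm_num : (1 : ℝ) < 2)).comp hD).const_mul (8 * (k : ℝ))
    simpa using this.const_sub 1
  refine tendsto_of_tendsto_of_tendsto_of_le_of_le' hlim tendsto_const_nhds ?_ ?_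
  · filter_upwards [Filter.eventually_ge_atTop k, hD.eventually_ge_atTop 1] with n hnk hn1
    -- Degrees up to `j + 1 = √(n / k)` are harmless; the exceptional trees are a proportion at most
    -- `n / 2 ^ j`, where `n ≤ k (j + 2)² ≤ 4 k (j + 1)²`.
    obtain ⟨j, hj⟩ : ∃ j, Nat.sqrt (n / k) = j + 1 := ⟨_, (Nat.sub_add_cancel hn1).symm⟩
    have h1 : (j + 1) * (j + 1) ≤ n / k := by rw [← hj]; exact Nat.sqrt_le _
    have h2 : n ≤ k * ((j + 2) * (j + 2)) := by
      have h3 : n / k < (j + 2) * (j + 2) := by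
        have := Nat.lt_succ_sqrt (n / k)
        rwa [hj] at this
      exact ((Nat.div_lt_iff_lt_mul (by omega)).1 h3).le.trans (by rw [mul_comm])
    have hmain := card_trees_le (V := Fin n) k hk (by simpa using hnk) j (by simpa using h1)
    rw [Fintype.card_fin] at hmain
    change _ ≤ (({G : SimpleGraph (Fin n) | G.IsTree ∧ StronglyKBalanced k G}.ncard : ℕ) : ℝ) /
      (({G : SimpleGraph (Fin n) | G.IsTree}.ncard : ℕ) : ℝ)
    have hT : 0 < {G : SimpleGraph (Fin n) | G.IsTree}.ncard := by
      have : Nonempty (Fin n) := ⟨⟨0, by omega⟩⟩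
      obtain ⟨T, -, hT⟩ := (connected_top (V := Fin n)).exists_isTree_le
      exact (Set.ncard_pos (Set.toFinite _)).2 ⟨T, hT⟩
    set t := {G : SimpleGraph (Fin n) | G.IsTree}.ncard
    set s := {G : SimpleGraph (Fin n) | G.IsTree ∧ StronglyKBalanced k G}.ncard
    rw [hj, le_div_iff₀ (by exact_mod_cast hT)]
    have hmain' : (2 : ℝ) ^ j * t ≤ 2 ^ j * s + n * t := by exact_mod_cast hmain
    have h2' : (n : ℝ) ≤ k * ((j + 2) * (j + 2)) := by exact_mod_cast h2
    have hpow : (0 : ℝ) < 2 ^ j := by positivity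
    have ht : (0 : ℝ) < t := by exact_mod_cast hT
    have h4 : (n : ℝ) ≤ 4 * k * ((j + 1 : ℕ) : ℝ) ^ 2 := by
      refine h2'.trans ?_
      push_cast
      have : (0 : ℝ) ≤ k * (3 * (j : ℝ) ^ 2 + 4 * j) := by positivity
      nlinarith
    have h5 : 8 * (k : ℝ) * (((j + 1 : ℕ) : ℝ) ^ 2 / 2 ^ (j + 1))
        = 4 * k * ((j + 1 : ℕ) : ℝ) ^ 2 / 2 ^ j := by
      rw [pow_succ]; field_simp; ring
    rw [h5]
    have h6 : (1 - 4 * (k : ℝ) * ((j + 1 : ℕ) : ℝ) ^ 2 / 2 ^ j) * t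
        = (2 ^ j * t - 4 * k * ((j + 1 : ℕ) : ℝ) ^ 2 * t) / 2 ^ j := by field_simp
    rw [h6, div_le_iff₀ hpow]
    have := mul_le_mul_of_nonneg_right h4 ht.le
    linarith
  · refine Filter.Eventually.of_forall fun n => ?_
    refine div_le_one_of_le₀ ?_ (Nat.cast_nonneg _)
    exact_mod_cast Set.ncard_le_ncard
      (show {G : SimpleGraph (Fin n) | G.IsTree ∧ StronglyKBalanced k G} ⊆
        {G : SimpleGraph (Fin n) | G.IsTree} from fun _ h => h.1) (Set.toFinite _)
end
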